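/- arXiv:2605.04464 — 7 statements merged into one kernel-verified Lean document; each statement's English description precedes it below -/
import Mathlib

section
/- Let K be a commutative unital ring, let R be a unital associative K-algebra, let t ≥ 1, and let f be the multilinear polynomial of degree t given by coefficients (λ_σ)_{σ ∈ Sym(t)} in K, with value f(a₁,…,a_t) = Σ_{σ ∈ Sym(t)} λ_σ a_{σ(1)}⋯a_{σ(t)}. Suppose that R is generated by its commutators as an ideal and that, for some integer n > 1, R equals the additive subgroup generated by the set f(R)^[n] of all products v₁v₂⋯v_n with each v_i a value of f on R. Then there exists a positive integer N such that every x ∈ R can be written as x = a₁ + ⋯ + a_N with each a_i ∈ f(R)^[n]. -/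
open scoped Pointwise

section Aux

variable {R : Type*} [Ring R]

/-- Leibniz rule for the inner derivation given by `z` on an ordered product. -/
lemma aux_leibniz (z : R) : ∀ (m : ℕ) (b : Fin m → R),
    z * (List.ofFn b).prod - (List.ofFn b).prod * z
      = ∑ j, (List.ofFn (Function.update b j (z * b j - b j * z))).prod := by
  intro m
  induction m with
  | zero => intro b; simp
  | succ m ih =>
    intro b
    rw [Fin.sum_univ_succ]
    have h0 : ∀ c : R, (fun i : Fin m => Function.update b 0 c i.succ) = fun i => b i.succ := by
      intro c; funext i; simp
    have h1 : ∀ (j : Fin m) (c : R), (fun i : Fin m => Function.update b j.succ c i.succ)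
        = Function.update (fun i : Fin m => b i.succ) j c := by
      intro j c; funext i
      by_cases h : i = j
      · subst h; simp
      · rw [Function.update_of_ne h, Function.update_of_ne (by simpa using h)]
    have h2 : ∀ (j : Fin m) (c : R), Function.update b j.succ c 0 = b 0 := by
      intro j c
      exact Function.update_of_ne (Fin.succ_ne_zero j).symm _ _
    simp only [List.ofFn_succ, List.prod_cons, h0, h1, h2, Function.update_self]
    rw [← Finset.mul_sum, ← ih (fun i => b i.succ)]
    noncomm_ring

lemma aux_mul_nsmul (A B : Set R) (m : ℕ) : A * (m • B) ⊆ m • (A * B) := by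
  induction m with
  | zero =>
    rintro x ⟨a, -, b, hb, rfl⟩
    simp only [zero_nsmul, Set.mem_zero] at hb ⊢
    simp [hb]
  | succ m ih =>
    rw [succ_nsmul, succ_nsmul]
    exact (Set.mul_add_subset _ _ _).trans (Set.add_subset_add ih subset_rfl)

lemma aux_nsmul_mul (A B : Set R) (m : ℕ) : (m • A) * B ⊆ m • (A * B) := by
  induction m with
  | zero =>
    rintro x ⟨a, ha, b, hb, rfl⟩
    simp only [zero_nsmul, Set.mem_zero] at ha ⊢
    simp [ha]
  | succ m ih =>
    rw [succ_nsmul, succ_nsmul]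
    exact (Set.add_mul_subset _ _ _).trans (Set.add_subset_add ih subset_rfl)

lemma aux_comm_pow (F : Set R) (t : ℕ) (hF : ∀ z, ∀ v ∈ F, z * v - v * z ∈ t • F) (m : ℕ) :
    ∀ z, ∀ p ∈ F ^ m, z * p - p * z ∈ (m * t) • (F ^ m) := by
  induction m with
  | zero =>
    intro z p hp
    simp only [pow_zero, Set.mem_one] at hp
    simp [hp]
  | succ m ih =>
    intro z p hp
    rw [pow_succ] at hp
    obtain ⟨q, hq, u, hu, rfl⟩ := hp
    have e : z * (q * u) - (q * u) * z = (z * q - q * z) * u + q * (z * u - u * z) := by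
      noncomm_ring
    change z * (q * u) - (q * u) * z ∈ _
    rw [e, add_mul, one_mul, add_nsmul, pow_succ]
    exact Set.add_mem_add (aux_nsmul_mul _ _ _ (Set.mul_mem_mul (ih z q hq) hu))
      (aux_mul_nsmul _ _ _ (Set.mul_mem_mul hq (hF z u hu)))

lemma aux_comm_bdd (F : Set R) (t n : ℕ) (hF : ∀ z, ∀ v ∈ F, z * v - v * z ∈ t • F)
    (hgen : AddSubgroup.closure (F ^ n) = ⊤) (w : R) :
    ∃ k : ℕ, ∀ z : R, z * w - w * z ∈ k • (F ^ n) := by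
  have hw : w ∈ AddSubgroup.closure (F ^ n) := by rw [hgen]; trivial
  induction hw using AddSubgroup.closure_induction with
  | mem p hp => exact ⟨n * t, fun z => aux_comm_pow F t hF n z p hp⟩
  | zero => exact ⟨0, fun z => by simp⟩
  | add x y _ _ hx hy =>
    obtain ⟨k, hk⟩ := hx
    obtain ⟨l, hl⟩ := hy
    refine ⟨k + l, fun z => ?_⟩
    have e : z * (x + y) - (x + y) * z = (z * x - x * z) + (z * y - y * z) := by noncomm_ring
    rw [e, add_nsmul]
    exact Set.add_mem_add (hk z) (hl z)
  | neg x _ hx =>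
    obtain ⟨k, hk⟩ := hx
    refine ⟨k, fun z => ?_⟩
    have e : z * (-x) - (-x) * z = (-z) * x - x * (-z) := by noncomm_ring
    rw [e]
    exact hk _

/-- If all commutators with a fixed `p` of elements of `F` lie in `B`, then so do all. -/
lemma aux_centralizer (B : TwoSidedIdeal R) (F : Set R) (n : ℕ)
    (hgen : AddSubgroup.closure (F ^ n) = ⊤) (p : R) (hp : ∀ v ∈ F, p * v - v * p ∈ B) (s : R) :
    p * s - s * p ∈ B := by
  have hpow : ∀ m : ℕ, ∀ q ∈ F ^ m, p * q - q * p ∈ B := by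
    intro m
    induction m with
    | zero =>
      intro q hq
      simp only [pow_zero, Set.mem_one] at hq
      simp [hq, B.zero_mem]
    | succ m ih =>
      intro q hq
      rw [pow_succ] at hq
      obtain ⟨q, hq, u, hu, rfl⟩ := hq
      have e : p * (q * u) - (q * u) * p = (p * q - q * p) * u + q * (p * u - u * p) := by
        noncomm_ring
      change p * (q * u) - (q * u) * p ∈ _
      rw [e]
      exact B.add_mem (B.mul_mem_right _ _ (ih q hq)) (B.mul_mem_left _ _ (hp u hu))
  have hs : s ∈ AddSubgroup.closure (F ^ n) := by rw [hgen]; trivial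
  induction hs using AddSubgroup.closure_induction with
  | mem q hq => exact hpow n q hq
  | zero => simp [B.zero_mem]
  | add x y _ _ hx hy =>
    have e : p * (x + y) - (x + y) * p = (p * x - x * p) + (p * y - y * p) := by noncomm_ring
    rw [e]; exact B.add_mem hx hy
  | neg x _ hx =>
    have e : p * (-x) - (-x) * p = -(p * x - x * p) := by noncomm_ring
    rw [e]; exact B.neg_mem hx

/-- The elements that are central modulo `B`. -/
def auxCenter (B : TwoSidedIdeal R) : Subring R where
  carrier := {r | ∀ s, r * s - s * r ∈ B}
  mul_mem' := by
    intro a b ha hb s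
    have e : a * b * s - s * (a * b) = a * (b * s - s * b) + (a * s - s * a) * b := by
      noncomm_ring
    rw [e]
    exact B.add_mem (B.mul_mem_left _ _ (hb s)) (B.mul_mem_right _ _ (ha s))
  one_mem' := by intro s; simp [B.zero_mem]
  add_mem' := by
    intro a b ha hb s
    have e : (a + b) * s - s * (a + b) = (a * s - s * a) + (b * s - s * b) := by noncomm_ring
    rw [e]; exact B.add_mem (ha s) (hb s)
  zero_mem' := by intro s; simp [B.zero_mem]
  neg_mem' := by
    intro a ha s
    have e : (-a) * s - s * (-a) = -(a * s - s * a) := by noncomm_ring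
    rw [e]; exact B.neg_mem (ha s)

lemma aux_all_central (B : TwoSidedIdeal R) (F : Set R) (n : ℕ) (hn : 1 < n)
    (hgen : AddSubgroup.closure (F ^ n) = ⊤)
    (hp : ∀ p ∈ F ^ (n - 1), ∀ v ∈ F, p * v - v * p ∈ B) (r s : R) :
    r * s - s * r ∈ B := by
  have h1 : Submodule.span ℤ (F ^ n) = ⊤ := by
    rw [eq_top_iff]
    intro x _
    have hx : x ∈ AddSubgroup.closure (F ^ n) := by rw [hgen]; trivial
    have hle : AddSubgroup.closure (F ^ n) ≤ (Submodule.span ℤ (F ^ n)).toAddSubgroup := by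
      rw [AddSubgroup.closure_le]
      exact Submodule.subset_span
    exact hle hx
  have htop : ∀ m : ℕ, (⊤ : Submodule ℤ R) ^ m = ⊤ ∨ m = 0 := by
    intro m
    rcases Nat.eq_zero_or_pos m with h | h
    · right; exact h
    · left
      rw [eq_top_iff]
      intro x _
      obtain ⟨k, rfl⟩ : ∃ k, m = k + 1 := ⟨m - 1, by omega⟩
      rw [pow_succ, ← one_mul x]
      refine Submodule.mul_mem_mul ?_ trivial
      have := Submodule.pow_mem_pow (⊤ : Submodule ℤ R) (x := 1) trivial k
      simpa using this
  let C : Submodule ℤ R := (auxCenter B).toAddSubgroup.toIntSubmodule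
  have hC : Submodule.span ℤ (F ^ (n - 1)) ≤ C := by
    rw [Submodule.span_le]
    intro p hpF
    exact fun s => aux_centralizer B F n hgen p (hp p hpF) s
  have hCpow : ∀ m : ℕ, C ^ (m + 1) ≤ C := by
    intro m
    induction m with
    | zero => simp
    | succ m ih =>
      rw [pow_succ, Submodule.mul_le]
      intro a ha b hb
      exact (auxCenter B).mul_mem (ih ha) hb
  have h2 : (⊤ : Submodule ℤ R) ^ (n - 1) = Submodule.span ℤ (F ^ (n - 1)) ^ n := by
    rw [← h1, Submodule.span_pow, Submodule.span_pow, ← pow_mul, ← pow_mul, mul_comm]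
  have hr : r ∈ C := by
    have h := (htop (n - 1)).resolve_right (by omega)
    obtain ⟨k, rfl⟩ : ∃ k, n = k + 1 := ⟨n - 1, by omega⟩
    have hrr : r ∈ (⊤ : Submodule ℤ R) := trivial
    rw [← h, h2] at hrr
    exact hCpow k (pow_le_pow_left' hC _ hrr)
  exact hr s

/-- The elements `w` such that `R w` consists of sums of boundedly many elements of `F ^ n`. -/
def auxIdeal (F : Set R) (n : ℕ)
    (hb : ∀ w : R, ∃ k : ℕ, ∀ z : R, z * w - w * z ∈ k • (F ^ n)) : TwoSidedIdeal R :=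
  TwoSidedIdeal.mk' {w | ∃ k : ℕ, ∀ z : R, z * w ∈ k • (F ^ n)}
    ⟨0, fun z => by simp⟩
    (by
      rintro x y ⟨k, hk⟩ ⟨l, hl⟩
      refine ⟨k + l, fun z => ?_⟩
      rw [mul_add, add_nsmul]
      exact Set.add_mem_add (hk z) (hl z))
    (by
      rintro x ⟨k, hk⟩
      refine ⟨k, fun z => ?_⟩
      have e : z * (-x) = (-z) * x := by noncomm_ring
      rw [e]; exact hk _)
    (by
      rintro x y ⟨k, hk⟩
      refine ⟨k, fun z => ?_⟩
      rw [← mul_assoc]; exact hk _)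
    (by
      rintro x y ⟨k, hk⟩
      obtain ⟨l, hl⟩ := hb y
      refine ⟨k + l, fun z => ?_⟩
      have e : z * (x * y) = (y * z) * x + ((z * x) * y - y * (z * x)) := by noncomm_ring
      rw [e, add_nsmul]
      exact Set.add_mem_add (hk _) (hl _))

lemma aux_main (F : Set R) (t n : ℕ) (hn : 1 < n) (hne : F.Nonempty)
    (hF : ∀ z, ∀ v ∈ F, z * v - v * z ∈ t • F)
    (hcomm : TwoSidedIdeal.span {x : R | ∃ a b : R, x = a * b - b * a} = ⊤)
    (hgen : AddSubgroup.closure (F ^ n) = ⊤) :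
    ∃ N : ℕ, 0 < N ∧ ∀ x : R, x ∈ N • (F ^ n) := by
  have hb := aux_comm_bdd F t n hF hgen
  have hmem : ∀ w, w ∈ auxIdeal F n hb ↔ ∃ k : ℕ, ∀ z : R, z * w ∈ k • (F ^ n) := by
    intro w
    simp [auxIdeal, TwoSidedIdeal.mem_mk']
  have hp : ∀ p ∈ F ^ (n - 1), ∀ v ∈ F, p * v - v * p ∈ auxIdeal F n hb := by
    intro p hp v hv
    rw [hmem]
    obtain ⟨k, hk⟩ := hb v
    refine ⟨k + t, fun z => ?_⟩
    have e : z * (p * v - v * p) = ((z * p) * v - v * (z * p)) + ((-z) * v - v * (-z)) * p := by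
      noncomm_ring
    rw [e, add_nsmul]
    refine Set.add_mem_add (hk _) ?_
    have h := aux_nsmul_mul _ _ _ (Set.mul_mem_mul (hF (-z) v hv) hp)
    rwa [← pow_succ', Nat.sub_add_cancel hn.le] at h
  have hone : (1 : R) ∈ auxIdeal F n hb := by
    have hle : TwoSidedIdeal.span {x : R | ∃ a b : R, x = a * b - b * a} ≤ auxIdeal F n hb := by
      rw [TwoSidedIdeal.span_le]
      rintro x ⟨a, b, rfl⟩
      exact aux_all_central _ F n hn hgen hp a b
    rw [hcomm] at hle
    exact hle trivial
  obtain ⟨k, hk⟩ := (hmem 1).1 hone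
  obtain ⟨q, hq⟩ := hne.pow (n := n)
  refine ⟨k + 1, Nat.succ_pos k, fun x => ?_⟩
  have e : x = (x - q) * 1 + q := by noncomm_ring
  rw [e, succ_nsmul]
  exact Set.add_mem_add (hk _) hq

end Aux

/-- Let `R` be a unital `K`-algebra, `f` a multilinear polynomial of
degree `t ≥ 1` with coefficients `lam : Sym(t) → K`. If `R` is generated by its
commutators as an ideal and `R` equals the additive subgroup generated by the set of
products of `n` values of `f` (for some `n > 1`), then there is `N ≥ 1` such that every
`x ∈ R` is a sum of `N` elements of that set of products. -/
theorem stmt_2 (K : Type*) [CommRing K] (R : Type*) [Ring R] [Algebra K R]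
    (t : ℕ) (ht : 1 ≤ t) (lam : Equiv.Perm (Fin t) → K) (n : ℕ) (hn : 1 < n)
    (hcomm : TwoSidedIdeal.span {x : R | ∃ a b : R, x = a * b - b * a} = ⊤)
    (hgen : AddSubgroup.closure
        {x : R | ∃ v : Fin n → R,
          (∀ i, v i ∈ {y : R | ∃ a : Fin t → R,
            y = ∑ σ : Equiv.Perm (Fin t),
              lam σ • (List.ofFn fun i => a (σ i)).prod}) ∧
          x = (List.ofFn v).prod} = ⊤) :
    ∃ N : ℕ, 0 < N ∧ ∀ x : R, ∃ a : Fin N → R,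
      (∀ i, a i ∈ {x : R | ∃ v : Fin n → R,
          (∀ i, v i ∈ {y : R | ∃ a : Fin t → R,
            y = ∑ σ : Equiv.Perm (Fin t),
              lam σ • (List.ofFn fun i => a (σ i)).prod}) ∧
          x = (List.ofFn v).prod}) ∧
      x = ∑ i, a i := by
  classical
  set F : Set R := {y : R | ∃ a : Fin t → R,
            y = ∑ σ : Equiv.Perm (Fin t),
              lam σ • (List.ofFn fun i => a (σ i)).prod} with hFdef
  have hP : {x : R | ∃ v : Fin n → R, (∀ i, v i ∈ F) ∧ x = (List.ofFn v).prod} = F ^ n := by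
    ext x
    rw [Set.mem_pow]
    constructor
    · rintro ⟨v, hv, rfl⟩
      exact ⟨fun i => ⟨v i, hv i⟩, rfl⟩
    · rintro ⟨v, rfl⟩
      exact ⟨fun i => v i, fun i => (v i).2, rfl⟩
  have hF : ∀ z, ∀ v ∈ F, z * v - v * z ∈ t • F := by
    rintro z v ⟨a, rfl⟩
    rw [Set.mem_nsmul]
    refine ⟨fun i => ⟨_, Function.update a i (z * a i - a i * z), rfl⟩, ?_⟩
    rw [List.sum_ofFn]
    dsimp only
    rw [Finset.sum_comm, Finset.mul_sum, Finset.sum_mul, ← Finset.sum_sub_distrib]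
    refine Finset.sum_congr rfl fun σ _ => ?_
    rw [mul_smul_comm, smul_mul_assoc, ← smul_sub, aux_leibniz, ← Finset.smul_sum]
    congr 1
    rw [← Equiv.sum_comp σ]
    refine Finset.sum_congr rfl fun j _ => ?_
    congr 2
    funext i
    by_cases h : i = j
    · subst h; simp
    · rw [Function.update_of_ne h, Function.update_of_ne (by simpa using h)]
  rw [hP] at hgen ⊢
  obtain ⟨N, hN, h⟩ := aux_main F t n hn ⟨_, fun _ => 0, rfl⟩ hF hcomm hgen
  refine ⟨N, hN, fun x => ?_⟩
  obtain ⟨a, ha⟩ := Set.mem_nsmul.1 (h x)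
  refine ⟨fun i => a i, fun i => (a i).2, ?_⟩
  rw [← ha, List.sum_ofFn]
end

section
/- Let R be a unital ring that is generated by its commutators as an ideal, and let n > 1 be an integer. Then R equals the additive subgroup generated by the set [R,R]^[n] of all products [a₁,b₁][a₂,b₂]⋯[a_n,b_n] of n additive commutators, and moreover there exists a positive integer N such that every x ∈ R can be written as x = c₁ + ⋯ + c_N with each c_i ∈ [R,R]^[n]. -/
/-- Products of `n` commutators. -/
def ProdComm (R : Type*) [Ring R] (n : ℕ) : Set R :=
  {x : R | ∃ a b : Fin n → R, x = (List.ofFn fun i => a i * b i - b i * a i).prod}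

/-- `x` is a sum of exactly `N` elements of `S`. -/
def SumOf {R : Type*} [Ring R] (S : Set R) (N : ℕ) (x : R) : Prop :=
  ∃ l : List R, l.length = N ∧ (∀ c ∈ l, c ∈ S) ∧ x = l.sum

lemma SumOf.add {R : Type*} [Ring R] {S : Set R} {N M : ℕ} {x y : R}
    (hx : SumOf S N x) (hy : SumOf S M y) : SumOf S (N + M) (x + y) := by
  obtain ⟨l, rfl, h2, rfl⟩ := hx
  obtain ⟨m, rfl, k2, rfl⟩ := hy
  refine ⟨l ++ m, by simp, ?_, by simp⟩
  intro c hc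
  rcases List.mem_append.1 hc with h | h
  · exact h2 c h
  · exact k2 c h

lemma SumOf.zero {R : Type*} [Ring R] {S : Set R} : SumOf S 0 (0 : R) :=
  ⟨[], rfl, by simp, by simp⟩

lemma SumOf.one {R : Type*} [Ring R] {S : Set R} {x : R} (hx : x ∈ S) : SumOf S 1 x :=
  ⟨[x], rfl, by simpa using hx, by simp⟩

lemma SumOf.mulLeft {R : Type*} [Ring R] {S T : Set R} {N : ℕ} {x u : R}
    (h : ∀ y ∈ S, u * y ∈ T) (hx : SumOf S N x) : SumOf T N (u * x) := by
  obtain ⟨l, rfl, h2, rfl⟩ := hx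
  refine ⟨l.map (u * ·), by simp, ?_, ?_⟩
  swap
  · clear h2
    induction l with
    | nil => simp
    | cons a l ih => simp [mul_add, ih]
  intro c hc
  obtain ⟨y, hy, rfl⟩ := List.mem_map.1 hc
  exact h y (h2 y hy)

lemma prodComm_succ {R : Type*} [Ring R] {n : ℕ} (a b y : R) (hy : y ∈ ProdComm R n) :
    (a * b - b * a) * y ∈ ProdComm R (n + 1) := by
  obtain ⟨f, g, rfl⟩ := hy
  exact ⟨Fin.cons a f, Fin.cons b g, by simp [List.ofFn_succ]⟩

lemma prodComm_two {R : Type*} [Ring R] (a b c d : R) :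
    (a * b - b * a) * (c * d - d * c) ∈ ProdComm R 2 :=
  ⟨![a, c], ![b, d], by simp [List.ofFn_succ]⟩

lemma prodComm_two_iff {R : Type*} [Ring R] {x : R} (hx : x ∈ ProdComm R 2) :
    ∃ a b v : R, x = (a * b - b * a) * v := by
  obtain ⟨f, g, rfl⟩ := hx
  exact ⟨f 0, g 0, f 1 * g 1 - g 1 * f 1, by simp [List.ofFn_succ]⟩

/-- `[a,b][c,b] s` is a sum of two products of two commutators. -/
lemma key_right {R : Type*} [Ring R] (a b c s : R) :
    (a * b - b * a) * (c * b - b * c) * s =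
      (a * b - b * a) * (c * (b * s) - (b * s) * c) +
      ((b * (a * b) - (a * b) * b)) * (c * s - s * c) := by
  noncomm_ring

/-- `[r, uv] = [r,u] v + u [r,v]`. -/
lemma key_lie {R : Type*} [Ring R] (r u v : R) :
    r * (u * v) - (u * v) * r = (r * u - u * r) * v + u * (r * v - v * r) := by
  noncomm_ring

lemma two_sided {R : Type*} [Ring R] (a b c r s : R) :
    SumOf (ProdComm R 2) 6 (r * ((a * b - b * a) * (c * b - b * c)) * s) := by
  have e : r * ((a * b - b * a) * (c * b - b * c)) * s =
      ((r * ((a * b - b * a) * (c * (b * s) - (b * s) * c)) -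
          ((a * b - b * a) * (c * (b * s) - (b * s) * c)) * r) +
        (r * (((b * (a * b) - (a * b) * b)) * (c * s - s * c)) -
          (((b * (a * b) - (a * b) * b)) * (c * s - s * c)) * r)) +
      (a * b - b * a) * (c * b - b * c) * (s * r) := by
    have h := key_right a b c s
    rw [mul_assoc r, h, ← mul_assoc _ s r, h]
    noncomm_ring
  rw [e, key_lie r (a * b - b * a) (c * (b * s) - (b * s) * c),
    key_lie r (b * (a * b) - (a * b) * b) (c * s - s * c), key_right]
  have h2 : ∀ a b c d : R,
      SumOf (ProdComm R 2) 1 ((a * b - b * a) * (c * d - d * c)) :=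
    fun a b c d => SumOf.one (prodComm_two a b c d)
  exact (((h2 _ _ _ _).add (h2 _ _ _ _)).add ((h2 _ _ _ _).add (h2 _ _ _ _))).add
    ((h2 _ _ _ _).add (h2 _ _ _ _))

/-- The ideal generated by the elements `[a,b][c,b]`. -/
lemma one_mem {R : Type*} [Ring R]
    (hcomm : TwoSidedIdeal.span {x : R | ∃ a b : R, x = a * b - b * a} = ⊤) :
    (1 : R) ∈ TwoSidedIdeal.span
      {x : R | ∃ a b c : R, x = (a * b - b * a) * (c * b - b * c)} := by
  set I := TwoSidedIdeal.span
      {x : R | ∃ a b c : R, x = (a * b - b * a) * (c * b - b * c)} with hI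
  have gen : ∀ a b c : R, (a * b - b * a) * (c * b - b * c) ∈ I := fun a b c =>
    TwoSidedIdeal.subset_span ⟨a, b, c, rfl⟩
  have sq : ∀ a b d : R, (a * b - b * a) * d * (a * b - b * a) ∈ I := by
    intro a b d
    have e : (a * b - b * a) * d * (a * b - b * a) =
        (a * b - b * a) * ((d * a) * b - b * (d * a)) -
        (a * b - b * a) * (d * b - b * d) * a := by noncomm_ring
    rw [e]
    exact I.sub_mem (gen _ _ _) (I.mul_mem_right _ _ (gen _ _ _))
  have main : ∀ x ∈ TwoSidedIdeal.span {x : R | ∃ a b : R, x = a * b - b * a},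
      ∀ r s z : R, 1 - r * x * s - z ∈ I → ∃ t, 1 - z * t ∈ I := by
    intro x hx
    induction hx using TwoSidedIdeal.span_induction with
    | mem x h =>
      obtain ⟨a, b, rfl⟩ := h
      intro r s z hz
      refine ⟨1 + r * (a * b - b * a) * s, ?_⟩
      have h1 := I.mul_mem_right _ (1 + r * (a * b - b * a) * s) hz
      have h2 := I.mul_mem_right _ s (I.mul_mem_left r _ (sq a b (s * r)))
      have h3 := I.add_mem h1 h2
      convert h3 using 1
      generalize a * b - b * a = w
      noncomm_ring
    | zero => intro r s z hz; exact ⟨1, by simpa using hz⟩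
    | add x y _ _ ihx ihy =>
      intro r s z hz
      obtain ⟨t, ht⟩ := ihx r s (r * y * s + z) (by convert hz using 1; noncomm_ring)
      obtain ⟨t', ht'⟩ := ihy r (s * t) (z * t) (by convert ht using 1; noncomm_ring)
      exact ⟨t * t', by rwa [← mul_assoc]⟩
    | neg x _ ih =>
      intro r s z hz
      exact ih (-r) s z (by convert hz using 1; noncomm_ring)
    | left_absorb a x _ ih =>
      intro r s z hz
      exact ih (r * a) s z (by convert hz using 1; noncomm_ring)
    | right_absorb a x _ ih =>
      intro r s z hz
      exact ih r (a * s) z (by convert hz using 1; noncomm_ring)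
  obtain ⟨t, ht⟩ := main 1 (by rw [hcomm]; trivial) 1 1 0 (by simpa using I.zero_mem)
  simpa using ht

lemma bound_two {R : Type*} [Ring R]
    (hcomm : TwoSidedIdeal.span {x : R | ∃ a b : R, x = a * b - b * a} = ⊤) :
    ∃ N, ∀ x : R, SumOf (ProdComm R 2) N x := by
  have main : ∀ x ∈ TwoSidedIdeal.span
      {x : R | ∃ a b c : R, x = (a * b - b * a) * (c * b - b * c)},
      ∃ N, ∀ r s : R, SumOf (ProdComm R 2) N (r * x * s) := by
    intro x hx
    induction hx using TwoSidedIdeal.span_induction with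
    | mem x h =>
      obtain ⟨a, b, c, rfl⟩ := h
      exact ⟨6, two_sided a b c⟩
    | zero => exact ⟨0, fun r s => by simpa using SumOf.zero⟩
    | add x y _ _ ihx ihy =>
      obtain ⟨N, hN⟩ := ihx
      obtain ⟨M, hM⟩ := ihy
      exact ⟨N + M, fun r s => by rw [mul_add, add_mul]; exact (hN r s).add (hM r s)⟩
    | neg x _ ih =>
      obtain ⟨N, hN⟩ := ih
      exact ⟨N, fun r s => by simpa using hN (-r) s⟩
    | left_absorb a x _ ih =>
      obtain ⟨N, hN⟩ := ih
      exact ⟨N, fun r s => by simpa [mul_assoc] using hN (r * a) s⟩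
    | right_absorb a x _ ih =>
      obtain ⟨N, hN⟩ := ih
      exact ⟨N, fun r s => by simpa [mul_assoc] using hN r (a * s)⟩
  obtain ⟨N, hN⟩ := main 1 (one_mem hcomm)
  exact ⟨N, fun x => by simpa using hN x 1⟩

lemma bound_all {R : Type*} [Ring R]
    (hcomm : TwoSidedIdeal.span {x : R | ∃ a b : R, x = a * b - b * a} = ⊤)
    (n : ℕ) (hn : 2 ≤ n) : ∃ N, ∀ x : R, SumOf (ProdComm R n) N x := by
  induction n, hn using Nat.le_induction with
  | base => exact bound_two hcomm
  | succ n _ ih =>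
    obtain ⟨N, hN⟩ := ih
    obtain ⟨M, hM⟩ := bound_two hcomm
    obtain ⟨l, -, hl, h1⟩ := hM 1
    have key : ∀ l : List R, (∀ c ∈ l, c ∈ ProdComm R 2) →
        ∃ K, ∀ x : R, SumOf (ProdComm R (n + 1)) K (l.sum * x) := by
      intro l
      induction l with
      | nil => exact fun _ => ⟨0, fun x => by simpa using SumOf.zero⟩
      | cons c l ihl =>
        intro h
        obtain ⟨K, hK⟩ := ihl fun d hd => h d (List.mem_cons_of_mem _ hd)
        obtain ⟨a, b, v, rfl⟩ := prodComm_two_iff (h _ List.mem_cons_self)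
        refine ⟨N + K, fun x => ?_⟩
        rw [List.sum_cons, add_mul, mul_assoc]
        exact (SumOf.mulLeft (fun y hy => prodComm_succ a b y hy) (hN (v * x))).add (hK x)
    obtain ⟨K, hK⟩ := key l hl
    exact ⟨K, fun x => by simpa [← h1] using hK x⟩

/-- Let `R` be a unital ring generated by its commutators as an ideal,
and let `n > 1`. Then `R` equals the additive subgroup generated by the set `[R,R]^[n]`
of products of `n` additive commutators, and there is `N ≥ 1` such that every `x ∈ R`
is a sum of `N` elements of `[R,R]^[n]`. -/
theorem stmt_3 (R : Type*) [Ring R]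
    (hcomm : TwoSidedIdeal.span {x : R | ∃ a b : R, x = a * b - b * a} = ⊤)
    (n : ℕ) (hn : 1 < n) :
    AddSubgroup.closure
        {x : R | ∃ a b : Fin n → R,
          x = (List.ofFn fun i => a i * b i - b i * a i).prod} = ⊤ ∧
      ∃ N : ℕ, 0 < N ∧ ∀ x : R, ∃ c : Fin N → R,
        (∀ i, c i ∈ {x : R | ∃ a b : Fin n → R,
          x = (List.ofFn fun i => a i * b i - b i * a i).prod}) ∧
        x = ∑ i, c i := by
  obtain ⟨N, hN⟩ := bound_all hcomm n hn
  constructor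
  · rw [eq_top_iff]
    intro x _
    obtain ⟨l, -, hl, rfl⟩ := hN x
    exact AddSubgroup.list_sum_mem _ fun c hc => AddSubgroup.subset_closure (hl c hc)
  · refine ⟨N + 1, N.succ_pos, fun x => ?_⟩
    have h0 : SumOf (ProdComm R n) (N + 1) x := by
      have hz : (0 : R) ∈ ProdComm R n := by
        obtain ⟨m, rfl⟩ : ∃ m, n = m + 1 := ⟨n - 1, by omega⟩
        exact ⟨0, 0, by simp [List.ofFn_succ]⟩
      simpa using (hN x).add (SumOf.one hz)
    obtain ⟨l, hlen, hl, rfl⟩ := h0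

    refine ⟨fun i => l.get (i.cast hlen.symm), fun i => hl _ (List.get_mem _ _), ?_⟩
    clear hN
    rw [← List.sum_ofFn]
    congr 1
    apply List.ext_getElem
    · simp only [List.length_ofFn, hlen]
    · intro i h1 h2
      simp only [List.getElem_ofFn, List.get_eq_getElem, Fin.val_cast]
end

section
/- Let K be a commutative unital ring, let R be a unital associative K-algebra, and let f be the multilinear polynomial of degree m given by coefficients (λ_σ)_{σ ∈ Sym(m)} in K satisfying Σ_{σ ∈ Sym(m)} λ_σ = 0. Suppose that, for some integer n > 1, R equals the additive subgroup generated by the set f(R)^[n] of products of n values of f on R. Then there exists a positive integer N such that every x ∈ R can be written as x = a₁ + ⋯ + a_N with each a_i ∈ f(R)^[n]. -/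
section
open Pointwise
/-- Signed products of `d` elements of `V`, together with zero. -/
def SW {R : Type*} [Ring R] (V : Set R) (d : ℕ) : Set R :=
  {x | x ∈ V ^ d ∨ -x ∈ V ^ d ∨ x = 0}

/-- Additive subgroup of functions all of whose values are boundedly many sums. -/
def Bdd {R : Type*} [Ring R] (V : Set R) (d : ℕ) : AddSubgroup (R → R) where
  carrier := {g | ∃ k : ℕ, ∀ x, ∃ l : List R, l.length = k ∧ (∀ y ∈ l, y ∈ SW V d) ∧ g x = l.sum}
  zero_mem' := ⟨0, fun x => ⟨[], by simp⟩⟩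
  add_mem' := by
    rintro g h ⟨k, hk⟩ ⟨k', hk'⟩
    refine ⟨k + k', fun x => ?_⟩
    obtain ⟨l, h1, h2, h3⟩ := hk x
    obtain ⟨l', h1', h2', h3'⟩ := hk' x
    refine ⟨l ++ l', by simp [h1, h1'], ?_, by simp [h3, h3']⟩
    intro y hy
    rcases List.mem_append.1 hy with hy | hy
    · exact h2 y hy
    · exact h2' y hy
  neg_mem' := by
    rintro g ⟨k, hk⟩
    refine ⟨k, fun x => ?_⟩
    obtain ⟨l, h1, h2, h3⟩ := hk x
    refine ⟨l.map (fun y => -y), by simp [h1], ?_, ?_⟩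
    · intro y hy
      obtain ⟨z, hz, rfl⟩ := List.mem_map.1 hy
      rcases h2 z hz with h | h | h
      · right; left; simpa using h
      · left; exact h
      · right; right; simp [h]
    · rw [Pi.neg_apply, h3]
      clear h1 h2 h3
      induction l with
      | nil => simp
      | cons a l ih => simp only [List.sum_cons, List.map_cons, neg_add, ih]

section
variable {R : Type*} [Ring R] {V : Set R}

theorem Bdd_comp {d : ℕ} {g : R → R} (hg : g ∈ Bdd V d) (h : R → R) :
    (fun x => g (h x)) ∈ Bdd V d := by
  obtain ⟨k, hk⟩ := hg
  exact ⟨k, fun x => hk (h x)⟩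

theorem SW_mul {d e : ℕ} {x y : R} (hx : x ∈ SW V d) (hy : y ∈ SW V e) :
    x * y ∈ SW V (d + e) := by
  unfold SW at *
  simp only [Set.mem_ofPred_eq, pow_add] at *
  rcases hx with hx | hx | hx
  · rcases hy with hy | hy | hy
    · exact Or.inl (Set.mul_mem_mul hx hy)
    · refine Or.inr (Or.inl ?_)
      rw [← mul_neg]
      exact Set.mul_mem_mul hx hy
    · simp [hy]
  · rcases hy with hy | hy | hy
    · refine Or.inr (Or.inl ?_)
      rw [← neg_mul]
      exact Set.mul_mem_mul hx hy
    · refine Or.inl ?_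
      rw [← neg_mul_neg]
      exact Set.mul_mem_mul hx hy
    · simp [hy]
  · simp [hx]

theorem Bdd_mul_left {d e : ℕ} {g : R → R} (hg : g ∈ Bdd V d) {r : R}
    (hr : r ∈ (Submodule.span ℤ V) ^ e) : (fun x => r * g x) ∈ Bdd V (e + d) := by
  rw [Submodule.span_pow] at hr
  induction hr using Submodule.span_induction with
  | mem r hr =>
    obtain ⟨k, hk⟩ := hg
    refine ⟨k, fun x => ?_⟩
    obtain ⟨l, h1, h2, h3⟩ := hk x
    refine ⟨l.map (fun y => r * y), by simp [h1], ?_, ?_⟩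
    · intro y hy
      obtain ⟨z, hz, rfl⟩ := List.mem_map.1 hy
      exact SW_mul (Or.inl hr) (h2 z hz)
    · beta_reduce
      rw [h3, List.sum_map_mul_left]; simp
  | zero => (convert (Bdd V (e + d)).zero_mem using 1; ext x; simp)
  | add a b _ _ ha hb =>
    convert (Bdd V (e + d)).add_mem ha hb using 1
    ext x; simp [add_mul]
  | smul z a _ ha =>
    convert (Bdd V (e + d)).zsmul_mem ha z using 1
    ext x; simp only [Pi.smul_apply, smul_mul_assoc, mul_smul_comm]

theorem Bdd_mul_right {d e : ℕ} {g : R → R} (hg : g ∈ Bdd V d) {r : R}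
    (hr : r ∈ (Submodule.span ℤ V) ^ e) : (fun x => g x * r) ∈ Bdd V (d + e) := by
  rw [Submodule.span_pow] at hr
  induction hr using Submodule.span_induction with
  | mem r hr =>
    obtain ⟨k, hk⟩ := hg
    refine ⟨k, fun x => ?_⟩
    obtain ⟨l, h1, h2, h3⟩ := hk x
    refine ⟨l.map (fun y => y * r), by simp [h1], ?_, ?_⟩
    · intro y hy
      obtain ⟨z, hz, rfl⟩ := List.mem_map.1 hy
      exact SW_mul (h2 z hz) (Or.inl hr)
    · beta_reduce
      rw [h3, List.sum_map_mul_right]; simp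
  | zero => (convert (Bdd V (d + e)).zero_mem using 1; ext x; simp)
  | add a b _ _ ha hb =>
    convert (Bdd V (d + e)).add_mem ha hb using 1
    ext x; simp [mul_add]
  | smul z a _ ha =>
    convert (Bdd V (d + e)).zsmul_mem ha z using 1
    ext x; simp only [Pi.smul_apply, smul_mul_assoc, mul_smul_comm]

theorem Bdd_comm_pow (h1 : ∀ u ∈ V, (fun x => u * x - x * u) ∈ Bdd V 1) (d : ℕ) :
    ∀ u ∈ (Submodule.span ℤ V) ^ d, (fun x => u * x - x * u) ∈ Bdd V d := by
  have h1' : ∀ u ∈ Submodule.span ℤ V, (fun x => u * x - x * u) ∈ Bdd V 1 := by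
    intro u hu
    induction hu using Submodule.span_induction with
    | mem r hr => exact h1 r hr
    | zero => (convert (Bdd V 1).zero_mem using 1; ext x; simp)
    | add a b _ _ ha hb =>
      convert (Bdd V 1).add_mem ha hb using 1
      ext x; simp only [Pi.add_apply]; noncomm_ring
    | smul z a _ ha =>
      convert (Bdd V 1).zsmul_mem ha z using 1
      ext x; simp only [Pi.smul_apply, smul_mul_assoc, mul_smul_comm, smul_sub]
  induction d with
  | zero =>
    intro u hu
    rw [pow_zero, Submodule.mem_one] at hu
    obtain ⟨z, rfl⟩ := hu
    convert (Bdd V 0).zero_mem using 1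
    ext x
    simp [(Int.cast_commute z x).eq]
  | succ d ih =>
    intro u hu
    rw [pow_succ] at hu
    induction hu using Submodule.mul_induction_on' with
    | mem_mul_mem p hp q hq =>
      have a1 := Bdd_mul_left (h1' q hq) hp
      have a2 := Bdd_mul_right (e := 1) (ih p hp) (by simpa using hq)
      convert (Bdd V (d + 1)).add_mem a1 a2 using 1
      ext x; simp only [Pi.add_apply]; noncomm_ring
    | add a _ b _ ha hb =>
      convert (Bdd V (d + 1)).add_mem ha hb using 1
      ext x; simp only [Pi.add_apply]; noncomm_ring

/-- The two-sided ideal of uniformly bounded elements. -/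
def TI (V : Set R) (d : ℕ) : Ideal R where
  carrier := {t | ∀ y, (fun x => y * t * x) ∈ Bdd V d}
  zero_mem' := by intro y; (convert (Bdd V d).zero_mem using 1; ext x; simp)
  add_mem' := by
    intro a b ha hb y
    convert (Bdd V d).add_mem (ha y) (hb y) using 1
    ext x; simp only [Pi.add_apply]; noncomm_ring
  smul_mem' := by
    intro c a ha y
    convert ha (y * c) using 1
    ext x; simp [mul_assoc]

instance TI_two (V : Set R) (d : ℕ) : (TI V d).IsTwoSided where
  mul_mem_of_left := by
    intro a b ha y
    convert Bdd_comp (ha y) (fun x => b * x) using 1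
    ext x; simp [mul_assoc]

theorem comm_mem_pow {L : Submodule ℤ R} (hL : ∀ u ∈ L, ∀ y, y * u - u * y ∈ L) (d : ℕ) :
    ∀ u ∈ L ^ d, ∀ y, y * u - u * y ∈ L ^ d := by
  induction d with
  | zero =>
    intro u hu y
    rw [pow_zero, Submodule.mem_one] at hu
    obtain ⟨z, rfl⟩ := hu
    simp [(Int.cast_commute z y).eq]
  | succ d ih =>
    intro u hu y
    rw [pow_succ] at *
    induction hu using Submodule.mul_induction_on' with
    | mem_mul_mem p hp q hq =>
      have : y * (p * q) - p * q * y = (y * p - p * y) * q + p * (y * q - q * y) := by noncomm_ring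
      rw [this]
      exact add_mem (Submodule.mul_mem_mul (ih p hp y) hq) (Submodule.mul_mem_mul hp (hL q hq y))
    | add a _ b _ ha hb =>
      have : y * (a + b) - (a + b) * y = (y * a - a * y) + (y * b - b * y) := by noncomm_ring
      rw [this]
      exact add_mem ha hb

theorem TI_comm (h1 : ∀ u ∈ V, (fun x => u * x - x * u) ∈ Bdd V 1)
    (hL : ∀ u ∈ Submodule.span ℤ V, ∀ y, y * u - u * y ∈ Submodule.span ℤ V)
    (n : ℕ) (htop : (Submodule.span ℤ V) ^ (n + 1) = ⊤) (u v : R)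
    (hu : u ∈ Submodule.span ℤ V) (hv : v ∈ (Submodule.span ℤ V) ^ n) :
    u * v - v * u ∈ TI V (n + 1) := by
  have key : ∀ u ∈ Submodule.span ℤ V, ∀ v ∈ (Submodule.span ℤ V) ^ n,
      (fun x => (u * v - v * u) * x) ∈ Bdd V (n + 1) := by
    intro u hu v hv
    have a1 := Bdd_comp (Bdd_comm_pow h1 (n + 1) u (by rw [htop]; trivial)) (fun x => v * x)
    have a2 := Bdd_mul_left (Bdd_comm_pow h1 1 u (by simpa using hu)) hv
    convert (Bdd V (n + 1)).sub_mem a1 a2 using 1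
    ext x; simp only [Pi.sub_apply]; noncomm_ring
  intro y
  have b1 := Bdd_comp (key u hu v hv) (fun x => y * x)
  have b2 := key _ (hL u hu y) v hv
  have b3 := key u hu _ (comm_mem_pow hL n v hv y)
  convert (Bdd V (n + 1)).add_mem b1 ((Bdd V (n + 1)).add_mem b2 b3) using 1
  ext x; simp only [Pi.add_apply]; noncomm_ring

theorem mem_subring_of_pow (C : Subring R) (M : Submodule ℤ R) (hM : ∀ x ∈ M, x ∈ C) (d : ℕ) :
    ∀ x ∈ M ^ d, x ∈ C := by
  intro x hx
  induction hx using Submodule.pow_induction_on_left' with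
  | algebraMap r => simp
  | add x y i hx hy h1 h2 => exact C.add_mem h1 h2
  | mem_mul m hm i x hx h => exact C.mul_mem (hM m hm) h

theorem TI_all_comm (h1 : ∀ u ∈ V, (fun x => u * x - x * u) ∈ Bdd V 1)
    (hL : ∀ u ∈ Submodule.span ℤ V, ∀ y, y * u - u * y ∈ Submodule.span ℤ V)
    (n : ℕ) (hn : 0 < n) (htop : (Submodule.span ℤ V) ^ (n + 1) = ⊤) (r s : R) :
    Ideal.Quotient.mk (TI V (n + 1)) r * Ideal.Quotient.mk (TI V (n + 1)) s
      = Ideal.Quotient.mk (TI V (n + 1)) s * Ideal.Quotient.mk (TI V (n + 1)) r := by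
  set π := Ideal.Quotient.mk (TI V (n + 1))
  have hc : ∀ v ∈ (Submodule.span ℤ V) ^ n, v ∈ (Subring.center _).comap π := by
    intro v hv
    have : ∀ x : R, x ∈ (Subring.centralizer {π v}).comap π := by
      intro x
      refine mem_subring_of_pow _ (Submodule.span ℤ V) ?_ (n + 1) x (by rw [htop]; trivial)
      intro u hu
      rw [Subring.mem_comap, Subring.mem_centralizer_iff]
      intro g hg
      rw [Set.mem_singleton_iff.1 hg, ← map_mul, ← map_mul]
      exact (Ideal.Quotient.eq.2 (TI_comm h1 hL n htop u v hu hv)).symm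
    rw [Subring.mem_comap, Subring.mem_center_iff]
    intro g
    obtain ⟨x, rfl⟩ := Ideal.Quotient.mk_surjective g
    have h := this x
    rw [Subring.mem_comap, Subring.mem_centralizer_iff] at h
    exact (h _ rfl).symm
  have hr : r ∈ (Subring.center _).comap π := by
    refine mem_subring_of_pow _ _ hc (n + 1) r ?_
    rw [← pow_mul, mul_comm, pow_mul, htop]
    have : ∀ k : ℕ, 0 < k → r ∈ (⊤ : Submodule ℤ R) ^ k := by
      intro k hk
      induction k with
      | zero => omega
      | succ k ih =>
        rcases Nat.eq_zero_or_pos k with rfl | hk'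
        · simp
        · rw [pow_succ, ← mul_one r]
          exact Submodule.mul_mem_mul (ih hk') trivial
    exact this n hn
  rw [Subring.mem_comap, Subring.mem_center_iff] at hr
  exact (hr _).symm

theorem ofFn_comm (x : R) : ∀ (m : ℕ) (b : Fin m → R),
    (List.ofFn b).prod * x - x * (List.ofFn b).prod
      = ∑ i, (List.ofFn (Function.update b i (b i * x - x * b i))).prod := by
  intro m
  induction m with
  | zero => intro b; simp
  | succ m ih =>
    intro b
    rw [Fin.sum_univ_succ]
    have e1 : ∀ c, List.ofFn (Function.update b 0 c) = c :: List.ofFn (fun i => b (Fin.succ i)) := by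
      intro c
      rw [List.ofFn_succ]
      simp [Function.update_of_ne]
    have e2 : ∀ (i : Fin m) c, List.ofFn (Function.update b i.succ c)
        = b 0 :: List.ofFn (Function.update (fun i => b (Fin.succ i)) i c) := by
      intro i c
      rw [List.ofFn_succ]
      congr 1
      congr 1
      ext j
      by_cases h : j = i
      · subst h; simp
      · simp [Function.update_of_ne, h]
    simp only [e1, e2, List.prod_cons]
    rw [← Finset.mul_sum, ← ih, List.ofFn_succ, List.prod_cons]
    noncomm_ring

end

/-- The multilinear map attached to the coefficients. -/
noncomputable def FM {K : Type*} [CommRing K] (R : Type*) [Ring R] [Algebra K R]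
    {m : ℕ} (lam : Equiv.Perm (Fin m) → K) : MultilinearMap K (fun _ : Fin m => R) R :=
  ∑ σ : Equiv.Perm (Fin m), lam σ • (MultilinearMap.mkPiAlgebraFin K m R).domDomCongr σ

theorem FM_apply {K : Type*} [CommRing K] (R : Type*) [Ring R] [Algebra K R]
    {m : ℕ} (lam : Equiv.Perm (Fin m) → K) (a : Fin m → R) :
    FM R lam a = ∑ σ : Equiv.Perm (Fin m), lam σ • (List.ofFn fun i => a (σ i)).prod := by
  simp [FM]

theorem FM_comm {K : Type*} [CommRing K] (R : Type*) [Ring R] [Algebra K R]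
    {m : ℕ} (lam : Equiv.Perm (Fin m) → K) (a : Fin m → R) (x : R) :
    FM R lam a * x - x * FM R lam a
      = ∑ i, FM R lam (Function.update a i (a i * x - x * a i)) := by
  simp only [FM_apply]
  rw [Finset.sum_comm, Finset.sum_mul, Finset.mul_sum, ← Finset.sum_sub_distrib]
  refine Finset.sum_congr rfl fun σ _ => ?_
  rw [smul_mul_assoc, mul_smul_comm, ← smul_sub, ofFn_comm, ← Finset.smul_sum]
  congr 1
  refine Fintype.sum_equiv σ _ _ fun i => ?_
  congr 2
  funext j
  by_cases h : j = i
  · subst h; simp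
  · simp [Function.update_of_ne, h]

theorem FM_neg {K : Type*} [CommRing K] (R : Type*) [Ring R] [Algebra K R]
    {m : ℕ} (lam : Equiv.Perm (Fin m) → K) (hsum : ∑ σ : Equiv.Perm (Fin m), lam σ = 0) :
    (0 : R) ∈ Set.range (FM R lam) ∧
    ∀ x ∈ Set.range (FM R lam), -x ∈ Set.range (FM R lam) := by
  rcases m with _ | m
  · have : ∀ a, FM R lam a = 0 := by
      intro a
      rw [FM_apply]
      simp only [List.ofFn_zero, List.prod_nil]
      rw [← Finset.sum_smul, hsum, zero_smul]
    constructor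
    · exact ⟨0, this _⟩
    · rintro _ ⟨a, rfl⟩
      exact ⟨a, by simp [this]⟩
  · constructor
    · exact ⟨0, MultilinearMap.map_zero _⟩
    · rintro _ ⟨a, rfl⟩
      refine ⟨Function.update a 0 (- a 0), ?_⟩
      rw [MultilinearMap.map_update_neg, Function.update_eq_self]

theorem comm_vanish {K : Type*} [CommRing K] (R : Type*) [Ring R] [Algebra K R]
    {m : ℕ} (lam : Equiv.Perm (Fin m) → K) (hsum : ∑ σ : Equiv.Perm (Fin m), lam σ = 0)
    {S : Type*} [Ring S] (π : R →+* S) (hπ : ∀ r s, π r * π s = π s * π r) (a : Fin m → R) :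
    π (FM R lam a) = 0 := by
  have hp : ∀ σ : Equiv.Perm (Fin m), π (List.ofFn fun i => a (σ i)).prod
      = π (List.ofFn a).prod := by
    intro σ
    rw [map_list_prod, map_list_prod]
    refine List.Perm.prod_eq' ((Equiv.Perm.ofFn_comp_perm σ a).map π) ?_
    rw [List.pairwise_map]
    exact List.Pairwise.imp (fun _ => hπ _ _) (List.pairwise_of_forall (R := fun _ _ => True) fun _ _ => trivial)
  rw [FM_apply, map_sum]
  simp only [Algebra.smul_def, map_mul, hp]
  rw [← Finset.sum_mul, ← map_sum, ← map_sum, hsum]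
  simp

theorem stmt_aux (K : Type*) [CommRing K] (R : Type*) [Ring R] [Algebra K R]
    (m : ℕ) (lam : Equiv.Perm (Fin m) → K)
    (hsum : ∑ σ : Equiv.Perm (Fin m), lam σ = 0)
    (n : ℕ) (hn : 1 < n)
    (hgen : AddSubgroup.closure
        {x : R | ∃ v : Fin n → R,
          (∀ i, v i ∈ {y : R | ∃ a : Fin m → R,
            y = ∑ σ : Equiv.Perm (Fin m),
              lam σ • (List.ofFn fun i => a (σ i)).prod}) ∧
          x = (List.ofFn v).prod} = ⊤) :
    ∃ N : ℕ, 0 < N ∧ ∀ x : R, ∃ a : Fin N → R,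
      (∀ i, a i ∈ {x : R | ∃ v : Fin n → R,
          (∀ i, v i ∈ {y : R | ∃ a : Fin m → R,
            y = ∑ σ : Equiv.Perm (Fin m),
              lam σ • (List.ofFn fun i => a (σ i)).prod}) ∧
          x = (List.ofFn v).prod}) ∧
      x = ∑ i, a i := by
  have hV : {y : R | ∃ a : Fin m → R,
            y = ∑ σ : Equiv.Perm (Fin m),
              lam σ • (List.ofFn fun i => a (σ i)).prod} = Set.range (FM R lam) := by
    ext y
    simp only [Set.mem_ofPred_eq, Set.mem_range, FM_apply, eq_comm]
  rw [hV] at hgen ⊢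
  obtain ⟨h0, hneg⟩ := FM_neg R lam hsum
  have hcomm : ∀ a x, FM R lam a * x - x * FM R lam a
      = ∑ i, FM R lam (Function.update a i (a i * x - x * a i)) := FM_comm R lam
  have hvan : ∀ {S : Type _} [Ring S] (π : R →+* S), (∀ r s, π r * π s = π s * π r) →
      ∀ a, π (FM R lam a) = 0 := fun π h a => comm_vanish R lam hsum π h a
  have hW : {x : R | ∃ v : Fin n → R, (∀ i, v i ∈ Set.range (FM R lam)) ∧
      x = (List.ofFn v).prod} = (Set.range (FM R lam)) ^ n := by
    ext x
    rw [Set.mem_pow]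
    constructor
    · rintro ⟨v, h, rfl⟩
      exact ⟨fun i => ⟨v i, h i⟩, rfl⟩
    · rintro ⟨v, rfl⟩
      exact ⟨fun i => v i, fun i => (v i).2, rfl⟩
  rw [hW] at hgen ⊢
  have h1 : ∀ u ∈ Set.range (FM R lam), (fun x => u * x - x * u) ∈ Bdd (Set.range (FM R lam)) 1 := by
    rintro _ ⟨a, rfl⟩
    refine ⟨m, fun x => ⟨List.ofFn fun i => FM R lam (Function.update a i (a i * x - x * a i)),
      by simp, ?_, ?_⟩⟩
    · intro y hy
      obtain ⟨i, rfl⟩ := (List.mem_ofFn' _ _).1 hy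
      left
      rw [pow_one]
      exact ⟨_, rfl⟩
    · rw [List.sum_ofFn, ← hcomm]
  have hL : ∀ u ∈ Submodule.span ℤ (Set.range (FM R lam)), ∀ y,
      y * u - u * y ∈ Submodule.span ℤ (Set.range (FM R lam)) := by
    intro u hu y
    induction hu using Submodule.span_induction with
    | mem r hr =>
      obtain ⟨a, rfl⟩ := hr
      rw [← neg_sub, hcomm]
      exact neg_mem (sum_mem fun i _ => Submodule.subset_span ⟨_, rfl⟩)
    | zero => simp
    | add a b _ _ ha hb =>
      have : y * (a + b) - (a + b) * y = (y * a - a * y) + (y * b - b * y) := by noncomm_ring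
      rw [this]
      exact add_mem ha hb
    | smul z a _ ha =>
      have : y * (z • a) - (z • a) * y = z • (y * a - a * y) := by
        simp only [smul_mul_assoc, mul_smul_comm, smul_sub]
      rw [this]
      exact Submodule.smul_mem _ _ ha
  clear hV hW
  generalize hVV : Set.range (FM R lam) = V at *
  have htop : (Submodule.span ℤ V) ^ n = ⊤ := by
    rw [Submodule.span_pow, eq_top_iff]
    intro x _
    have hx : x ∈ AddSubgroup.closure (V ^ n) := by rw [hgen]; trivial
    rw [← Submodule.span_int_eq_addSubgroupClosure] at hx
    exact hx
  obtain ⟨n, rfl⟩ : ∃ k, n = k + 1 := ⟨n - 1, by omega⟩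
  have hall := TI_all_comm h1 hL n (by omega) htop
  have hVT : ∀ u ∈ Submodule.span ℤ V, u ∈ TI V (n + 1) := by
    intro u hu
    induction hu using Submodule.span_induction with
    | mem r hr =>
      rw [← hVV] at hr
      obtain ⟨a, rfl⟩ := hr
      exact Ideal.Quotient.eq_zero_iff_mem.1 (hvan _ hall a)
    | zero => exact zero_mem _
    | add a b _ _ ha hb => exact add_mem ha hb
    | smul z a _ ha => exact zsmul_mem ha z
  have hone : (1 : R) ∈ TI V (n + 1) := by
    have : (1 : R) ∈ (Submodule.span ℤ V) ^ (n + 1) := by rw [htop]; trivial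
    rw [pow_succ] at this
    generalize (1 : R) = w at this ⊢
    induction this using Submodule.mul_induction_on' with
    | mem_mul_mem p hp q hq => exact Ideal.mul_mem_left _ _ (hVT q hq)
    | add a _ b _ ha hb => exact add_mem ha hb
  have hz : (0 : R) ∈ V ^ (n + 1) := by
    have := Set.pow_mem_pow (n := n + 1) h0
    simpa using this
  have hng : ∀ x ∈ V ^ (n + 1), - x ∈ V ^ (n + 1) := by
    intro x hx
    rw [pow_succ] at *
    obtain ⟨p, hp, q, hq, rfl⟩ := hx
    exact ⟨p, hp, -q, hneg q hq, by simp⟩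
  have hSW : ∀ x ∈ SW V (n + 1), x ∈ V ^ (n + 1) := by
    rintro x (h | h | h)
    · exact h
    · simpa using hng _ h
    · rw [h]; exact hz
  obtain ⟨k, hk⟩ := hone 1
  refine ⟨k + 1, by omega, fun x => ?_⟩
  obtain ⟨l, e1, e2, e3⟩ := hk x
  subst e1
  refine ⟨Fin.cons 0 l.get, ?_, ?_⟩
  · intro i
    refine Fin.cases ?_ (fun j => ?_) i
    · simpa using hz
    · simpa using hSW _ (e2 _ (List.getElem_mem j.2))
  · rw [Fin.sum_univ_succ]
    simp only [Fin.cons_zero, Fin.cons_succ, zero_add]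
    rw [← List.sum_ofFn, List.ofFn_get, ← e3]
    simp

end

/-- Let `R` be a unital `K`-algebra and `f` a multilinear polynomial of
degree `m` with coefficients `lam : Sym(m) → K` satisfying `Σ_σ lam σ = 0`. If, for some
`n > 1`, `R` equals the additive subgroup generated by the set of products of `n` values
of `f`, then there is `N ≥ 1` such that every `x ∈ R` is a sum of `N` such products. -/
theorem stmt_5 (K : Type*) [CommRing K] (R : Type*) [Ring R] [Algebra K R]
    (m : ℕ) (lam : Equiv.Perm (Fin m) → K)
    (hsum : ∑ σ : Equiv.Perm (Fin m), lam σ = 0)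
    (n : ℕ) (hn : 1 < n)
    (hgen : AddSubgroup.closure
        {x : R | ∃ v : Fin n → R,
          (∀ i, v i ∈ {y : R | ∃ a : Fin m → R,
            y = ∑ σ : Equiv.Perm (Fin m),
              lam σ • (List.ofFn fun i => a (σ i)).prod}) ∧
          x = (List.ofFn v).prod} = ⊤) :
    ∃ N : ℕ, 0 < N ∧ ∀ x : R, ∃ a : Fin N → R,
      (∀ i, a i ∈ {x : R | ∃ v : Fin n → R,
          (∀ i, v i ∈ {y : R | ∃ a : Fin m → R,
            y = ∑ σ : Equiv.Perm (Fin m),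
              lam σ • (List.ofFn fun i => a (σ i)).prod}) ∧
          x = (List.ofFn v).prod}) ∧
      x = ∑ i, a i := by
  exact stmt_aux K R m lam hsum n hn hgen
end

section
/- Let R be a unital ring and let m > 1 and n > 1 be integers. Let S_m denote the standard polynomial of degree m, whose value at (a₁,…,a_m) ∈ R^m is Σ_{σ ∈ Sym(m)} sign(σ)·a_{σ(1)}⋯a_{σ(m)}, and let S_m(R) be the set of all such values. If R equals the additive subgroup generated by the set S_m(R)^[n] of products of n values of S_m, then there exists a positive integer N such that every x ∈ R can be written as x = a₁ + ⋯ + a_N with each a_i ∈ S_m(R)^[n]. -/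
/-- If every element of `C` generates, modulo `J`, an ideal of square zero, and `C` generates the
unit ideal, then `J` is the unit ideal. -/
lemma one_mem_of_sq_zero {A : Type*} [Ring A] (J : TwoSidedIdeal A) (C : Set A)
    (hC : ∀ c ∈ C, ∀ q, c * q * c ∈ J) (h1 : (1 : A) ∈ TwoSidedIdeal.span C) : (1 : A) ∈ J := by
  have key : ∀ z ∈ TwoSidedIdeal.span C, ∀ K : TwoSidedIdeal A, J ≤ K →
      (1 : A) ∈ K ⊔ TwoSidedIdeal.span {z} → (1 : A) ∈ K := by
    intro z hz
    induction hz using TwoSidedIdeal.span_induction with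
    | mem c hc =>
      intro K hJK h
      have s1 : ∀ p ∈ TwoSidedIdeal.span {c}, ∀ t, p * t * c ∈ J := by
        intro p hp
        induction hp using TwoSidedIdeal.span_induction with
        | mem x hx => rw [Set.mem_singleton_iff] at hx; subst hx; exact hC x hc
        | zero => intro t; simpa using J.zero_mem
        | add x y _ _ hx hy => intro t; rw [add_mul, add_mul]; exact J.add_mem (hx t) (hy t)
        | neg x _ hx => intro t; rw [neg_mul, neg_mul]; exact J.neg_mem (hx t)
        | left_absorb a x _ hx =>
          intro t; rw [mul_assoc a, mul_assoc a]; exact J.mul_mem_left _ _ (hx t)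
        | right_absorb a x _ hx => intro t; rw [mul_assoc x]; exact hx (a * t)
      have s2 : ∀ p ∈ TwoSidedIdeal.span {c}, ∀ q ∈ TwoSidedIdeal.span {c},
          ∀ t, p * t * q ∈ J := by
        intro p hp q hq
        induction hq using TwoSidedIdeal.span_induction with
        | mem x hx => rw [Set.mem_singleton_iff] at hx; subst hx; exact s1 p hp
        | zero => intro t; simpa using J.zero_mem
        | add x y _ _ hx hy => intro t; rw [mul_add]; exact J.add_mem (hx t) (hy t)
        | neg x _ hx => intro t; rw [mul_neg]; exact J.neg_mem (hx t)
        | left_absorb a x _ hx =>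
          intro t; rw [← mul_assoc, mul_assoc p]; exact hx _
        | right_absorb a x _ hx => intro t; rw [← mul_assoc]; exact J.mul_mem_right _ _ (hx t)
      obtain ⟨k, hk, p, hp, hkp⟩ := TwoSidedIdeal.mem_sup.1 h
      have e : (1 : A) = k * (k + p) + p * k + p * 1 * p := by
        calc (1 : A) = (k + p) * (k + p) := by rw [hkp, mul_one]
          _ = _ := by noncomm_ring
      rw [e]
      exact K.add_mem (K.add_mem (K.mul_mem_right _ _ hk) (K.mul_mem_left _ _ hk))
        (hJK (s2 p hp p hp 1))
    | zero =>
      intro K _ h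
      have : K ⊔ TwoSidedIdeal.span {(0 : A)} ≤ K :=
        sup_le le_rfl (TwoSidedIdeal.span_le.2 (by simpa using K.zero_mem))
      exact this h
    | add x y _ _ hx hy =>
      intro K hJK h
      refine hy K hJK (hx _ (hJK.trans le_sup_left) ?_)
      refine (sup_le (le_sup_left.trans le_sup_left) (TwoSidedIdeal.span_le.2 ?_) :
        K ⊔ TwoSidedIdeal.span {x + y} ≤ _) h
      rw [Set.singleton_subset_iff]
      exact TwoSidedIdeal.add_mem _
        (TwoSidedIdeal.mem_sup_right (TwoSidedIdeal.subset_span rfl))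
        (TwoSidedIdeal.mem_sup_left (TwoSidedIdeal.mem_sup_right (TwoSidedIdeal.subset_span rfl)))
    | neg x _ hx =>
      intro K hJK h
      refine hx K hJK ((sup_le_sup_left (TwoSidedIdeal.span_le.2 ?_) K :
        K ⊔ TwoSidedIdeal.span {-x} ≤ _) h)
      rw [Set.singleton_subset_iff]
      exact TwoSidedIdeal.neg_mem _ (TwoSidedIdeal.subset_span rfl)
    | left_absorb a x _ hx =>
      intro K hJK h
      refine hx K hJK ((sup_le_sup_left (TwoSidedIdeal.span_le.2 ?_) K :
        K ⊔ TwoSidedIdeal.span {a * x} ≤ _) h)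
      rw [Set.singleton_subset_iff]
      exact TwoSidedIdeal.mul_mem_left _ _ _ (TwoSidedIdeal.subset_span rfl)
    | right_absorb a x _ hx =>
      intro K hJK h
      refine hx K hJK ((sup_le_sup_left (TwoSidedIdeal.span_le.2 ?_) K :
        K ⊔ TwoSidedIdeal.span {x * a} ≤ _) h)
      rw [Set.singleton_subset_iff]
      exact TwoSidedIdeal.mul_mem_right _ _ _ (TwoSidedIdeal.subset_span rfl)
  exact key 1 h1 J le_rfl (TwoSidedIdeal.mem_sup_right (TwoSidedIdeal.subset_span rfl))

/-- The largest two-sided ideal contained in an additive subgroup. -/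
def coreIdeal {A : Type*} [Ring A] (M : Submodule ℤ A) : TwoSidedIdeal A :=
  .mk' {g | ∀ x y, x * g * y ∈ M} (by intro x y; simp)
    (by intro a b ha hb x y; rw [mul_add, add_mul]; exact M.add_mem (ha x y) (hb x y))
    (by intro a ha x y; rw [mul_neg, neg_mul]; exact M.neg_mem (ha x y))
    (by intro a b hb x y; rw [← mul_assoc x]; exact hb (x * a) y)
    (by intro a b ha x y; rw [← mul_assoc x, mul_assoc _ b]; exact ha x (b * y))

lemma mem_coreIdeal {A : Type*} [Ring A] {M : Submodule ℤ A} {g : A} :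
    g ∈ coreIdeal M ↔ ∀ x y, x * g * y ∈ M := by
  unfold coreIdeal
  rw [TwoSidedIdeal.mem_mk']
  rfl


lemma lie_base {A : Type*} [Ring A] (L : Submodule ℤ A)
    (hL : ∀ x, ∀ v ∈ L, x * v - v * x ∈ L)
    {v w u : A} (hv : v ∈ L) (hw : w ∈ L) (hu : u ∈ L) (x : A) :
    x * ((v * w - w * v) * (v * u - u * v)) ∈ L * L := by
  have e : x * ((v * w - w * v) * (v * u - u * v)) =
      ((x * v) * w - w * (x * v)) * (v * u - u * v)
        + (x * w - w * x) * ((v * u) * v - v * (v * u)) := by noncomm_ring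
  rw [e]
  exact Submodule.add_mem _ (Submodule.mul_mem_mul (hL _ _ hw) (hL _ _ hu))
    (Submodule.mul_mem_mul (hL _ _ hw) (hL _ _ hv))

lemma lie_core {A : Type*} [Ring A] (L : Submodule ℤ A)
    (hL : ∀ x, ∀ v ∈ L, x * v - v * x ∈ L)
    {v w u : A} (hv : v ∈ L) (hw : w ∈ L) (hu : u ∈ L) :
    (v * w - w * v) * (v * u - u * v) ∈ coreIdeal (L * L) := by
  rw [mem_coreIdeal]
  intro x y
  have b := fun {v w u : A} => lie_base L hL (v := v) (w := w) (u := u)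
  have hv' := hL y v hv
  have hw' := hL y w hw
  have hu' := hL y u hu
  have h0 := b hv hw hu (x * y)
  have h1 := b hv hw' hu x
  have h2 := b hv hw hu' x
  have h3 := b (L.add_mem hv hv') hw hu x
  have h4 := b hv hw hu x
  have h5 := b hv' hw hu x
  have := Submodule.sub_mem _ (Submodule.sub_mem _ h0 (Submodule.add_mem _ h1 h2))
    (Submodule.sub_mem _ (Submodule.sub_mem _ h3 h4) h5)
  convert this using 1
  noncomm_ring

lemma lie_pow_top {A : Type*} [Ring A] (L : Submodule ℤ A)
    (hL : ∀ x, ∀ v ∈ L, x * v - v * x ∈ L)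
    (h1 : (1 : A) ∈ TwoSidedIdeal.span {c | ∃ v ∈ L, ∃ w ∈ L, c = v * w - w * v})
    (k : ℕ) (hk : 2 ≤ k) : L ^ k = ⊤ := by
  induction k, hk using Nat.le_induction with
  | base =>
    have hJ : (1 : A) ∈ coreIdeal (L * L) := by
      refine one_mem_of_sq_zero _ _ ?_ h1
      rintro c ⟨v, hv, w, hw, rfl⟩ q
      have a1 := TwoSidedIdeal.mul_mem_right _ _ q (lie_core L hL hv hw hw)
      have a2 := lie_core L hL hv hw (hL q w hw)
      have a3 := lie_core L hL hw hv (hL q v hv)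
      have := TwoSidedIdeal.add_mem _ (TwoSidedIdeal.add_mem _ a1 a2) a3
      convert this using 1
      noncomm_ring
    rw [eq_top_iff, pow_two]
    intro x _
    simpa using mem_coreIdeal.1 hJ x 1
  | succ k hk ih =>
    have hJ : (1 : A) ∈ coreIdeal (L ^ (k + 1)) := by
      have : TwoSidedIdeal.span {c | ∃ v ∈ L, ∃ w ∈ L, c = v * w - w * v} ≤
          coreIdeal (L ^ (k + 1)) := by
        rw [TwoSidedIdeal.span_le]
        rintro c ⟨v, hv, w, hw, rfl⟩
        rw [SetLike.mem_coe, mem_coreIdeal]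
        intro x y
        have e : x * (v * w - w * v) * y = (x * y) * (v * w - w * v)
            + (-x) * (y * (v * w - w * v) - (v * w - w * v) * y) := by noncomm_ring
        rw [e, pow_succ]
        have hvw := hL v w hw
        exact Submodule.add_mem _ (Submodule.mul_mem_mul (by rw [ih]; trivial) hvw)
          (Submodule.mul_mem_mul (by rw [ih]; trivial) (hL y _ hvw))
      exact this h1
    rw [eq_top_iff]
    intro x _
    simpa using mem_coreIdeal.1 hJ x 1

/-- Values of the standard polynomial. -/
def stdVal (m : ℕ) (R : Type*) [Ring R] : Set R :=
  {y : R | ∃ a : Fin m → R, y = ∑ σ : Equiv.Perm (Fin m),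
              (Equiv.Perm.sign σ : ℤ) • (List.ofFn fun i => a (σ i)).prod}

/-- Products of `n` values of the standard polynomial. -/
def stdProd (m n : ℕ) (R : Type*) [Ring R] : Set R :=
  {x : R | ∃ v : Fin n → R, (∀ i, v i ∈ stdVal m R) ∧ x = (List.ofFn v).prod}

lemma stdVal_map {m : ℕ} {R S : Type*} [Ring R] [Ring S] (f : R →+* S) {x : R}
    (hx : x ∈ stdVal m R) : f x ∈ stdVal m S := by
  obtain ⟨a, rfl⟩ := hx
  refine ⟨fun i => f (a i), ?_⟩
  simp only [map_sum, map_zsmul, map_list_prod, List.map_ofFn, Function.comp_def]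

lemma stdProd_map {m n : ℕ} {R S : Type*} [Ring R] [Ring S] (f : R →+* S) {x : R}
    (hx : x ∈ stdProd m n R) : f x ∈ stdProd m n S := by
  obtain ⟨v, hv, rfl⟩ := hx
  refine ⟨fun i => f (v i), fun i => stdVal_map f (hv i), ?_⟩
  simp only [map_list_prod, List.map_ofFn, Function.comp_def]

lemma stdVal_eq_range (m : ℕ) (R : Type*) [Ring R] :
    stdVal m R = Set.range
      (MultilinearMap.alternatization (MultilinearMap.mkPiAlgebraFin ℤ m R)) := by
  ext y
  simp only [stdVal, Set.mem_setOf_eq, Set.mem_range, MultilinearMap.alternatization_apply,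
    MultilinearMap.domDomCongr_apply, MultilinearMap.mkPiAlgebraFin_apply, Units.smul_def, eq_comm]

lemma stdVal_neg {m : ℕ} (hm : 0 < m) {R : Type*} [Ring R] {x : R}
    (hx : x ∈ stdVal m R) : -x ∈ stdVal m R := by
  rw [stdVal_eq_range] at hx ⊢
  obtain ⟨a, rfl⟩ := hx
  refine ⟨Function.update a ⟨0, hm⟩ (-a ⟨0, hm⟩), ?_⟩
  rw [AlternatingMap.map_update_neg, Function.update_eq_self]

lemma stdVal_zero {m : ℕ} (hm : 0 < m) (R : Type*) [Ring R] : (0 : R) ∈ stdVal m R := by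
  rw [stdVal_eq_range]
  exact ⟨0, AlternatingMap.map_coord_zero _ ⟨0, hm⟩ rfl⟩

lemma stdProd_neg {m n : ℕ} (hm : 0 < m) (hn : 0 < n) {R : Type*} [Ring R] {x : R}
    (hx : x ∈ stdProd m n R) : -x ∈ stdProd m n R := by
  obtain ⟨v, hv, rfl⟩ := hx
  obtain ⟨k, rfl⟩ : ∃ k, n = k + 1 := ⟨n - 1, by omega⟩
  refine ⟨Fin.cons (-v 0) (fun i => v i.succ), ?_, ?_⟩
  · intro i
    refine Fin.cases ?_ (fun j => ?_) i
    · exact stdVal_neg hm (hv 0)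
    · exact hv _
  · simp [List.ofFn_succ]

lemma stdProd_zero {m n : ℕ} (hm : 0 < m) (hn : 0 < n) (R : Type*) [Ring R] :
    (0 : R) ∈ stdProd m n R := by
  obtain ⟨k, rfl⟩ : ∃ k, n = k + 1 := ⟨n - 1, by omega⟩
  refine ⟨fun _ => 0, fun _ => stdVal_zero hm R, ?_⟩
  simp [List.ofFn_succ]

lemma ofFn_prod_comm {R : Type*} [Ring R] (x : R) : ∀ (m : ℕ) (f : Fin m → R),
    x * (List.ofFn f).prod - (List.ofFn f).prod * x =
      ∑ i, (List.ofFn (Function.update f i (x * f i - f i * x))).prod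
  | 0, f => by simp
  | m + 1, f => by
    have ih := ofFn_prod_comm x m (fun i => f i.succ)
    have e : ∀ i : Fin m, (List.ofFn (Function.update f i.succ
        (x * f i.succ - f i.succ * x))).prod = f 0 * (List.ofFn (Function.update
          (fun i => f i.succ) i (x * f i.succ - f i.succ * x))).prod := by
      intro i
      rw [List.ofFn_succ, List.prod_cons, Function.update_of_ne (Fin.succ_ne_zero i).symm]
      congr 3
      funext j
      by_cases h : j = i
      · subst h; simp
      · rw [Function.update_of_ne h, Function.update_of_ne (by simpa using h)]
    rw [Fin.sum_univ_succ, Finset.sum_congr rfl (fun i _ => e i), ← Finset.mul_sum, ← ih]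
    have e0 : (List.ofFn (Function.update f 0 (x * f 0 - f 0 * x))).prod =
        (x * f 0 - f 0 * x) * (List.ofFn fun i => f i.succ).prod := by
      rw [List.ofFn_succ, List.prod_cons, Function.update_self]
      congr 3
    rw [e0, List.ofFn_succ, List.prod_cons]
    noncomm_ring

lemma stdVal_lie {m : ℕ} {R : Type*} [Ring R] (x : R) (v : R)
    (hv : v ∈ stdVal m R) : x * v - v * x ∈ Submodule.span ℤ (stdVal m R) := by
  obtain ⟨a, rfl⟩ := hv
  have e : x * (∑ σ : Equiv.Perm (Fin m),
        (Equiv.Perm.sign σ : ℤ) • (List.ofFn fun i => a (σ i)).prod) -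
      (∑ σ : Equiv.Perm (Fin m),
        (Equiv.Perm.sign σ : ℤ) • (List.ofFn fun i => a (σ i)).prod) * x =
      ∑ j, ∑ σ : Equiv.Perm (Fin m), (Equiv.Perm.sign σ : ℤ) •
        (List.ofFn fun i => (Function.update a j (x * a j - a j * x)) (σ i)).prod := by
    rw [Finset.sum_comm, Finset.mul_sum, Finset.sum_mul, ← Finset.sum_sub_distrib]
    refine Finset.sum_congr rfl fun σ _ => ?_
    rw [mul_smul_comm, smul_mul_assoc, ← smul_sub, ofFn_prod_comm, ← Finset.smul_sum]
    congr 1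
    rw [← Equiv.sum_comp σ (fun j => (List.ofFn fun i =>
      (Function.update a j (x * a j - a j * x)) (σ i)).prod)]
    refine Finset.sum_congr rfl fun i _ => ?_
    congr 2
    funext j
    by_cases h : j = i
    · subst h; simp
    · rw [Function.update_of_ne h, Function.update_of_ne (by simpa using h)]
  rw [e]
  exact Submodule.sum_mem _ fun j _ => Submodule.subset_span ⟨_, rfl⟩

lemma stdVal_lie_span {m : ℕ} {R : Type*} [Ring R] (x : R) (v : R)
    (hv : v ∈ Submodule.span ℤ (stdVal m R)) :
    x * v - v * x ∈ Submodule.span ℤ (stdVal m R) := by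
  induction hv using Submodule.span_induction with
  | mem y hy => exact stdVal_lie x y hy
  | zero => simp
  | add y z _ _ hy hz =>
    convert Submodule.add_mem _ hy hz using 1
    noncomm_ring
  | smul c y _ hy =>
    convert Submodule.smul_mem _ c hy using 1
    rw [mul_smul_comm, smul_mul_assoc, smul_sub]

lemma sum_sign_zero {m : ℕ} (hm : 1 < m) :
    ∑ σ : Equiv.Perm (Fin m), (Equiv.Perm.sign σ : ℤ) = 0 := by
  have hne : (⟨0, by omega⟩ : Fin m) ≠ ⟨1, hm⟩ := by simp
  have := Equiv.sum_comp (Equiv.mulLeft (Equiv.swap (⟨0, by omega⟩ : Fin m) ⟨1, hm⟩))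
    (fun σ : Equiv.Perm (Fin m) => (Equiv.Perm.sign σ : ℤ))
  simp [Equiv.Perm.sign_mul, Equiv.Perm.sign_swap hne] at this
  linarith

lemma stdVal_comm {m : ℕ} (hm : 1 < m) {Q : Type*} [Ring Q] (hQ : ∀ x y : Q, x * y = y * x)
    {v : Q} (hv : v ∈ stdVal m Q) : v = 0 := by
  letI : CommRing Q := { ‹Ring Q› with mul_comm := hQ }
  obtain ⟨a, rfl⟩ := hv
  have e : ∀ σ : Equiv.Perm (Fin m), (List.ofFn fun i => a (σ i)).prod = ∏ i, a i := by
    intro σ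
    rw [← Equiv.prod_comp σ, ← List.prod_ofFn]
  simp_rw [e]
  rw [← Finset.sum_smul, sum_sign_zero hm, zero_smul]

lemma stdProd_subset_subring {m n : ℕ} {R : Type*} [Ring R]
    (hgen : AddSubgroup.closure (stdProd m n R) = ⊤) (S : Subring R) (h : stdVal m R ⊆ S) (x : R) :
    x ∈ S := by
  have : AddSubgroup.closure (stdProd m n R) ≤ S.toAddSubgroup := by
    rw [AddSubgroup.closure_le]
    rintro y ⟨v, hv, rfl⟩
    refine S.list_prod_mem ?_
    intro z hz
    obtain ⟨i, rfl⟩ := (List.mem_ofFn' _ _).1 hz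
    exact h (hv i)
  exact this (hgen ▸ AddSubgroup.mem_top x)

lemma one_mem_span_comm {m n : ℕ} (hm : 1 < m) (hn : 0 < n) {R : Type*} [Ring R]
    (hgen : AddSubgroup.closure (stdProd m n R) = ⊤) :
    (1 : R) ∈ TwoSidedIdeal.span
      {c : R | ∃ v ∈ stdVal m R, ∃ w ∈ stdVal m R, c = v * w - w * v} := by
  set I := TwoSidedIdeal.span {c : R | ∃ v ∈ stdVal m R, ∃ w ∈ stdVal m R, c = v * w - w * v}
    with hI
  let π : R →+* I.ringCon.Quotient := I.ringCon.mk'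
  have hker : ∀ x, π x = 0 ↔ x ∈ I := by
    intro x
    rw [← TwoSidedIdeal.mem_ker, TwoSidedIdeal.ker_ringCon_mk']
  have hs : Function.Surjective π := I.ringCon.mk'_surjective
  have c0 : ∀ v ∈ stdVal m R, ∀ w ∈ stdVal m R, π v * π w = π w * π v := by
    intro v hv w hw
    rw [← sub_eq_zero, ← map_mul, ← map_mul, ← map_sub, hker]
    exact TwoSidedIdeal.subset_span ⟨v, hv, w, hw, rfl⟩
  have c1 : ∀ v ∈ stdVal m R, ∀ x, π v * π x = π x * π v := by
    intro v hv x
    have := stdProd_subset_subring hgen ((Subring.centralizer {π v}).comap π) (by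
      intro w hw
      simp only [Subring.coe_comap, Set.mem_preimage, SetLike.mem_coe,
        Subring.mem_centralizer_iff, Set.mem_singleton_iff, forall_eq]
      exact c0 v hv w hw) x
    simpa only [Subring.mem_comap,
        Subring.mem_centralizer_iff, Set.mem_singleton_iff, forall_eq] using this
  have c2 : ∀ x y, π x * π y = π y * π x := by
    intro x y
    have := stdProd_subset_subring hgen ((Subring.centralizer {π x}).comap π) (by
      intro w hw
      simp only [Subring.coe_comap, Set.mem_preimage, SetLike.mem_coe,
        Subring.mem_centralizer_iff, Set.mem_singleton_iff, forall_eq]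
      exact (c1 w hw x).symm) y
    simpa only [Subring.mem_comap,
        Subring.mem_centralizer_iff, Set.mem_singleton_iff, forall_eq] using this
  have c3 : ∀ x y : I.ringCon.Quotient, x * y = y * x := by
    intro x y
    obtain ⟨x, rfl⟩ := hs x
    obtain ⟨y, rfl⟩ := hs y
    exact c2 x y
  have : AddSubgroup.closure (stdProd m n R) ≤ π.toAddMonoidHom.ker := by
    rw [AddSubgroup.closure_le]
    rintro y ⟨v, hv, rfl⟩
    obtain ⟨k, rfl⟩ : ∃ k, n = k + 1 := ⟨n - 1, by omega⟩
    have : π (v 0) = 0 := stdVal_comm hm c3 (stdVal_map π (hv 0))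
    change π _ = 0
    rw [List.ofFn_succ, List.prod_cons, map_mul, this, zero_mul]
  exact (hker 1).1 (this (hgen ▸ AddSubgroup.mem_top 1))

open scoped Pointwise in
lemma stdProd_eq_pow (m n : ℕ) (R : Type*) [Ring R] : stdProd m n R = (stdVal m R) ^ n := by
  ext x
  rw [Set.mem_pow]
  constructor
  · rintro ⟨v, hv, rfl⟩
    exact ⟨fun i => ⟨v i, hv i⟩, rfl⟩
  · rintro ⟨f, rfl⟩
    exact ⟨fun i => f i, fun i => (f i).2, rfl⟩

lemma exists_list {m n : ℕ} (hm : 0 < m) (hn : 0 < n) {R : Type*} [Ring R] {x : R}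
    (hx : x ∈ Submodule.span ℤ (stdProd m n R)) :
    ∃ l : List R, (∀ y ∈ l, y ∈ stdProd m n R) ∧ l.sum = x := by
  rw [← Submodule.mem_toAddSubgroup, Submodule.span_int_eq_addSubgroupClosure] at hx
  induction hx using AddSubgroup.closure_induction with
  | mem y hy => exact ⟨[y], by simpa using hy, by simp⟩
  | zero => exact ⟨[], by simp, by simp⟩
  | add y z _ _ hy hz =>
    obtain ⟨l, hl, rfl⟩ := hy
    obtain ⟨l', hl', rfl⟩ := hz
    refine ⟨l ++ l', ?_, by simp⟩
    intro y hy
    rcases List.mem_append.1 hy with h | h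
    · exact hl y h
    · exact hl' y h
  | neg y _ hy =>
    obtain ⟨l, hl, rfl⟩ := hy
    refine ⟨l.map (fun z => -z), ?_, ?_⟩
    · intro y hy
      obtain ⟨z, hz, rfl⟩ := List.mem_map.1 hy
      exact stdProd_neg hm hn (hl z hz)
    · exact (List.sum_neg l).symm

lemma main_bound {R : Type*} [Ring R] {m n : ℕ} (hm : 1 < m) (hn : 1 < n)
    (hgen : AddSubgroup.closure (stdProd m n R) = ⊤) :
    ∃ N : ℕ, 0 < N ∧ ∀ x : R, ∃ a : Fin N → R, (∀ i, a i ∈ stdProd m n R) ∧ x = ∑ i, a i := by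
  by_contra! hcon
  choose! x hx using hcon
  have h1 := one_mem_span_comm hm (by omega) hgen
  -- pass to the ring of sequences
  let c : R →+* (ℕ → R) := Pi.constRingHom ℕ R
  have h2 : (1 : ℕ → R) ∈ TwoSidedIdeal.span
      {d | ∃ v ∈ Submodule.span ℤ (stdVal m (ℕ → R)), ∃ w ∈ Submodule.span ℤ (stdVal m (ℕ → R)),
        d = v * w - w * v} := by
    have : TwoSidedIdeal.span
      {c : R | ∃ v ∈ stdVal m R, ∃ w ∈ stdVal m R, c = v * w - w * v} ≤
      TwoSidedIdeal.comap c (TwoSidedIdeal.span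
      {d | ∃ v ∈ Submodule.span ℤ (stdVal m (ℕ → R)), ∃ w ∈ Submodule.span ℤ (stdVal m (ℕ → R)),
        d = v * w - w * v}) := by
      rw [TwoSidedIdeal.span_le]
      rintro d ⟨v, hv, w, hw, rfl⟩
      rw [SetLike.mem_coe, TwoSidedIdeal.mem_comap]
      refine TwoSidedIdeal.subset_span ⟨c v, Submodule.subset_span (stdVal_map c hv), c w,
        Submodule.subset_span (stdVal_map c hw), ?_⟩
      rw [map_sub, map_mul, map_mul]
    have h := (TwoSidedIdeal.mem_comap c).1 (this h1)
    rwa [map_one] at h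
  have h3 := lie_pow_top _ (fun x v hv => stdVal_lie_span x v hv) h2 n hn
  rw [Submodule.span_pow, ← stdProd_eq_pow] at h3
  obtain ⟨l, hl, hsum⟩ := exists_list (m := m) (n := n) (by omega) (by omega)
    (x := fun k => x (k + 1)) (by rw [h3]; trivial)
  let l' : List R := 0 :: l.map (fun f => f l.length)
  have hlen : l'.length = l.length + 1 := by simp [l']
  have hmem : ∀ y ∈ l', y ∈ stdProd m n R := by
    intro y hy
    rcases List.mem_cons.1 hy with rfl | h
    · exact stdProd_zero (by omega) (by omega) R
    · obtain ⟨f, hf, rfl⟩ := List.mem_map.1 h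
      exact stdProd_map (Pi.evalRingHom (fun _ => R) l.length) (hl f hf)
  have hs : l'.sum = x (l.length + 1) := by
    have := congrArg (Pi.evalRingHom (fun _ : ℕ => R) l.length) hsum
    rw [map_list_sum] at this
    rw [List.sum_cons, zero_add]
    exact this
  refine hx (l.length + 1) (by omega) (fun i => l'.get (i.cast hlen.symm))
    (fun i => hmem _ (List.get_mem _ _)) ?_
  rw [← hs]
  generalize l.length + 1 = k at hlen
  subst hlen
  simp



/-- Let `R` be a unital ring, `m > 1`, `n > 1`, and let `S_m` be the
standard polynomial of degree `m`. If `R` equals the additive subgroup generated by the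
set of products of `n` values of `S_m` on `R`, then there is `N ≥ 1` such that every
`x ∈ R` is a sum of `N` such products. -/
theorem stmt_6 (R : Type*) [Ring R] (m n : ℕ) (hm : 1 < m) (hn : 1 < n)
    (hgen : AddSubgroup.closure
        {x : R | ∃ v : Fin n → R,
          (∀ i, v i ∈ {y : R | ∃ a : Fin m → R,
            y = ∑ σ : Equiv.Perm (Fin m),
              (Equiv.Perm.sign σ : ℤ) • (List.ofFn fun i => a (σ i)).prod}) ∧
          x = (List.ofFn v).prod} = ⊤) :
    ∃ N : ℕ, 0 < N ∧ ∀ x : R, ∃ a : Fin N → R,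
      (∀ i, a i ∈ {x : R | ∃ v : Fin n → R,
          (∀ i, v i ∈ {y : R | ∃ a : Fin m → R,
            y = ∑ σ : Equiv.Perm (Fin m),
              (Equiv.Perm.sign σ : ℤ) • (List.ofFn fun i => a (σ i)).prod}) ∧
          x = (List.ofFn v).prod}) ∧
      x = ∑ i, a i := by
  exact main_bound hm hn hgen
end

section
/- Let D be a division ring whose center F is a finite field with q elements, and let n ≥ 2 be an integer with q > n. Then every matrix A ∈ M_n(D) can be written as A = (BC − CB)·(EG − GE) for some matrices B, C, E, G ∈ M_n(D). -/
open Matrix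

namespace Stmt7

def IsComm {R : Type*} [Ring R] (T : R) : Prop := ∃ X Y : R, T = X * Y - Y * X

theorem IsComm.conj {R : Type*} [Ring R] {S T : R} (h : IsConj S T) (hS : IsComm S) :
    IsComm T := by
  obtain ⟨c, hc⟩ := h
  obtain ⟨X, Y, rfl⟩ := hS
  refine ⟨c * X * ↑c⁻¹, c * Y * ↑c⁻¹, ?_⟩
  have h2 : T = c * (X * Y - Y * X) * ↑c⁻¹ := by
    rw [hc.eq, Units.mul_inv_cancel_right]
  rw [h2]
  simp only [mul_sub, sub_mul, mul_assoc, Units.inv_mul_cancel_left]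

def IsProd {R : Type*} [Ring R] (T : R) : Prop := ∃ X Y : R, IsComm X ∧ IsComm Y ∧ T = X * Y

theorem isConj_of {R : Type*} [Ring R] (P Q A : R) (h1 : P * Q = 1) (h2 : Q * P = 1) :
    IsConj A (P * A * Q) := by
  refine ⟨⟨P, Q, h1, h2⟩, ?_⟩
  simp [SemiconjBy, mul_assoc, h2]

theorem conj_unit {R : Type*} [Ring R] (c : Rˣ) (A : R) : IsConj A (c * A * ↑c⁻¹) :=
  isConj_of _ _ _ (by simp) (by simp)

theorem IsProd.conj {R : Type*} [Ring R] {S T : R} (h : IsConj S T) (hS : IsProd S) :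
    IsProd T := by
  obtain ⟨c, hc⟩ := h
  obtain ⟨X, Y, hX, hY, rfl⟩ := hS
  refine ⟨c * X * ↑c⁻¹, c * Y * ↑c⁻¹, hX.conj (conj_unit c X), hY.conj (conj_unit c Y), ?_⟩
  have h2 : T = c * (X * Y) * ↑c⁻¹ := by
    rw [hc.eq, Units.mul_inv_cancel_right]
  rw [h2]
  simp only [mul_assoc, Units.inv_mul_cancel_left]

variable {D : Type*} [DivisionRing D]

/-- the shear conjugate -/
def sh {ι : Type*} [Fintype ι] [DecidableEq ι] (i j : ι) (x : D) (A : Matrix ι ι D) :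
    Matrix ι ι D := (1 + single i j x) * A * (1 - single i j x)

theorem sh_conj {ι : Type*} [Fintype ι] [DecidableEq ι] {i j : ι} (h : i ≠ j) (x : D)
    (A : Matrix ι ι D) : IsConj A (sh i j x A) := by
  have h0 : single i j x * single i j x = 0 :=
    single_mul_single_of_ne _ _ _ _ h.symm _
  apply isConj_of
  · simp [add_mul, mul_sub, h0]
  · simp [sub_mul, mul_add, h0]

theorem single_mul_apply' {ι : Type*} [Fintype ι] [DecidableEq ι] (i j : ι) (x : D)
    (A : Matrix ι ι D) (k l : ι) :
    (single i j x * A) k l = if k = i then x * A j l else 0 := by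
  by_cases h : k = i
  · subst h; simp
  · simp [h]

theorem mul_single_apply' {ι : Type*} [Fintype ι] [DecidableEq ι] (i j : ι) (x : D)
    (A : Matrix ι ι D) (k l : ι) :
    (A * single i j x) k l = if l = j then A k i * x else 0 := by
  by_cases h : l = j
  · subst h; simp
  · simp [h]

theorem sh_apply {ι : Type*} [Fintype ι] [DecidableEq ι] (i j : ι) (x : D)
    (A : Matrix ι ι D) (k l : ι) :
    sh i j x A k l = A k l + (if k = i then x * A j l else 0)
      - (if l = j then (A k i + (if k = i then x * A j i else 0)) * x else 0) := by
  unfold sh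
  rw [mul_sub, mul_one, Matrix.sub_apply, mul_single_apply', add_mul, one_mul]
  simp only [Matrix.add_apply, single_mul_apply']

theorem perm_conj {ι : Type*} [Fintype ι] [DecidableEq ι] (e : ι ≃ ι) (A : Matrix ι ι D) :
    IsConj A (A.submatrix e e) := by
  have := isConj_of ((1 : Matrix ι ι D).submatrix e id) ((1 : Matrix ι ι D).submatrix id e) A
    (by ext i j; simp [Matrix.mul_apply, Matrix.one_apply])
    (by rw [Matrix.submatrix_mul_equiv 1 1 id e id]; simp)
  convert this using 1
  ext i j
  simp [Matrix.mul_apply, Matrix.one_apply]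

theorem zero_diag_comm {ι : Type*} [Fintype ι] [DecidableEq ι] (c : ι → D)
    (hc : Function.Injective c) (hz : ∀ i x, c i * x = x * c i) (B : Matrix ι ι D)
    (hB : ∀ i, B i i = 0) : IsComm B := by
  refine ⟨diagonal c, Matrix.of fun i j => (c i - c j)⁻¹ * B i j, ?_⟩
  ext i j
  rw [Matrix.sub_apply, diagonal_mul, mul_diagonal]
  by_cases h : i = j
  · subst h; simp [hB]
  · have : c i - c j ≠ 0 := sub_ne_zero.2 (fun h' => h (hc h'))
    simp only [Matrix.of_apply]
    rw [← hz j, ← sub_mul, mul_inv_cancel_left₀ this]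

def blk {m : ℕ} (P : Matrix (Fin m) (Fin m) D) : Matrix (Fin (m+1)) (Fin (m+1)) D :=
  Matrix.of fun i j => Fin.cases (Fin.cases 1 (fun _ => 0) j)
    (fun i' => Fin.cases 0 (fun j' => P i' j') j) i

@[simp] theorem blk00 {m : ℕ} (P : Matrix (Fin m) (Fin m) D) : blk P 0 0 = 1 := rfl
@[simp] theorem blk0s {m : ℕ} (P : Matrix (Fin m) (Fin m) D) (j) : blk P 0 (Fin.succ j) = 0 := rfl
@[simp] theorem blks0 {m : ℕ} (P : Matrix (Fin m) (Fin m) D) (j) : blk P (Fin.succ j) 0 = 0 := rfl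
@[simp] theorem blkss {m : ℕ} (P : Matrix (Fin m) (Fin m) D) (i j) :
    blk P (Fin.succ i) (Fin.succ j) = P i j := rfl

theorem blk_mul {m : ℕ} (P Q : Matrix (Fin m) (Fin m) D) : blk P * blk Q = blk (P * Q) := by
  ext i j
  refine Fin.cases ?_ (fun i => ?_) i <;> refine Fin.cases ?_ (fun j => ?_) j <;>
    simp [Matrix.mul_apply, Fin.sum_univ_succ]

theorem blk_one {m : ℕ} : blk (1 : Matrix (Fin m) (Fin m) D) = 1 := by
  ext i j
  refine Fin.cases ?_ (fun i => ?_) i <;> refine Fin.cases ?_ (fun j => ?_) j <;>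
    simp [Matrix.one_apply, Fin.succ_ne_zero, (Fin.succ_ne_zero _).symm]

theorem blk_conj {m : ℕ} (A : Matrix (Fin (m+1)) (Fin (m+1)) D) (B : Matrix (Fin m) (Fin m) D)
    (h : IsConj (A.submatrix Fin.succ Fin.succ) B) :
    ∃ A', IsConj A A' ∧ A' 0 0 = A 0 0 ∧ A'.submatrix Fin.succ Fin.succ = B := by
  obtain ⟨c, hc⟩ := h
  refine ⟨blk c.1 * A * blk (c⁻¹).1, isConj_of _ _ _ ?_ ?_, ?_, ?_⟩
  · rw [blk_mul, Units.mul_inv, blk_one]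
  · rw [blk_mul, Units.inv_mul, blk_one]
  · simp [Matrix.mul_apply, Fin.sum_univ_succ]
  · have : B = c.1 * (A.submatrix Fin.succ Fin.succ) * (c⁻¹).1 := by
      rw [hc.eq, Units.mul_inv_cancel_right]
    rw [this]
    ext i j
    simp [Matrix.mul_apply, Fin.sum_univ_succ]

theorem to10 {m : ℕ} (A : Matrix (Fin (m+2)) (Fin (m+2)) D) (h : ∃ i j, i ≠ j ∧ A i j ≠ 0) :
    ∃ A', IsConj A A' ∧ A' 1 0 ≠ 0 := by
  obtain ⟨i, j, hij, hA⟩ := h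
  set e : Equiv.Perm (Fin (m+2)) := Equiv.swap 0 j * Equiv.swap 1 (Equiv.swap 0 j i) with he
  have h1 : e 1 = i := by simp [he]
  have h0 : e 0 = j := by
    have : Equiv.swap 0 j i ≠ 0 := by
      intro h
      apply hij
      have := congrArg (Equiv.swap 0 j) h
      simpa using this
    simp only [he, Equiv.Perm.mul_apply]
    rw [Equiv.swap_apply_of_ne_of_ne (by simp) this.symm]
    simp
  exact ⟨_, perm_conj e A, by simpa [h1, h0] using hA⟩

theorem clean {m : ℕ} (A : Matrix (Fin (m+2)) (Fin (m+2)) D) (h : A 1 0 ≠ 0) :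
    ∃ A', IsConj A A' ∧ A' 0 0 = 0 ∧ A' 1 0 ≠ 0 ∧ ∀ k l, k ≠ 0 → l ≠ 1 → A' k l = A k l := by
  refine ⟨_, sh_conj (i := 0) (j := 1) (by simp) (-(A 0 0) * (A 1 0)⁻¹) A, ?_, ?_, ?_⟩
  · simp [sh_apply, mul_assoc, h]
  · simpa [sh_apply] using h
  · intro k l hk hl
    simp [sh_apply, hk, hl]

theorem normal_form (m : ℕ) : ∀ (A : Matrix (Fin (m+2)) (Fin (m+2)) D),
    (∃ i j, i ≠ j ∧ A i j ≠ 0) →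
    ∃ A', IsConj A A' ∧ (∀ k, k ≠ Fin.last (m+1) → A' k k = 0) ∧
      A' (Fin.last (m+1)) (Fin.last m).castSucc ≠ 0 := by
  induction m with
  | zero =>
    intro A h
    obtain ⟨A1, c1, h1⟩ := to10 A h
    obtain ⟨A2, c2, h2, h3, -⟩ := clean A1 h1
    refine ⟨A2, c1.trans c2, ?_, h3⟩
    intro k hk
    fin_cases k
    · exact h2
    · exact absurd rfl hk
  | succ m ih =>
    intro A h
    obtain ⟨A1, c1, h1⟩ := to10 A h
    have : ∃ A2, IsConj A1 A2 ∧ A2 1 0 ≠ 0 ∧ A2 1 2 ≠ 0 := by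
      by_cases h12 : A1 1 2 = 0
      · have h02 : (0 : Fin (m+1+2)) ≠ 2 := by
          intro h; have := congrArg Fin.val h
          have h2 : ((2 : Fin (m+1+2)) : ℕ) = 2 := Nat.mod_eq_of_lt (show 2 < m+1+2 by omega)
          rw [h2] at this
          simp at this
        refine ⟨_, sh_conj h02 1 A1, ?_, ?_⟩
        · simpa [sh_apply, h02] using h1
        · simpa [sh_apply, h12] using h1
      · exact ⟨A1, IsConj.refl _, h1, h12⟩
    obtain ⟨A2, c2, h2, h12⟩ := this
    obtain ⟨A3, c3, h00, h10, hr⟩ := clean A2 h2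
    have h12' : A3 1 2 ≠ 0 := by
      rw [hr 1 2 (by simp) (by
        intro h; have := congrArg Fin.val h
        have h2 : ((2 : Fin (m+1+2)) : ℕ) = 2 := Nat.mod_eq_of_lt (show 2 < m+1+2 by omega)
        rw [h2] at this
        simp at this)]; exact h12
    obtain ⟨B, cB, hB1, hB2⟩ := ih (A3.submatrix Fin.succ Fin.succ)
      ⟨0, 1, by simp, by simpa using h12'⟩
    obtain ⟨A4, c4, h4, rfl⟩ := blk_conj A3 B cB
    refine ⟨A4, c1.trans (c2.trans (c3.trans c4)), ?_, ?_⟩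
    · intro k
      refine Fin.cases ?_ (fun k => ?_) k
      · intro _; rw [h4, h00]
      · intro hk
        exact hB1 k (fun h => hk (by rw [h, Fin.succ_last]))
    · rw [← Fin.succ_last, ← Fin.succ_last m, ← Fin.succ_castSucc]
      exact hB2

theorem tri_comm (m : ℕ) (S : ℕ → D) (h0 : S 0 = 0) (hn : S (m+2) = 0) (s : D) :
    IsComm (diagonal (fun k : Fin (m+2) => S (k+1) - S k)
      + single (Fin.last m).castSucc (Fin.last (m+1)) s) := by
  let N : Matrix (Fin (m+2)) (Fin (m+2)) D := Matrix.of fun i j => if (j : ℕ) = i + 1 then 1 else 0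
  let L : Matrix (Fin (m+2)) (Fin (m+2)) D :=
    Matrix.of fun i j => if (i : ℕ) = j + 1 then S i else 0
  let M := L + single (Fin.last (m+1)) (Fin.last (m+1)) s
  have hM : ∀ i j, M i j = (if (i : ℕ) = j + 1 then S i else 0) +
      if (i : ℕ) = m + 1 ∧ (j : ℕ) = m + 1 then s else 0 := by
    intro i j
    simp [M, L, single_apply, Fin.ext_iff, eq_comm]
  have hNM : ∀ i j, (N * M) i j = if h : (i : ℕ) + 1 < m + 2 then M ⟨i + 1, h⟩ j else 0 := by
    intro i j
    rw [Matrix.mul_apply]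
    split_ifs with h
    · rw [Finset.sum_eq_single ⟨i + 1, h⟩]
      · simp [N]
      · intro b _ hb
        have : (b : ℕ) ≠ i + 1 := fun h' => hb (Fin.ext h')
        simp [N, this]
      · simp
    · apply Finset.sum_eq_zero
      intro b _
      have : (b : ℕ) ≠ i + 1 := by omega
      simp [N, this]
  have hMN : ∀ i j, (M * N) i j = if h : 0 < (j : ℕ) then M i ⟨j - 1, by omega⟩ else 0 := by
    intro i j
    rw [Matrix.mul_apply]
    split_ifs with h
    · rw [Finset.sum_eq_single ⟨j - 1, by omega⟩]
      · have : (j : ℕ) = j - 1 + 1 := by omega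
        simp [N, ← this]
      · intro b _ hb
        have : (j : ℕ) ≠ b + 1 := fun h' => hb (Fin.ext (by simp; omega))
        simp [N, this]
      · simp
    · apply Finset.sum_eq_zero
      intro b _
      have : (j : ℕ) ≠ b + 1 := by omega
      simp [N, this]
  refine ⟨N, M, ?_⟩
  ext i j
  rw [Matrix.sub_apply, hNM, hMN, Matrix.add_apply, diagonal_apply, single_apply]
  simp only [hM, Fin.ext_iff, Fin.val_last, Fin.val_castSucc]
  obtain ⟨i, hi⟩ := i
  obtain ⟨j, hj⟩ := j
  simp only
  by_cases hij : i = j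
  · subst hij
    have e1 : ¬ (m = i ∧ m + 1 = i) := by omega
    rw [if_pos rfl, if_neg e1]
    rcases Nat.eq_zero_or_pos i with rfl | h
    · simp [h0]
    · have e2 : i = i - 1 + 1 := by omega
      have e3 : ¬ (i = m + 1 ∧ i - 1 = m + 1) := by omega
      have e4 : ¬ (i + 1 = m + 1 ∧ i = m + 1) := by omega
      rw [dif_pos h, if_pos e2, if_neg e3]
      by_cases h' : i + 1 < m + 2
      · rw [dif_pos h', if_pos rfl, if_neg e4]; simp
      · have : i + 1 = m + 2 := by omega
        rw [dif_neg h', this, hn]; simp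
  · have e1 : ¬ (i + 1 = j + 1) := by omega
    rw [if_neg hij, if_neg e1]
    have e5 : (if h : 0 < j then (if i = j - 1 + 1 then S i else 0) +
        (if i = m + 1 ∧ j - 1 = m + 1 then s else 0) else 0) = 0 := by
      split_ifs <;> first | omega | simp
    rw [e5]
    split_ifs <;> first | omega | simp

theorem isProd_of_diag (m : ℕ) (c : Fin (m+2) → D)
    (hc : Function.Injective c) (hz : ∀ i x, c i * x = x * c i)
    (A : Matrix (Fin (m+2)) (Fin (m+2)) D) (hA : ∀ i j, i ≠ j → A i j = 0) : IsProd A := by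
  have hf : ∀ i : Fin (m+2), finRotate (m+2) i ≠ i := by
    intro i
    rw [finRotate_apply]
    simp
  refine ⟨(1 : Matrix _ _ D).submatrix (finRotate (m+2)) id,
    A.submatrix (finRotate (m+2)).symm id, zero_diag_comm c hc hz _ ?_,
    zero_diag_comm c hc hz _ ?_, ?_⟩
  · intro i
    simp [Matrix.one_apply, hf i]
  · intro i
    apply hA
    intro h
    have := congrArg (finRotate (m+2)) h
    rw [Equiv.apply_symm_apply] at this
    exact hf i this.symm
  · ext i j
    simp [Matrix.mul_apply, Matrix.one_apply]

theorem isProd_all (m : ℕ) (c : Fin (m+2) → D)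
    (hc : Function.Injective c) (hz : ∀ i x, c i * x = x * c i)
    (A : Matrix (Fin (m+2)) (Fin (m+2)) D) : IsProd A := by
  by_cases hd : ∀ i j, i ≠ j → A i j = 0
  · exact isProd_of_diag m c hc hz A hd
  push Not at hd
  obtain ⟨A', hA, h0, h1⟩ := normal_form m A hd
  refine IsProd.conj hA.symm ?_
  clear hA hd A
  set q := Fin.last (m+1) with hq
  set p : Fin (m+2) := (Fin.last m).castSucc with hp
  have hpq : p ≠ q := by simp [hp, hq, Fin.ext_iff]
  -- the diagonal
  let S : ℕ → D := fun k => if h : k < m+2 then c ⟨k, h⟩ - c 0 else 0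
  have hS0 : S 0 = 0 := by simp [S]
  have hSn : S (m+2) = 0 := by simp [S]
  have hSz : ∀ k x, S k * x = x * S k := by
    intro k x
    by_cases h : k < m+2
    · simp [S, h, sub_mul, mul_sub, hz]
    · simp [S, h]
  let w : Fin (m+2) → D := fun k => S (k+1) - S k
  have hw : ∀ k, w k ≠ 0 := by
    intro k hk
    have hk' : S (k+1) = S k := sub_eq_zero.1 hk
    have h2 : S k = c k - c 0 := by simp [S]
    by_cases h : (k:ℕ)+1 < m+2
    · have h3 : S (k+1) = c ⟨k+1, h⟩ - c 0 := by simp [S, h]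
      rw [h2, h3] at hk'
      have := hc (sub_left_injective hk')
      simp [Fin.ext_iff] at this
    · have h3 : S (k+1) = 0 := by simp [S, h]
      rw [h2, h3] at hk'
      have := hc (sub_eq_zero.1 hk'.symm)
      rw [this] at h
      simp at h
  have hwz : ∀ k x, w k * x = x * w k := by
    intro k x; simp [w, sub_mul, mul_sub, hSz]
  set z : Fin (m+2) → D := fun k => (w k)⁻¹ with hzdef
  have hzz : ∀ k x, z k * x = x * z k := by
    intro k x
    exact (Commute.inv_left₀ (hwz k x)).eq
  set x := (A' q p)⁻¹ * A' q q with hx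
  set t := - z q * x with ht
  let Z : Matrix (Fin (m+2)) (Fin (m+2)) D := diagonal z + single p q t
  let X : Matrix (Fin (m+2)) (Fin (m+2)) D := diagonal w + single p q (- w p * t * w q)
  have hXZ : X * Z = 1 := by
    have e1 : diagonal w * diagonal z = (1 : Matrix (Fin (m+2)) (Fin (m+2)) D) := by
      rw [diagonal_mul_diagonal, ← diagonal_one]
      congr 1; ext k; simp [hzdef, hw]
    have e2 : single p q (- w p * t * w q) * single p q t = 0 :=
      single_mul_single_of_ne _ _ _ _ hpq.symm _
    simp only [X, Z, add_mul, mul_add, e1, e2]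
    have e3 : diagonal w * single p q t = single p q (w p * t) := by
      ext k l
      rw [diagonal_mul]
      by_cases hk : p = k
      · subst hk; simp [single_apply]
      · simp [single_apply, hk]
    have e4 : single p q (- w p * t * w q) * diagonal z = single p q (- w p * t) := by
      ext k l
      rw [mul_diagonal]
      by_cases hk : q = l
      · subst hk; simp [single_apply, hzdef, mul_assoc, hw]
      · simp [single_apply, hk]
    rw [e3, e4, add_zero, add_assoc, ← single_add]
    simp
  refine ⟨X, Z * A', tri_comm m S hS0 hSn _, ?_, ?_⟩
  · apply IsComm.conj (sh_conj hpq x (Z * A')).symm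
    apply zero_diag_comm c hc hz
    intro i
    have hZ : ∀ k l, (Z * A') k l = z k * A' k l + if k = p then t * A' q l else 0 := by
      intro k l
      simp only [Z, add_mul, Matrix.add_apply, diagonal_mul, single_mul_apply']
    rw [sh_apply]
    simp only [hZ]
    by_cases hiq : i = q
    · subst hiq
      simp [hpq.symm, hx, mul_assoc, h1]
    · by_cases hip : i = p
      · subst hip
        simp [hiq, hpq.symm, h0, ht]
        rw [hzz q, hzz q]
        simp [mul_assoc, hzz]
      · simp [hiq, hip, h0]
  · rw [← mul_assoc, hXZ, one_mul]

end Stmt7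

/-- Let `D` be a division ring whose center is a finite field with `q`
elements, and let `n ≥ 2` with `q > n`. Then every `A ∈ M_n(D)` is a product of two
additive commutators. -/
theorem stmt_7 (D : Type*) [DivisionRing D] (q n : ℕ)
    (hq : Nat.card (Subring.center D) = q) (hn : 2 ≤ n) (hqn : n < q)
    (A : Matrix (Fin n) (Fin n) D) :
    ∃ B C E G : Matrix (Fin n) (Fin n) D,
      A = (B * C - C * B) * (E * G - G * E) := by
  obtain ⟨m, rfl⟩ : ∃ m, n = m + 2 := ⟨n - 2, by omega⟩
  have hfin : Finite (Subring.center D) := Nat.finite_of_card_ne_zero (by omega)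
  let f : Fin (m+2) → Subring.center D :=
    fun i => (Finite.equivFin (Subring.center D)).symm (Fin.castLE (by omega) i)
  have hf : Function.Injective f := fun i j h => by simpa [f] using h
  obtain ⟨_, _, ⟨B, C, rfl⟩, ⟨E, G, rfl⟩, h⟩ :=
    Stmt7.isProd_all m (fun i => (f i : D)) (fun i j h => hf (Subtype.ext h))
      (fun i x => (Subring.mem_center_iff.1 (f i).2 x).symm) A
  exact ⟨B, C, E, G, h⟩
end

section
/- Let D be a division ring with center F and let n ≥ 2 be an integer such that either (i) F has at least three elements, or (ii) F has exactly two elements and n is odd. Suppose that every nonzero element d ∈ D can be written as d = [a,b]·[c,e] for some a, b, c, e ∈ D with both commutators [a,b] and [c,e] not belonging to F. Then every matrix A ∈ M_n(D) can be written as A = (BC − CB)·(EG − GE) for some B, C, E, G ∈ M_n(D). -/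
namespace S9
open Matrix

def IsComm {R : Type*} [Ring R] (X : R) : Prop := ∃ B C : R, X = B * C - C * B

def Good {R : Type*} [Ring R] (A : R) : Prop := ∃ X Y : R, IsComm X ∧ IsComm Y ∧ A = X * Y

lemma IsComm.conj {R : Type*} [Ring R] {X : R} (h : IsComm X) (u : Rˣ) :
    IsComm (u.val * X * u⁻¹.val) := by
  obtain ⟨B, C, rfl⟩ := h
  refine ⟨u.val * B * u⁻¹.val, u.val * C * u⁻¹.val, ?_⟩
  simp [mul_assoc, mul_sub, sub_mul]

lemma Good.conj {R : Type*} [Ring R] {X : R} (h : Good X) (u : Rˣ) :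
    Good (u.val * X * u⁻¹.val) := by
  obtain ⟨B, C, hB, hC, rfl⟩ := h
  refine ⟨u.val * B * u⁻¹.val, u.val * C * u⁻¹.val, hB.conj u, hC.conj u, ?_⟩
  simp [mul_assoc]

lemma Good.of_conj {R : Type*} [Ring R] {X : R} (u : Rˣ) (h : Good (u.val * X * u⁻¹.val)) :
    Good X := by
  have := h.conj u⁻¹
  simpa [mul_assoc] using this

/-- nilpotent commutators -/
def NC {R : Type*} [Ring R] (M : R) : Prop := ∃ S Y : R, IsNilpotent S ∧ M = S * Y - Y * S

section
set_option linter.unusedSectionVars false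
set_option linter.unusedSimpArgs false
variable {D : Type*} [DivisionRing D]

lemma IsComm.submatrix {ι κ : Type*} [Fintype ι] [Fintype κ] [DecidableEq ι] [DecidableEq κ]
    {M : Matrix ι ι D} (h : IsComm M) (e : κ ≃ ι) : IsComm (M.submatrix e e) := by
  obtain ⟨B, C, rfl⟩ := h
  exact ⟨B.submatrix e e, C.submatrix e e, by
    rw [submatrix_mul_equiv, submatrix_mul_equiv]; rfl⟩

lemma NC.submatrix {ι κ : Type*} [Fintype ι] [Fintype κ] [DecidableEq ι] [DecidableEq κ]
    {M : Matrix ι ι D} (h : NC M) (e : κ ≃ ι) : NC (M.submatrix e e) := by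
  obtain ⟨B, C, ⟨k, hk⟩, rfl⟩ := h
  refine ⟨B.submatrix e e, C.submatrix e e, ⟨k, ?_⟩, by
    rw [submatrix_mul_equiv, submatrix_mul_equiv]; rfl⟩
  have : ∀ k, (B.submatrix e e)^k = (B^k).submatrix e e := by
    intro k
    induction k with
    | zero => simp
    | succ k ih => rw [pow_succ, pow_succ, ih, submatrix_mul_equiv]
  rw [this, hk]; simp

lemma solve_col {ι κ : Type*} [Fintype ι] [Fintype κ] [DecidableEq ι] [DecidableEq κ]
    (S : Matrix ι ι D) (a a' : Matrix κ κ D) (ha : a' * a = 1) (k : ℕ) :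
    ∀ c : Matrix ι κ D, S ^ k * c = 0 → ∃ x : Matrix ι κ D, S * x - x * a = c := by
  induction k with
  | zero => intro c hc; exact ⟨0, by simp at hc; simp [hc]⟩
  | succ k ih =>
    intro c hc
    obtain ⟨x, hx⟩ := ih (S * c * a') (by
      rw [← Matrix.mul_assoc, ← Matrix.mul_assoc, ← pow_succ, hc, Matrix.zero_mul])
    refine ⟨x - c * a', ?_⟩
    rw [Matrix.mul_sub, Matrix.sub_mul, Matrix.mul_assoc c, ha, Matrix.mul_one, ← Matrix.mul_assoc]
    rw [← hx]; abel

lemma solve_row {ι κ : Type*} [Fintype ι] [Fintype κ] [DecidableEq ι] [DecidableEq κ]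
    (S : Matrix ι ι D) (a a' : Matrix κ κ D) (ha : a * a' = 1) (k : ℕ) :
    ∀ c : Matrix κ ι D, c * S ^ k = 0 → ∃ x : Matrix κ ι D, a * x - x * S = c := by
  induction k with
  | zero => intro c hc; exact ⟨0, by simp at hc; simp [hc]⟩
  | succ k ih =>
    intro c hc
    obtain ⟨x, hx⟩ := ih (a' * c * S) (by
      rw [Matrix.mul_assoc, ← pow_succ', Matrix.mul_assoc, hc, Matrix.mul_zero])
    refine ⟨x + a' * c, ?_⟩
    rw [Matrix.mul_add, Matrix.add_mul, ← Matrix.mul_assoc a, ha, Matrix.one_mul]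
    rw [← hx]; abel

lemma block_comm {ι κ : Type*} [Fintype ι] [Fintype κ] [DecidableEq ι] [DecidableEq κ]
    {M : Matrix ι ι D} (h : NC M) (x : Matrix ι κ D) (y : Matrix κ ι D)
    (a b a' : Matrix κ κ D) (h1 : a * a' = 1) (h2 : a' * a = 1) :
    IsComm (fromBlocks M x y (a * b - b * a)) := by
  obtain ⟨S, Y, ⟨k, hk⟩, rfl⟩ := h
  obtain ⟨x', rfl⟩ := solve_col S a a' h2 k x (by simp [hk])
  obtain ⟨y', rfl⟩ := solve_row S a a' h1 k y (by simp [hk])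
  refine ⟨fromBlocks S 0 0 a, fromBlocks Y x' y' b, ?_⟩
  simp only [fromBlocks_multiply, Matrix.zero_mul, Matrix.mul_zero, add_zero, zero_add]
  ext (i | i) (j | j) <;> simp

/-- the version with a one by one corner -/
lemma corner_comm {m : ℕ} (X : Matrix (Fin (m+1)) (Fin (m+1)) D)
    (h : NC (X.submatrix Fin.castSucc Fin.castSucc)) (a b : D) (ha : a ≠ 0)
    (hd : X (Fin.last m) (Fin.last m) = a * b - b * a) : IsComm X := by
  have := block_comm (κ := Fin 1) h (X.submatrix Fin.castSucc (fun _ => Fin.last m))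
    (X.submatrix (fun _ => Fin.last m) Fin.castSucc) (diagonal fun _ => a) (diagonal fun _ => b)
    (diagonal fun _ => a⁻¹) (by simp [ha]) (by simp [ha])
  have := this.submatrix (finSumFinEquiv (m := m) (n := 1)).symm
  convert this using 1
  ext i j
  refine Fin.lastCases ?_ (fun i => ?_) i <;> refine Fin.lastCases ?_ (fun j => ?_) j
  · have : (finSumFinEquiv (m := m) (n := 1)).symm (Fin.last m) = Sum.inr 0 := by
      rw [Equiv.symm_apply_eq]; ext; simp
    simp [this, hd]
  · have : (finSumFinEquiv (m := m) (n := 1)).symm (Fin.last m) = Sum.inr 0 := by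
      rw [Equiv.symm_apply_eq]; ext; simp
    have hj : (finSumFinEquiv (m := m) (n := 1)).symm j.castSucc = Sum.inl j := by
      rw [Equiv.symm_apply_eq]; ext; simp
    simp [this, hj]
  · have : (finSumFinEquiv (m := m) (n := 1)).symm (Fin.last m) = Sum.inr 0 := by
      rw [Equiv.symm_apply_eq]; ext; simp
    have hj : (finSumFinEquiv (m := m) (n := 1)).symm i.castSucc = Sum.inl i := by
      rw [Equiv.symm_apply_eq]; ext; simp
    simp [this, hj]
  · have hi : (finSumFinEquiv (m := m) (n := 1)).symm i.castSucc = Sum.inl i := by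
      rw [Equiv.symm_apply_eq]; ext; simp
    have hj : (finSumFinEquiv (m := m) (n := 1)).symm j.castSucc = Sum.inl j := by
      rw [Equiv.symm_apply_eq]; ext; simp
    simp [hi, hj]

/-- Shift matrices -/
def lo (D : Type*) [DivisionRing D] (m : ℕ) : Matrix (Fin m) (Fin m) D :=
  Matrix.of fun i j => if (i : ℕ) = j + 1 then 1 else 0

lemma lo_mul {m : ℕ} (Y : ℕ → ℕ → D) (i j : Fin m) :
    (lo D m * Matrix.of (fun i j : Fin m => Y i j)) i j = if (i : ℕ) = 0 then 0 else Y (i - 1) j := by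
  simp only [lo, mul_apply, of_apply, ite_mul, one_mul, zero_mul]
  split_ifs with h
  · apply Finset.sum_eq_zero; intro k _; rw [if_neg]; omega
  · rw [Finset.sum_eq_single (⟨i - 1, by omega⟩ : Fin m)]
    · rw [if_pos]; simp; omega
    · intro k _ hk; rw [if_neg]; intro h'; apply hk; ext; simp; omega
    · simp

lemma mul_lo {m : ℕ} (Y : ℕ → ℕ → D) (i j : Fin m) :
    (Matrix.of (fun i j : Fin m => Y i j) * lo D m) i j
      = if (j : ℕ) + 1 < m then Y i (j + 1) else 0 := by
  simp only [lo, mul_apply, of_apply, mul_ite, mul_one, mul_zero]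
  split_ifs with h
  · rw [Finset.sum_eq_single (⟨j + 1, h⟩ : Fin m)]
    · rw [if_pos rfl]
    · intro k _ hk; rw [if_neg]; intro h'; apply hk; ext; simpa using h'
    · simp
  · apply Finset.sum_eq_zero; intro k _; rw [if_neg]; omega

lemma lo_nil (m : ℕ) : IsNilpotent (lo D m) := by
  refine ⟨m, ?_⟩
  have : ∀ k, lo D m ^ k = Matrix.of fun i j : Fin m => if (i : ℕ) = j + k then 1 else 0 := by
    intro k
    induction k with
    | zero => ext i j; simp [Matrix.one_apply, Fin.ext_iff]
    | succ k ih =>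
      rw [pow_succ, ih]
      ext i j
      have := mul_lo (m := m) (fun i j => if i = j + k then (1:D) else 0) i j
      rw [this]
      simp only [of_apply]
      have := i.2
      split_ifs <;> first | rfl | omega
  rw [this]
  ext i j
  have := i.2
  simp; omega

/-- recursion solving the equation -/
def rec' (M : ℕ → ℕ → D) : ℕ → ℕ → D
  | _, 0 => 0
  | 0, j+1 => - M 0 j
  | i+1, j+1 => rec' M i j - M (i+1) j

lemma rec'_zero (M : ℕ → ℕ → D) (hM : ∀ i j, i < j → M i j = 0) :
    ∀ i j, i + 1 < j → rec' M i j = 0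
  | _, 0, h => by omega
  | 0, j+1, h => by rw [rec', hM _ _ (by omega), neg_zero]
  | i+1, j+1, h => by
      rw [rec', rec'_zero M hM i j (by omega), hM _ _ (by omega), sub_zero]

lemma rec'_diag (M : ℕ → ℕ → D) :
    ∀ i, rec' M i (i+1) = - ∑ t ∈ Finset.range (i+1), M t t
  | 0 => by simp [rec']
  | i+1 => by
      rw [rec', rec'_diag M i, Finset.sum_range_succ _ (i+1)]; abel

lemma nc_lower_nat {m : ℕ} (M : ℕ → ℕ → D) (hM : ∀ i j, i < j → M i j = 0)
    (hs : ∑ t ∈ Finset.range m, M t t = 0) :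
    NC (Matrix.of (fun i j : Fin m => M i j)) := by
  refine ⟨lo D m, Matrix.of (fun i j : Fin m => rec' M i j), lo_nil m, ?_⟩
  ext i j
  rw [Matrix.sub_apply, lo_mul, mul_lo, of_apply]
  obtain ⟨i, hi⟩ := i
  obtain ⟨j, hj⟩ := j
  simp only
  by_cases h : j + 1 < m
  · rw [if_pos h]
    cases i with
    | zero => simp [rec']
    | succ i => simp [rec']
  · rw [if_neg h]
    obtain rfl : m = j + 1 := by omega
    cases i with
    | zero =>
      cases j with
      | zero => simpa using hs
      | succ j => simp [hM]
    | succ i =>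
      simp only [Nat.add_sub_cancel, Nat.succ_ne_zero, if_false, sub_zero]
      rcases Nat.lt_or_ge (i+1) j with h' | h'
      · rw [rec'_zero M hM i j h', hM _ _ h']
      · obtain rfl : j = i + 1 := by omega
        rw [rec'_diag, eq_neg_iff_add_eq_zero, ← hs, Finset.sum_range_succ _ (i+1), add_comm]

lemma nc_lower {m : ℕ} (M : Matrix (Fin m) (Fin m) D) (hM : ∀ i j, i < j → M i j = 0)
    (hs : ∑ t, M t t = 0) : NC M := by
  let M' : ℕ → ℕ → D := fun i j => if h : i < m ∧ j < m then M ⟨i, h.1⟩ ⟨j, h.2⟩ else 0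
  have e : M = Matrix.of (fun i j : Fin m => M' i j) := by
    ext i j; simp [M']
  rw [e]
  apply nc_lower_nat
  · intro i j hij
    simp only [M']
    split_ifs with h
    · exact hM _ _ (by simpa using hij)
    · rfl
  · rw [← hs, Finset.sum_range]
    simp [M']

lemma nc_upper {m : ℕ} (M : Matrix (Fin m) (Fin m) D) (hM : ∀ i j, j < i → M i j = 0)
    (hs : ∑ t, M t t = 0) : NC M := by
  have := (nc_lower (M.submatrix Fin.revPerm Fin.revPerm) (by
    intro i j hij; exact hM _ _ (by simpa using hij)) (by
    rw [← hs]; exact Equiv.sum_comp Fin.revPerm (fun t => M t t))).submatrix Fin.revPerm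
  convert this using 1
  ext i j; simp


/-- upper shift -/
def up (D : Type*) [DivisionRing D] (m : ℕ) : Matrix (Fin m) (Fin m) D :=
  Matrix.of fun i j => if (j : ℕ) = i + 1 then 1 else 0

lemma up_mul {m : ℕ} (Y : ℕ → ℕ → D) (i j : Fin m) :
    (up D m * Matrix.of (fun i j : Fin m => Y i j)) i j
      = if (i : ℕ) + 1 < m then Y (i + 1) j else 0 := by
  simp only [up, mul_apply, of_apply, ite_mul, one_mul, zero_mul]
  split_ifs with h
  · rw [Finset.sum_eq_single (⟨i + 1, h⟩ : Fin m)]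
    · rw [if_pos rfl]
    · intro k _ hk; rw [if_neg]; intro h'; apply hk; ext; simpa using h'
    · simp
  · apply Finset.sum_eq_zero; intro k _; rw [if_neg]; omega

lemma mul_up {m : ℕ} (Y : ℕ → ℕ → D) (i j : Fin m) :
    (Matrix.of (fun i j : Fin m => Y i j) * up D m) i j
      = if (j : ℕ) = 0 then 0 else Y i (j - 1) := by
  simp only [up, mul_apply, of_apply, mul_ite, mul_one, mul_zero]
  split_ifs with h
  · apply Finset.sum_eq_zero; intro k _; rw [if_neg]; omega
  · rw [Finset.sum_eq_single (⟨j - 1, by omega⟩ : Fin m)]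
    · rw [if_pos]; simp; omega
    · intro k _ hk; rw [if_neg]; intro h'; apply hk; ext; simp; omega
    · simp

lemma lo_comm (m : ℕ) : IsComm (lo D m) := by
  refine ⟨diagonal fun i => ((i : ℕ) : D), lo D m, ?_⟩
  ext i j
  rw [Matrix.sub_apply, diagonal_mul, mul_diagonal]
  simp only [lo, of_apply]
  split_ifs with h
  · rw [h]; simp
  · simp

/-- recursion for the free row -/
def recu (M : ℕ → ℕ → D) : ℕ → ℕ → D
  | 0, _ => 0
  | i+1, 0 => M i 0
  | i+1, j+1 => recu M i j + M i (j+1)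

lemma good_zero_row {m : ℕ} (A : Matrix (Fin (m+1)) (Fin (m+1)) D) (h : ∀ j, A 0 j = 0) :
    Good A := by
  let M : ℕ → ℕ → D := fun i j => if h : i + 1 < m + 1 ∧ j < m + 1 then
    A ⟨i+1, h.1⟩ ⟨j, h.2⟩ else 0
  refine ⟨lo D (m+1), up D (m+1) * Matrix.of (fun i j : Fin (m+1) => recu M i j) -
    Matrix.of (fun i j : Fin (m+1) => recu M i j) * up D (m+1), lo_comm _, ⟨_, _, rfl⟩, ?_⟩
  have key : up D (m+1) * Matrix.of (fun i j : Fin (m+1) => recu M i j) -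
    Matrix.of (fun i j : Fin (m+1) => recu M i j) * up D (m+1) =
      Matrix.of (fun i j : Fin (m+1) => (fun i j => (if i + 1 < m + 1 then recu M (i+1) j else 0)
        - (if j = 0 then 0 else recu M i (j-1))) i j) := by
    ext i j
    rw [Matrix.sub_apply, up_mul, mul_up]; rfl
  rw [key]
  ext i j
  refine Eq.trans ?_ (lo_mul (fun i j => (if i + 1 < m + 1 then recu M (i+1) j else 0)
        - (if j = 0 then 0 else recu M i (j-1))) i j).symm
  refine Fin.cases ?_ (fun i => ?_) i
  · simp [h]
  · have h1 := i.2
    have h2 := j.2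
    simp only [Fin.val_succ, Nat.add_sub_cancel, Nat.succ_ne_zero, if_false]
    rw [if_pos (show (i : ℕ) + 1 < m + 1 by omega)]
    obtain ⟨j, hj⟩ := j
    cases j with
    | zero => simp [recu, M]; rfl
    | succ j => simp [recu, M]; rw [dif_pos (by omega)]; rfl

/-- block builder -/
def bl {k : ℕ} (p : D) (q r : Fin k → D) (S : Matrix (Fin k) (Fin k) D) :
    Matrix (Fin (k+1)) (Fin (k+1)) D :=
  Matrix.of fun i j => Fin.cases (Fin.cases p q j)
    (fun i => Fin.cases (r i) (fun j => S i j) j) i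

@[simp] lemma bl_00 {k : ℕ} (p : D) (q r : Fin k → D) (S : Matrix (Fin k) (Fin k) D) :
    bl p q r S 0 0 = p := rfl
@[simp] lemma bl_0s {k : ℕ} (p : D) (q r : Fin k → D) (S : Matrix (Fin k) (Fin k) D) (j) :
    bl p q r S 0 (Fin.succ j) = q j := rfl
@[simp] lemma bl_s0 {k : ℕ} (p : D) (q r : Fin k → D) (S : Matrix (Fin k) (Fin k) D) (i) :
    bl p q r S (Fin.succ i) 0 = r i := rfl
@[simp] lemma bl_ss {k : ℕ} (p : D) (q r : Fin k → D) (S : Matrix (Fin k) (Fin k) D) (i j) :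
    bl p q r S (Fin.succ i) (Fin.succ j) = S i j := rfl

lemma ext_bl {k : ℕ} {A B : Matrix (Fin (k+1)) (Fin (k+1)) D} (h1 : A 0 0 = B 0 0)
    (h2 : ∀ j : Fin k, A 0 j.succ = B 0 j.succ) (h3 : ∀ j : Fin k, A j.succ 0 = B j.succ 0)
    (h4 : ∀ i j : Fin k, A i.succ j.succ = B i.succ j.succ) : A = B := by
  ext i j
  refine Fin.cases ?_ (fun i => ?_) i <;> refine Fin.cases ?_ (fun j => ?_) j
  · exact h1
  · exact h2 j
  · exact h3 i
  · exact h4 i j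

lemma eq_bl {k : ℕ} (A : Matrix (Fin (k+1)) (Fin (k+1)) D) :
    A = bl (A 0 0) (fun j => A 0 j.succ) (fun i => A i.succ 0)
      (Matrix.of fun i j => A i.succ j.succ) := by
  apply ext_bl <;> intros <;> rfl

lemma bl_one {k : ℕ} : (1 : Matrix (Fin (k+1)) (Fin (k+1)) D) = bl 1 0 0 1 := by
  apply ext_bl <;> intros <;> simp [Matrix.one_apply, Fin.succ_ne_zero, (Fin.succ_ne_zero _).symm]

lemma bl_mul {k : ℕ} (p p' : D) (q r q' r' : Fin k → D) (S S' : Matrix (Fin k) (Fin k) D) :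
    bl p q r S * bl p' q' r' S' = bl (p * p' + q ⬝ᵥ r') (fun j => p * q' j + (q ᵥ* S') j)
      (fun i => r i * p' + (S *ᵥ r') i) (Matrix.of fun i j => r i * q' j + (S * S') i j) := by
  apply ext_bl <;> intros <;>
    simp [mul_apply, Fin.sum_univ_succ, dotProduct, vecMul, mulVec]

/-- upper unipotent unit -/
def uu {k : ℕ} (p : Dˣ) (c : Fin k → D) : (Matrix (Fin (k+1)) (Fin (k+1)) D)ˣ where
  val := bl p c 0 1
  inv := bl ↑p⁻¹ (fun j => - (↑p⁻¹ * c j)) 0 1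
  val_inv := by
    rw [bl_mul, bl_one]
    apply ext_bl <;> intros <;> simp
  inv_val := by
    rw [bl_mul, bl_one]
    apply ext_bl <;> intros <;> simp

def ll {k : ℕ} (c : Fin k → D) : (Matrix (Fin (k+1)) (Fin (k+1)) D)ˣ where
  val := bl 1 0 c 1
  inv := bl 1 0 (-c) 1
  val_inv := by
    rw [bl_mul, bl_one]
    apply ext_bl <;> intros <;> simp
  inv_val := by
    rw [bl_mul, bl_one]
    apply ext_bl <;> intros <;> simp

def dd {k : ℕ} (P : (Matrix (Fin k) (Fin k) D)ˣ) : (Matrix (Fin (k+1)) (Fin (k+1)) D)ˣ where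
  val := bl 1 0 0 P
  inv := bl 1 0 0 ↑P⁻¹
  val_inv := by
    rw [bl_mul, bl_one]
    apply ext_bl <;> intros <;> simp
  inv_val := by
    rw [bl_mul, bl_one]
    apply ext_bl <;> intros <;> simp

/-- permutation unit -/
def pp {k : ℕ} (σ : Equiv.Perm (Fin k)) : (Matrix (Fin k) (Fin k) D)ˣ where
  val := (1 : Matrix (Fin k) (Fin k) D).submatrix σ id
  inv := (1 : Matrix (Fin k) (Fin k) D).submatrix id σ
  val_inv := by
    ext i j; simp [mul_apply, Matrix.one_apply]
  inv_val := by
    have := submatrix_mul_equiv (1 : Matrix (Fin k) (Fin k) D) (1 : Matrix (Fin k) (Fin k) D)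
      id σ id
    simpa using this

lemma pp_conj {k : ℕ} (σ : Equiv.Perm (Fin k)) (A : Matrix (Fin k) (Fin k) D) :
    (pp (D := D) σ).val * A * (pp (D := D) σ)⁻¹.val
      = A.submatrix σ σ := by
  have h1 : (pp (D := D) σ).val * A = A.submatrix σ id := by
    have := submatrix_mul_equiv (1 : Matrix (Fin k) (Fin k) D) A σ (Equiv.refl _) id
    simpa [pp] using this
  rw [h1]
  have := submatrix_mul_equiv A (1 : Matrix (Fin k) (Fin k) D) σ (Equiv.refl _) σ
  change A.submatrix σ id * (1 : Matrix (Fin k) (Fin k) D).submatrix id σ = _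
  simpa using this

/-- transvections -/
def tv {k : ℕ} (i j : Fin k) (h : i ≠ j) (t : D) : (Matrix (Fin k) (Fin k) D)ˣ where
  val := 1 + Matrix.single i j t
  inv := 1 - Matrix.single i j t
  val_inv := by
    simp [mul_sub, add_mul, h, h.symm]
  inv_val := by
    simp [mul_add, sub_mul, h, h.symm]

/-- not a central scalar -/
def NS {k : ℕ} (A : Matrix (Fin k) (Fin k) D) : Prop :=
  ¬ ∃ c ∈ Subring.center D, A = diagonal fun _ => c

lemma off {k : ℕ} (A : Matrix (Fin (k+2)) (Fin (k+2)) D) (h : NS A) :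
    ∃ u : (Matrix (Fin (k+2)) (Fin (k+2)) D)ˣ, ∃ i j, i ≠ j ∧ (u.val * A * u⁻¹.val) i j ≠ 0 := by
  by_contra! hc
  have h1 : A = diagonal fun i => A i i := by
    ext i j
    by_cases hij : i = j
    · subst hij; simp
    · simpa [hij] using hc 1 i j hij
  have h2 : ∀ i j, i ≠ j → ∀ t : D, t * A j j = A i i * t := by
    intro i j hij t
    have := hc (tv i j hij t) i j hij
    have e : (tv i j hij t).val * A * (tv i j hij t)⁻¹.val =
        (1 + Matrix.single i j t) * A * (1 - Matrix.single i j t) := rfl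
    rw [e, h1] at this
    simp [mul_sub, add_mul, Matrix.mul_assoc, hij, hij.symm] at this
    exact sub_eq_zero.mp (by simpa [sub_eq_add_neg, add_comm] using this)
  apply h
  refine ⟨A 0 0, ?_, ?_⟩
  · have h01 : (0 : Fin (k+2)) ≠ 1 := by simp
    have e := h2 0 1 h01 1
    simp at e
    rw [Subring.mem_center_iff]
    intro g
    rw [← h2 0 1 h01 g, e]
  · rw [h1]
    ext i j
    by_cases hij : i = j
    · subst hij
      simp
      by_cases hi : i = 0
      · rw [hi]
      · have := h2 i 0 hi 1
        simpa using this.symm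
    · simp [hij]

/-- similarity -/
def Sim {R : Type*} [Ring R] (A B : R) : Prop := ∃ u : Rˣ, u.val * A * u⁻¹.val = B

lemma Sim.trans {R : Type*} [Ring R] {A B C : R} (h : Sim A B) (h' : Sim B C) : Sim A C := by
  obtain ⟨u, rfl⟩ := h
  obtain ⟨v, rfl⟩ := h'
  exact ⟨v * u, by simp [mul_assoc]⟩

lemma Sim.good {R : Type*} [Ring R] {A B : R} (h : Sim A B) (h' : Good B) : Good A := by
  obtain ⟨u, rfl⟩ := h
  exact h'.of_conj u

lemma Sim.isUnit {R : Type*} [Ring R] {A B : R} (h : Sim A B) (h' : IsUnit A) : IsUnit B := by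
  obtain ⟨u, rfl⟩ := h
  exact (u.isUnit.mul h').mul u⁻¹.isUnit

lemma uu_conj {k : ℕ} (c : Fin k → D) (p : D) (q r : Fin k → D) (S : Matrix (Fin k) (Fin k) D) :
    Sim (bl p q r S) (bl (p + c ⬝ᵥ r) (fun j => q j + (c ᵥ* S) j - (p + c ⬝ᵥ r) * c j) r
      (Matrix.of fun i j => S i j - r i * c j)) := by
  refine ⟨uu 1 c, ?_⟩
  change bl _ c 0 1 * _ * bl _ _ 0 1 = _
  rw [bl_mul, bl_mul]
  apply ext_bl <;> intros <;> simp [sub_eq_add_neg, add_comm]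

lemma pivot {k : ℕ} (A : Matrix (Fin (k+2)) (Fin (k+2)) D) (h : NS A) (π : D) :
    ∃ q r S, Sim A (bl π q r S) ∧ ∃ i, r i ≠ 0 := by
  obtain ⟨u, i, j, hij, hu⟩ := off A h
  set B := u.val * A * u⁻¹.val with hB
  have h1 : Sim A B := ⟨u, rfl⟩
  have h2 : Sim B (B.submatrix (Equiv.swap 0 j) (Equiv.swap 0 j)) := ⟨_, pp_conj _ _⟩
  have h3 : B.submatrix (Equiv.swap 0 j) (Equiv.swap 0 j) (Equiv.swap 0 j i) 0 ≠ 0 := by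
    simpa using hu
  have h4 : Equiv.swap 0 j i ≠ 0 := by
    intro h
    apply hij
    have := congrArg (Equiv.swap 0 j) h
    simpa using this
  obtain ⟨i', hi'⟩ := Fin.exists_succ_eq.mpr h4
  rw [← hi'] at h3
  have h5 := h1.trans h2
  rw [eq_bl (B.submatrix (Equiv.swap 0 j) (Equiv.swap 0 j))] at h5
  have h6 := h5.trans (uu_conj (Pi.single i' ((π - B.submatrix (Equiv.swap 0 j) (Equiv.swap 0 j) 0 0) *
    (B.submatrix (Equiv.swap 0 j) (Equiv.swap 0 j) i'.succ 0)⁻¹)) _ _ _ _)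
  rw [single_dotProduct, inv_mul_cancel_right₀ h3, add_sub_cancel] at h6
  exact ⟨_, _, _, h6, i', h3⟩

def schur {k : ℕ} (p : D) (q r : Fin k → D) (S : Matrix (Fin k) (Fin k) D) :
    Matrix (Fin k) (Fin k) D := Matrix.of fun i j => S i j - r i * p⁻¹ * q j

lemma schur_unit {k : ℕ} (p : D) (hp : p ≠ 0) (q r : Fin k → D) (S : Matrix (Fin k) (Fin k) D)
    (h : IsUnit (bl p q r S)) : IsUnit (schur p q r S) := by
  have e : bl p q r S = (ll (fun i => r i * p⁻¹)).val * bl p 0 0 (schur p q r S) *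
      (uu 1 (fun j => p⁻¹ * q j)).val := by
    change _ = bl _ _ _ _ * _ * bl _ _ _ _
    rw [bl_mul, bl_mul]
    apply ext_bl <;> intros <;> simp [schur, hp, mul_assoc]
  rw [e] at h
  have h' : IsUnit (bl p 0 0 (schur p q r S)) := by simpa using h
  obtain ⟨⟨a, b, h1, h2⟩, hu⟩ := h'
  simp only at hu
  subst hu
  rw [eq_bl b, bl_mul, bl_one] at h1 h2
  refine ⟨⟨schur p q r S, Matrix.of fun i j => b i.succ j.succ, ?_, ?_⟩, rfl⟩
  · ext i j
    have := congrFun (congrFun h1 i.succ) j.succ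
    simpa using this
  · ext i j
    have := congrFun (congrFun h2 i.succ) j.succ
    simpa using this

lemma pivot2 {k : ℕ} (A : Matrix (Fin (k+3)) (Fin (k+3)) D) (h : NS A) (hA : IsUnit A) (π : D)
    (hπ : π ≠ 0) : ∃ q r S, Sim A (bl π q r S) ∧ NS (schur π q r S) := by
  obtain ⟨q, r, S, hs, i, hi⟩ := pivot A h π
  by_cases hN : NS (schur π q r S)
  · exact ⟨q, r, S, hs, hN⟩
  have hu := schur_unit π hπ q r S (hs.isUnit hA)
  simp only [NS, not_not] at hN
  obtain ⟨l, hl, hS⟩ := hN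
  have hl0 : l ≠ 0 := by
    rintro rfl
    rw [hS] at hu
    simp at hu
  obtain ⟨j, hj⟩ := exists_ne i
  have hS' : ∀ a b, S a b = (if a = b then l else 0) + r a * π⁻¹ * q b := by
    intro a b
    have := congrFun (congrFun hS a) b
    simp only [schur, of_apply, diagonal_apply] at this
    rw [← this]; abel
  let c : Fin (k+2) → D := Pi.single j 1 - Pi.single i (r j * (r i)⁻¹)
  have hc : c ⬝ᵥ r = 0 := by
    simp [c, sub_dotProduct, hi]
  have h6 := hs.trans (uu_conj c _ _ _ _)
  rw [hc, add_zero] at h6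
  refine ⟨_, _, _, h6, ?_⟩
  rintro ⟨m, -, hm⟩
  have := congrFun (congrFun hm i) j
  have hcS : (c ᵥ* S) j = l := by
    simp only [c, sub_vecMul, single_vecMul, Pi.sub_apply]
    simp [hS', hj.symm, ← mul_assoc, hi, mul_add]
  simp [schur, hcS, diagonal_apply, hj.symm, hS', mul_sub, mul_add, mul_assoc, hπ] at this
  simp [hi, hl0, hπ] at this

lemma bl_diag_mul {k : ℕ} (p p' : D) (S S' : Matrix (Fin k) (Fin k) D) :
    bl p 0 0 S * bl p' 0 0 S' = bl (p * p') 0 0 (S * S') := by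
  rw [bl_mul]
  apply ext_bl <;> intros <;> simp

lemma lu : ∀ (m : ℕ) (α β : ℕ → D), (∀ i, α i ≠ 0) → (∀ i, β i ≠ 0) →
    ∀ A : Matrix (Fin (m+1)) (Fin (m+1)) D, IsUnit A → (1 ≤ m → NS A) →
    ∃ h : D, h ≠ 0 ∧ ∀ d d' : D, d * d' = h → ∃ X Y : Matrix (Fin (m+1)) (Fin (m+1)) D,
      Sim A (X * Y) ∧ (∀ i j, i < j → X i j = 0) ∧ (∀ i j, j < i → Y i j = 0) ∧
      (∀ i : Fin m, X i.castSucc i.castSucc = α i) ∧ X (Fin.last m) (Fin.last m) = d ∧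
      (∀ i : Fin m, Y i.castSucc i.castSucc = β i) ∧ Y (Fin.last m) (Fin.last m) = d' := by
  intro m
  induction m with
  | zero =>
    intro α β _ _ A hA _
    refine ⟨A 0 0, ?_, ?_⟩
    · intro h
      have : A = 0 := by ext i j; fin_cases i; fin_cases j; exact h
      rw [this] at hA
      simp at hA
    · intro d d' hd
      refine ⟨diagonal fun _ => d, diagonal fun _ => d', ⟨1, ?_⟩, ?_, ?_, ?_, ?_, ?_, ?_⟩
      · ext i j; fin_cases i; fin_cases j; simp [hd]
      · intro i j h; simp [h.ne]
      · intro i j h; simp [h.ne']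
      · intro i; exact i.elim0
      · simp
      · intro i; exact i.elim0
      · simp
  | succ m ih =>
    intro α β hα hβ A hA hN
    have hπ : α 0 * β 0 ≠ 0 := mul_ne_zero (hα 0) (hβ 0)
    obtain ⟨q, r, S, hs, hS⟩ : ∃ q r S, Sim A (bl (α 0 * β 0) q r S) ∧
        (1 ≤ m → NS (schur (α 0 * β 0) q r S)) := by
      cases m with
      | zero =>
        obtain ⟨q, r, S, hs, -⟩ := pivot A (hN le_rfl) (α 0 * β 0)
        exact ⟨q, r, S, hs, by simp⟩
      | succ m =>
        obtain ⟨q, r, S, hs, h⟩ := pivot2 A (hN (by simp)) hA (α 0 * β 0) hπ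
        exact ⟨q, r, S, hs, fun _ => h⟩
    have hu := schur_unit _ hπ q r S (hs.isUnit hA)
    obtain ⟨h, hh, H⟩ := ih (fun i => α (i+1)) (fun i => β (i+1)) (fun i => hα _) (fun i => hβ _)
      _ hu hS
    refine ⟨h, hh, ?_⟩
    intro d d' hd
    obtain ⟨X, Y, ⟨u, hXY⟩, hX, hY, h1, h2, h3, h4⟩ := H d d' hd
    refine ⟨bl (α 0) 0 (u.val *ᵥ (fun i => r i * (β 0)⁻¹)) X,
      bl (β 0) ((fun j => (α 0)⁻¹ * q j) ᵥ* u⁻¹.val) 0 Y, hs.trans ⟨dd u, ?_⟩, ?_, ?_, ?_, ?_, ?_, ?_⟩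
    · have e : bl (α 0 * β 0) q r S = bl (α 0) 0 (fun i => r i * (β 0)⁻¹) 1 *
          bl 1 0 0 (schur (α 0 * β 0) q r S) * bl (β 0) (fun j => (α 0)⁻¹ * q j) 0 1 := by
        rw [bl_mul, bl_mul]
        apply ext_bl <;> intros <;> simp [schur, hα, hβ, mul_assoc]
      have e1 : (dd u).val * bl (α 0) 0 (fun i => r i * (β 0)⁻¹) 1 =
          bl (α 0) 0 (u.val *ᵥ (fun i => r i * (β 0)⁻¹)) 1 * (dd u).val := by
        change bl _ _ _ _ * _ = _ * bl _ _ _ _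
        rw [bl_mul, bl_mul]
        apply ext_bl <;> intros <;> simp
      have e2 : bl (β 0) (fun j => (α 0)⁻¹ * q j) 0 1 * (dd u)⁻¹.val =
          (dd u)⁻¹.val * bl (β 0) ((fun j => (α 0)⁻¹ * q j) ᵥ* u⁻¹.val) 0 1 := by
        change _ * bl _ _ _ _ = bl _ _ _ _ * _
        rw [bl_mul, bl_mul]
        apply ext_bl <;> intros <;> simp
      have e3 : (dd u).val * bl 1 0 0 (schur (α 0 * β 0) q r S) * (dd u)⁻¹.val
          = bl 1 0 0 (X * Y) := by
        rw [← hXY]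
        change bl _ _ _ _ * _ * bl _ _ _ _ = _
        rw [bl_diag_mul, bl_diag_mul]
        simp
      calc _ = ((dd u).val * bl (α 0) 0 (fun i => r i * (β 0)⁻¹) 1) *
          bl 1 0 0 (schur (α 0 * β 0) q r S) * (bl (β 0) (fun j => (α 0)⁻¹ * q j) 0 1
            * (dd u)⁻¹.val) := by rw [e]; simp only [mul_assoc]
        _ = bl (α 0) 0 (u.val *ᵥ (fun i => r i * (β 0)⁻¹)) 1 * ((dd u).val *
          bl 1 0 0 (schur (α 0 * β 0) q r S) * (dd u)⁻¹.val) *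
           bl (β 0) ((fun j => (α 0)⁻¹ * q j) ᵥ* u⁻¹.val) 0 1 := by
            rw [e1, e2]; simp only [mul_assoc]
        _ = _ := by
          rw [e3, bl_mul, bl_mul, bl_mul]
          apply ext_bl <;> intros <;> simp
    · intro i j
      refine Fin.cases ?_ (fun i => ?_) i <;> refine Fin.cases ?_ (fun j => ?_) j
      · simp
      · simp
      · simp
      · simpa using hX i j
    · intro i j
      refine Fin.cases ?_ (fun i => ?_) i <;> refine Fin.cases ?_ (fun j => ?_) j
      · simp
      · simp
      · simp
      · simpa using hY i j
    · intro i
      refine Fin.cases ?_ (fun i => ?_) i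
      · simp
      · rw [← Fin.succ_castSucc, bl_ss, h1]; simp
    · rw [← Fin.succ_last, bl_ss, h2]
    · intro i
      refine Fin.cases ?_ (fun i => ?_) i
      · simp
      · rw [← Fin.succ_castSucc, bl_ss, h3]; simp
    · rw [← Fin.succ_last, bl_ss, h4]

lemma good_singular {m : ℕ} (A : Matrix (Fin (m+1)) (Fin (m+1)) D) (h : ¬ IsUnit A) : Good A := by
  obtain ⟨v, hv, hvA⟩ : ∃ v : Fin (m+1) → D, v ≠ 0 ∧ v ᵥ* A = 0 := by
    by_contra! hc
    apply h
    have hinj : Function.Injective (Matrix.toLinearMapRight' A) := by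
      rw [← LinearMap.ker_eq_bot, LinearMap.ker_eq_bot']
      intro v hv
      by_contra h0
      exact hc v h0 hv
    have hsurj := LinearMap.injective_iff_surjective.mp hinj
    let e := LinearEquiv.ofBijective (Matrix.toLinearMapRight' A) ⟨hinj, hsurj⟩
    let B := LinearMap.toMatrixRight' (e.symm : (Fin (m+1) → D) →ₗ[D] (Fin (m+1) → D))
    have hB : ∀ w, w ᵥ* B = e.symm w := by
      intro w
      have : Matrix.toLinearMapRight' B = (e.symm : (Fin (m+1) → D) →ₗ[D] (Fin (m+1) → D)) := by
        simp [B, Matrix.toLinearMapRight']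
      have := LinearMap.congr_fun this w
      simpa using this
    have hA : ∀ w, w ᵥ* A = e w := fun w => rfl
    refine ⟨⟨A, B, ?_, ?_⟩, rfl⟩
    · ext i j
      have : (Pi.single i 1 ᵥ* (A * B)) j = (Pi.single i 1 : Fin (m+1) → D) j := by
        rw [← vecMul_vecMul, hB, hA]; simp
      rw [single_vecMul] at this
      simpa [Matrix.one_apply, Pi.single_apply, eq_comm] using this
    · ext i j
      have : (Pi.single i 1 ᵥ* (B * A)) j = (Pi.single i 1 : Fin (m+1) → D) j := by
        rw [← vecMul_vecMul, hB, hA]; simp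
      rw [single_vecMul] at this
      simpa [Matrix.one_apply, Pi.single_apply, eq_comm] using this
  obtain ⟨j, hj⟩ := Function.ne_iff.mp hv
  simp only [Pi.zero_apply] at hj
  set σ := Equiv.swap 0 j
  have h1 : Sim A (A.submatrix σ σ) := ⟨_, pp_conj _ _⟩
  set C := A.submatrix σ σ with hC
  have hvC : (v ∘ σ) ᵥ* C = 0 := by
    ext b
    have := congrFun hvA (σ b)
    simp only [vecMul, dotProduct, Pi.zero_apply] at this ⊢
    rw [← this]
    exact Equiv.sum_comp σ (fun i => v i * A i (σ b))
  have hw : (v ∘ σ) 0 ≠ 0 := by simpa [σ] using hj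
  refine h1.good ?_
  apply Good.of_conj (uu (Units.mk0 _ hw) (fun i => (v ∘ σ) i.succ))
  apply good_zero_row
  intro b
  have : ∀ b, ((uu (Units.mk0 _ hw) (fun i => (v ∘ σ) i.succ)).val * C) 0 b = 0 := by
    intro b
    have := congrFun hvC b
    simp only [vecMul, dotProduct, Pi.zero_apply] at this
    rw [← this, mul_apply]
    apply Finset.sum_congr rfl
    intro x _
    congr 1
    refine Fin.cases ?_ (fun x => ?_) x <;> rfl
  rw [mul_apply]
  apply Finset.sum_eq_zero
  intro x _
  rw [this, zero_mul]

lemma good_two (hD : ∀ d : D, d ≠ 0 → ∃ a b c e : D,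
      a * b - b * a ∉ Subring.center D ∧
      c * e - e * c ∉ Subring.center D ∧
      d = (a * b - b * a) * (c * e - e * c)) (t : D) (ht : t ≠ 0) (ht1 : t ≠ 1) (ht2 : t + 1 ≠ 0)
    (A : Matrix (Fin 2) (Fin 2) D) (hA : IsUnit A) (hN : NS A) : Good A := by
  obtain ⟨q, r, S, hs, i, hi⟩ := pivot A hN 0
  have hq : q 0 ≠ 0 := by
    intro hq
    have hu := hs.isUnit hA
    obtain ⟨⟨a, b, h1, h2⟩, hu⟩ := hu
    simp only at hu
    rw [hu] at h1
    have := congrFun (congrFun h1 0) 0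
    rw [mul_apply, Fin.sum_univ_two] at this
    have e : bl 0 q r S 0 1 = q 0 := rfl
    rw [e, hq] at this
    simp at this
  obtain rfl : i = 0 := by ext; simp
  obtain ⟨l, hl, hl'⟩ : ∃ l : D, l ≠ 0 ∧ q 0 + l * (r 0)⁻¹ * S 0 0 - l * (l * (r 0)⁻¹) ≠ 0 := by
    by_contra! hc
    have key : ∀ l : D, l ≠ 0 → q 0 * r 0 + l * ((r 0)⁻¹ * S 0 0 * r 0) = l * l := by
      intro l hl
      have := hc l hl
      have := congrArg (· * r 0) this
      simp only [sub_mul, add_mul, zero_mul, mul_assoc, inv_mul_cancel₀ hi, mul_one] at this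
      simpa [mul_assoc] using sub_eq_zero.mp this
    generalize q 0 * r 0 = Q at key
    generalize (r 0)⁻¹ * S 0 0 * r 0 = s at key
    have h1 := key 1 one_ne_zero
    have hs' : s = 1 - Q := by
      rw [one_mul, one_mul] at h1
      rw [← h1]; abel
    subst hs'
    have h3 : ∀ l : D, l ≠ 0 → l ≠ 1 → l = - Q := by
      intro l h0 h1
      have h := key l h0
      have : (l - 1) * (l + Q) = 0 := by
        have : l * l - (Q + l * (1 - Q)) = 0 := by rw [h, sub_self]
        rw [← this]; noncomm_ring
      rcases mul_eq_zero.mp this with h | h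
      · exact absurd (sub_eq_zero.mp h) h1
      · exact eq_neg_of_add_eq_zero_left h
    have e1 := h3 t ht ht1
    have e2 := h3 (t+1) ht2 (by simpa using ht)
    rw [← e1] at e2
    simp at e2
  have h6 := hs.trans (uu_conj (fun _ => l * (r 0)⁻¹) _ _ _ _)
  have e1 : (0 : D) + (fun _ => l * (r 0)⁻¹) ⬝ᵥ r = l := by
    simp [dotProduct, hi]
  rw [e1] at h6
  have hq' : (fun j => q j + ((fun _ => l * (r 0)⁻¹) ᵥ* S) j - l * (l * (r 0)⁻¹)) 0 ≠ 0 := by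
    simpa [vecMul, dotProduct] using hl'
  generalize (fun j => q j + ((fun _ => l * (r 0)⁻¹) ᵥ* S) j - l * (l * (r 0)⁻¹)) = q' at h6 hq'
  generalize (Matrix.of fun i j => S i j - r i * (l * (r 0)⁻¹)) = S' at h6
  refine h6.good ?_
  obtain ⟨a, b, c, e, -, -, hh⟩ := hD (r 0 * l⁻¹ * q' 0)
    (mul_ne_zero (mul_ne_zero hi (inv_ne_zero hl)) hq')
  have hh0 : r 0 * l⁻¹ * q' 0 ≠ 0 := (mul_ne_zero (mul_ne_zero hi (inv_ne_zero hl)) hq')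
  have hd : a * b - b * a ≠ 0 := by
    intro h; rw [hh, h, zero_mul] at hh0; exact hh0 rfl
  have hd' : c * e - e * c ≠ 0 := by
    intro h; rw [hh, h, mul_zero] at hh0; exact hh0 rfl
  have ha : a ≠ 0 := by rintro rfl; simp at hd
  have hc : c ≠ 0 := by rintro rfl; simp at hd'
  refine ⟨bl 0 (fun _ => q' 0 * (c * e - e * c)⁻¹) (fun _ => 1) (Matrix.of fun _ _ => a * b - b * a),
    bl 0 (fun _ => S' 0 0 - (a * b - b * a) * (c * e - e * c)) (fun _ => (a * b - b * a)⁻¹ * r 0)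
      (Matrix.of fun _ _ => c * e - e * c), ?_, ?_, ?_⟩
  · refine corner_comm (m := 1) _ ⟨0, 0, IsNilpotent.zero, ?_⟩ a b ha rfl
    ext i j; fin_cases i; fin_cases j; simp
  · refine corner_comm (m := 1) _ ⟨0, 0, IsNilpotent.zero, ?_⟩ c e hc rfl
    ext i j; fin_cases i; fin_cases j; simp
  · generalize a * b - b * a = d at *
    generalize c * e - e * c = d' at *
    have hp : q' 0 * d'⁻¹ * (d⁻¹ * r 0) = l := by
      have : d'⁻¹ * d⁻¹ = (q' 0)⁻¹ * l * (r 0)⁻¹ := by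
        rw [← _root_.mul_inv_rev, ← hh]; simp [mul_assoc]
      calc _ = q' 0 * (d'⁻¹ * d⁻¹) * r 0 := by simp only [mul_assoc]
        _ = l := by rw [this]; simp [hq', hi, mul_assoc]
    rw [bl_mul]
    apply ext_bl
    · simp [dotProduct, hp]
    · intro j; rw [bl_0s, bl_0s]
      obtain rfl : j = 0 := by ext; simp
      simp [vecMul, dotProduct, hd', mul_assoc]
    · intro j; rw [bl_s0, bl_s0]
      obtain rfl : j = 0 := by ext; simp
      simp [mulVec, dotProduct, hd]
    · intro i j; rw [bl_ss, bl_ss]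
      obtain rfl : i = 0 := by ext; simp
      obtain rfl : j = 0 := by ext; simp
      simp [mul_apply]

lemma exists_sum (t : D) (ht : t ≠ 0) (ht2 : t + 1 ≠ 0) (m : ℕ) :
    ∀ s : D, s ≠ 0 → ∃ α : ℕ → D, (∀ i, α i ≠ 0) ∧ ∑ i ∈ Finset.range (m+1), α i = s := by
  induction m with
  | zero => intro s hs; exact ⟨fun _ => s, fun _ => hs, by simp⟩
  | succ m ih =>
    intro s hs
    obtain ⟨u, hu, hus⟩ : ∃ u : D, u ≠ 0 ∧ u ≠ s := by
      by_cases h : t = s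
      · exact ⟨t + 1, ht2, by rw [← h]; simp⟩
      · exact ⟨t, ht, h⟩
    obtain ⟨α, h1, h2⟩ := ih (s - u) (sub_ne_zero.mpr hus.symm)
    refine ⟨fun i => if i = m + 1 then u else α i, ?_, ?_⟩
    · intro i; dsimp only; split_ifs
      · exact hu
      · exact h1 i
    · rw [Finset.sum_range_succ]
      have : ∑ i ∈ Finset.range (m+1), (if i = m + 1 then u else α i) = s - u := by
        rw [← h2]
        apply Finset.sum_congr rfl
        intro i hi
        rw [if_neg]; have := Finset.mem_range.mp hi; omega
      rw [this]; simp

lemma good_big (hD : ∀ d : D, d ≠ 0 → ∃ a b c e : D,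
      a * b - b * a ∉ Subring.center D ∧
      c * e - e * c ∉ Subring.center D ∧
      d = (a * b - b * a) * (c * e - e * c)) (t : D) (ht : t ≠ 0) (ht2 : t + 1 ≠ 0) (m : ℕ)
    (A : Matrix (Fin (m+3)) (Fin (m+3)) D) (hA : IsUnit A) (hN : NS A) : Good A := by
  obtain ⟨α, hα, hsum⟩ : ∃ α : ℕ → D, (∀ i, α i ≠ 0) ∧ ∑ i ∈ Finset.range (m+2), α i = 0 := by
    obtain ⟨α, h1, h2⟩ := exists_sum t ht ht2 m (-1) (by simp)
    refine ⟨fun i => if i = m + 1 then 1 else α i, ?_, ?_⟩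
    · intro i; dsimp only; split_ifs
      · exact one_ne_zero
      · exact h1 i
    · rw [Finset.sum_range_succ]
      have : ∑ i ∈ Finset.range (m+1), (if i = m + 1 then 1 else α i) = -1 := by
        rw [← h2]
        apply Finset.sum_congr rfl
        intro i hi
        rw [if_neg]; have := Finset.mem_range.mp hi; omega
      rw [this]; simp
  obtain ⟨h, hh, H⟩ := lu (m+2) α α hα hα A hA (fun _ => hN)
  obtain ⟨a, b, c, e, -, -, hd⟩ := hD h hh
  obtain ⟨X, Y, hs, hX, hY, h1, h2, h3, h4⟩ := H _ _ hd.symm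
  have ha : a ≠ 0 := by rintro rfl; simp [hd] at hh
  have hc : c ≠ 0 := by rintro rfl; simp [hd] at hh
  refine hs.good ⟨X, Y, ?_, ?_, rfl⟩
  · refine corner_comm X (nc_lower _ ?_ ?_) a b ha h2
    · intro i j hij; exact hX _ _ (by simpa using hij)
    · rw [Finset.sum_range] at hsum; simpa [h1] using hsum
  · refine corner_comm Y (nc_upper _ ?_ ?_) c e hc h4
    · intro i j hij; exact hY _ _ (by simpa using hij)
    · rw [Finset.sum_range] at hsum; simpa [h3] using hsum

lemma good_central (hD : ∀ d : D, d ≠ 0 → ∃ a b c e : D,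
      a * b - b * a ∉ Subring.center D ∧
      c * e - e * c ∉ Subring.center D ∧
      d = (a * b - b * a) * (c * e - e * c)) {n : ℕ} (l : D) :
    Good (diagonal (fun _ : Fin n => l)) := by
  by_cases hl : l = 0
  · subst hl
    exact ⟨0, 0, ⟨0, 0, by simp⟩, ⟨0, 0, by simp⟩, by ext; simp⟩
  · obtain ⟨a, b, c, e, -, -, rfl⟩ := hD l hl
    refine ⟨diagonal fun _ => a * b - b * a, diagonal fun _ => c * e - e * c,
      ⟨diagonal fun _ => a, diagonal fun _ => b, ?_⟩,
      ⟨diagonal fun _ => c, diagonal fun _ => e, ?_⟩, ?_⟩ <;> simp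

lemma main (hD : ∀ d : D, d ≠ 0 → ∃ a b c e : D,
      a * b - b * a ∉ Subring.center D ∧
      c * e - e * c ∉ Subring.center D ∧
      d = (a * b - b * a) * (c * e - e * c)) (n : ℕ) (hn : 2 ≤ n)
    (A : Matrix (Fin n) (Fin n) D) : Good A := by
  obtain ⟨t, ht⟩ : ∃ t : D, t ∉ Subring.center D := by
    obtain ⟨a, b, c, e, h, -⟩ := hD 1 one_ne_zero
    exact ⟨_, h⟩
  have h0 : t ≠ 0 := by rintro rfl; exact ht (zero_mem _)
  have h1 : t ≠ 1 := by rintro rfl; exact ht (one_mem _)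
  have h2 : t + 1 ≠ 0 := by
    intro h
    rw [eq_neg_of_add_eq_zero_left h] at ht
    exact ht (neg_mem (one_mem _))
  by_cases hN : NS A
  · obtain ⟨m, rfl⟩ : ∃ m, n = m + 2 := ⟨n - 2, by omega⟩
    by_cases hA : IsUnit A
    · cases m with
      | zero => exact good_two hD t h0 h1 h2 A hA hN
      | succ m => exact good_big hD t h0 h2 m A hA hN
    · exact good_singular A hA
  · simp only [NS, not_not] at hN
    obtain ⟨l, -, rfl⟩ := hN
    exact good_central hD l

end
end S9


/-- Let `D` be a division ring with center `F` and `n ≥ 2` such that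
either `F` has at least three elements, or `F` has exactly two elements and `n` is odd.
If every nonzero element of `D` is a product of two noncentral commutators in `D`, then
every matrix in `M_n(D)` is a product of two additive commutators. -/
theorem stmt_9 (D : Type*) [DivisionRing D] (n : ℕ) (hn : 2 ≤ n)
    (hF : 3 ≤ Cardinal.mk (Subring.center D) ∨
      (Nat.card (Subring.center D) = 2 ∧ Odd n))
    (hD : ∀ d : D, d ≠ 0 → ∃ a b c e : D,
      a * b - b * a ∉ Subring.center D ∧
      c * e - e * c ∉ Subring.center D ∧
      d = (a * b - b * a) * (c * e - e * c))
    (A : Matrix (Fin n) (Fin n) D) :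
    ∃ B C E G : Matrix (Fin n) (Fin n) D,
      A = (B * C - C * B) * (E * G - G * E) := by
  obtain ⟨X, Y, ⟨B, C, rfl⟩, ⟨E, G, rfl⟩, h⟩ := S9.main hD n hn A
  exact ⟨B, C, E, G, h⟩
end

section
/- Let D be a division ring with center F such that every element of D is algebraic over F (i.e., for every a ∈ D there is a nonzero polynomial with coefficients in F vanishing at a), and let n ≥ 2 be an integer. Then every matrix A ∈ M_n(D) can be written as A = (BC − CB)·(EG − GE) for some B, C, E, G ∈ M_n(D). -/
namespace CommProd
open Finset

def IsComm {R : Type*} [Ring R] (M : R) : Prop := ∃ B C : R, M = B * C - C * B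

def mk {R : Type*} (n : ℕ) (f : ℕ → ℕ → R) : Matrix (Fin n) (Fin n) R :=
  Matrix.of fun i j => f i j

lemma mk_mul_apply {R : Type*} [Ring R] (n : ℕ) (f g : ℕ → ℕ → R) (i j : Fin n) :
    (mk n f * mk n g) i j = ∑ k ∈ range n, f i k * g k j := by
  rw [Matrix.mul_apply, ← Fin.sum_univ_eq_sum_range (fun k => f i k * g k j)]
  rfl

/-- Diagonal sums. -/
def dg {R : Type*} [Ring R] (f : ℕ → ℕ → R) : ℕ → ℕ → R
  | 0, _ => 0
  | i+1, 0 => f i 0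
  | i+1, j+1 => f i (j+1) + dg f i j

lemma dg_zero_of {R : Type*} [Ring R] (f : ℕ → ℕ → R) (hf : ∀ i j, j + 1 < i → f i j = 0) :
    ∀ i j, j + 2 < i → dg f i j = 0 := by
  intro i
  induction i with
  | zero => intro j hj; omega
  | succ i ih =>
    intro j hj
    cases j with
    | zero => exact hf i 0 (by omega)
    | succ j =>
      rw [dg, hf i (j+1) (by omega), ih j (by omega), add_zero]

lemma dg_one {R : Type*} [Ring R] (f : ℕ → ℕ → R) :
    ∀ j, dg f (j+1) j = ∑ k ∈ range (j+1), f k k := by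
  intro j
  induction j with
  | zero => simp [dg]
  | succ j ih => rw [dg, ih, sum_range_succ _ (j+1), add_comm]

lemma dg_two {R : Type*} [Ring R] (f : ℕ → ℕ → R) :
    ∀ j, dg f (j+2) j = ∑ k ∈ range (j+1), f (k+1) k := by
  intro j
  induction j with
  | zero => simp [dg]
  | succ j ih => rw [dg, ih, sum_range_succ _ (j+1), add_comm]

lemma dg_top {R : Type*} [Ring R] (n : ℕ) (f : ℕ → ℕ → R)
    (hf : ∀ i j, j + 1 < i → f i j = 0) (h0 : ∑ k ∈ range n, f k k = 0)
    (h1 : ∑ k ∈ range (n-1), f (k+1) k = 0) (j : ℕ) (hj : j < n) : dg f n j = 0 := by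
  rcases lt_or_ge (j+2) n with h | h
  · exact dg_zero_of f hf n j h
  · rcases (by omega : n = j + 1 ∨ n = j + 2) with rfl | rfl
    · rw [dg_one, h0]
    · rw [dg_two]; exact h1

lemma comm1 {R : Type*} [Ring R] (n : ℕ) (f : ℕ → ℕ → R)
    (hf : ∀ i j, j + 1 < i → f i j = 0) (h0 : ∑ k ∈ range n, f k k = 0)
    (h1 : ∑ k ∈ range (n-1), f (k+1) k = 0) : IsComm (mk n f) := by
  refine ⟨mk n fun i j => if j = i + 1 then 1 else 0, mk n (dg f), ?_⟩
  ext ⟨i, hi⟩ ⟨j, hj⟩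
  rw [Matrix.sub_apply, mk_mul_apply, mk_mul_apply]
  have e1 : ∑ k ∈ range n, (if k = i + 1 then (1:R) else 0) * dg f k j = dg f (i+1) j := by
    rcases (by omega : i + 1 < n ∨ n = i + 1) with h | h
    · simp [h]
    · subst h
      rw [dg_top _ f hf h0 h1 j hj]
      apply sum_eq_zero
      intro k hk
      have := mem_range.1 hk
      rw [if_neg (by omega), zero_mul]
  simp only
  rw [e1]
  cases j with
  | zero => simp [dg, mk]
  | succ j =>
    simp [dg, mk, (by omega : j < n)]

lemma comm2 {R : Type*} [Ring R] (n : ℕ) (f : ℕ → ℕ → R)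
    (hf : ∀ i j, j + 1 < i → f i j = 0) (h00 : f 0 0 = 0)
    (h0 : ∑ k ∈ range n, f (k+1) (k+1) = 0)
    (h1 : ∑ k ∈ range (n-1), f (k+2) (k+1) = 0) : IsComm (mk (n+1) f) := by
  let f' : ℕ → ℕ → R := fun i j => f (i+1) (j+1)
  let Y : ℕ → ℕ → R := fun i j => match i, j with
    | 0, j => ∑ k ∈ range (j+1), f 0 k
    | i+1, 0 => if i = 0 then - f 1 0 else 0
    | i+1, j+1 => dg f' i j
  let X : ℕ → ℕ → R := fun i j => match i, j with
    | 0, j => if j = 0 then 1 else 0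
    | i+1, j => if j = i+2 then 1 else 0
  have htop := dg_top n f' (fun i j h => hf _ _ (by omega)) h0 h1
  refine ⟨mk (n+1) X, mk (n+1) Y, ?_⟩
  ext ⟨i, hi⟩ ⟨j, hj⟩
  rw [Matrix.sub_apply, mk_mul_apply, mk_mul_apply]
  have e1 : ∀ i, i < n → ∑ k ∈ range (n+1), X (i+1) k * Y k j = Y (i+2) j := by
    intro i hi
    rcases (by omega : i + 1 < n ∨ n = i + 1) with h | h
    · simp [X]
      intro h; omega
    · subst h
      have : Y (i+2) j = 0 := by
        cases j with
        | zero => simp [Y]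
        | succ j => exact htop j (by omega)
      rw [this]
      apply sum_eq_zero
      intro k hk
      have := mem_range.1 hk
      simp only [X]
      rw [if_neg (by omega), zero_mul]
  have e0 : ∑ k ∈ range (n+1), X 0 k * Y k j = Y 0 j := by simp [X]
  have r0 : ∑ k ∈ range (n+1), Y i k * X k 0 = Y i 0 := by
    rw [sum_range_succ']; simp [X]
  have r1 : ∑ k ∈ range (n+1), Y i k * X k 1 = 0 := by
    rw [sum_range_succ']; simp [X]
  have r2 : ∀ j, j + 2 < n + 1 → ∑ k ∈ range (n+1), Y i k * X k (j+2) = Y i (j+1) := by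
    intro j hj
    rw [sum_range_succ']; simp [X]
    intro h; omega
  simp only
  rcases i with _ | i
  · rw [e0]
    rcases j with _ | _ | j
    · rw [r0]; simp [mk, h00]
    · rw [r1]; simp [mk, Y, sum_range_succ, h00]
    · rw [r2 j hj]; simp [mk, Y, sum_range_succ _ (j+2)]
  · rw [e1 i (by omega)]
    rcases j with _ | _ | j
    · rw [r0]; rcases i with _ | i
      · simp [mk, Y]
      · simp [mk, Y, hf (i+1+1) 0 (by omega)]
    · rw [r1]; simp [mk, Y, dg, f']
    · rw [r2 j hj]; simp [mk, Y, dg, f']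

/-- The commutator lemma. -/
lemma commL {R : Type*} [Ring R] (n : ℕ) (f : ℕ → ℕ → R)
    (hf : ∀ i j, j + 1 < i → f i j = 0) (h00 : f 0 0 = 0)
    (h0 : ∑ k ∈ range n, f (k+1) (k+1) = 0)
    (h1 : ∑ k ∈ range n, f (k+1) k = 0 ∨ ∑ k ∈ range n, f (k+1) k = f 1 0) :
    IsComm (mk (n+1) f) := by
  rcases h1 with h1 | h1
  · refine comm1 (n+1) _ hf ?_ h1
    rw [sum_range_succ', h0, h00, add_zero]
  · apply comm2 _ _ hf h00 h0
    cases n with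
    | zero => simp
    | succ n =>
      rw [sum_range_succ'] at h1
      simpa using h1


/-- Similarity. -/
def Sim {R : Type*} [Ring R] (A B : R) : Prop :=
  ∃ g h : R, g * h = 1 ∧ h * g = 1 ∧ B = g * A * h

lemma Sim.refl {R : Type*} [Ring R] (A : R) : Sim A A := ⟨1, 1, by simp, by simp, by simp⟩

lemma Sim.trans {R : Type*} [Ring R] {A B C : R} (h1 : Sim A B) (h2 : Sim B C) : Sim A C := by
  obtain ⟨g, h, gh, hg, rfl⟩ := h1
  obtain ⟨g', h', gh', hg', rfl⟩ := h2
  refine ⟨g' * g, h * h', ?_, ?_, by simp only [mul_assoc]⟩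
  · rw [mul_assoc, ← mul_assoc g, gh, one_mul, gh']
  · rw [mul_assoc, ← mul_assoc h', hg', one_mul, hg]

lemma Sim.symm {R : Type*} [Ring R] {A B : R} (h1 : Sim A B) : Sim B A := by
  obtain ⟨g, h, gh, hg, rfl⟩ := h1
  refine ⟨h, g, hg, gh, ?_⟩
  rw [mul_assoc, mul_assoc, mul_assoc, hg, mul_one, ← mul_assoc, hg, one_mul]

lemma Sim.isComm {R : Type*} [Ring R] {A B : R} (h1 : Sim A B) (hA : IsComm A) : IsComm B := by
  obtain ⟨g, h, gh, hg, rfl⟩ := h1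
  obtain ⟨X, Y, rfl⟩ := hA
  have key : ∀ a b : R, (g * a * h) * (g * b * h) = g * (a * b) * h := by
    intro a b
    calc (g * a * h) * (g * b * h) = g * a * (h * g) * b * h := by simp only [mul_assoc]
      _ = _ := by rw [hg]; simp only [mul_assoc, mul_one]
  refine ⟨g * X * h, g * Y * h, ?_⟩
  rw [key, key, mul_sub, sub_mul]

def Good {R : Type*} [Ring R] (A : R) : Prop := ∃ P Q : R, IsComm P ∧ IsComm Q ∧ A = P * Q

lemma Sim.good {R : Type*} [Ring R] {A B : R} (h1 : Sim A B) (hB : Good B) : Good A := by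
  obtain ⟨P, Q, hP, hQ, rfl⟩ := hB
  obtain ⟨g, h, gh, hg, e⟩ := h1.symm
  refine ⟨g * P * h, g * Q * h, Sim.isComm ⟨g, h, gh, hg, rfl⟩ hP,
    Sim.isComm ⟨g, h, gh, hg, rfl⟩ hQ, ?_⟩
  rw [e]
  calc g * (P * Q) * h = g * P * 1 * Q * h := by simp only [mul_assoc, one_mul]
    _ = g * P * (h * g) * Q * h := by rw [hg]
    _ = _ := by simp only [mul_assoc]

lemma sim_T {R : Type*} [Ring R] {n : ℕ} (A : Matrix (Fin n) (Fin n) R) (p : Fin n)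
    (x : Fin n → R) (hx : x p = 0) :
    Sim A (Matrix.of fun i j => (A i j + x i * A p j) -
      if j = p then ∑ k, (A i k + x i * A p k) * x k else 0) := by
  let E : Matrix (Fin n) (Fin n) R := Matrix.of fun i j => if j = p then x i else 0
  have hE : E * E = 0 := by
    ext i j
    rw [Matrix.mul_apply]
    simp [E, hx]
  have hB : (1 + E) * A = Matrix.of fun i j => A i j + x i * A p j := by
    rw [add_mul, one_mul]
    ext i j
    rw [Matrix.add_apply, Matrix.mul_apply]
    simp [E]
  refine ⟨1 + E, 1 - E, ?_, ?_, ?_⟩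
  · rw [add_mul, mul_sub, mul_sub, hE]; simp
  · rw [sub_mul, mul_add, mul_add, hE]; simp
  · rw [hB, mul_sub, mul_one]
    ext i j
    rw [Matrix.sub_apply, Matrix.mul_apply]
    simp [E]

lemma sim_perm {R : Type*} [Ring R] {n : ℕ} (A : Matrix (Fin n) (Fin n) R)
    (σ : Equiv.Perm (Fin n)) : Sim A (A.submatrix σ σ) := by
  refine ⟨(1 : Matrix (Fin n) (Fin n) R).submatrix σ id,
    (1 : Matrix (Fin n) (Fin n) R).submatrix id σ, ?_, ?_, ?_⟩
  · ext i j
    rw [Matrix.mul_apply]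
    simp [Matrix.one_apply]
  · ext i j
    rw [Matrix.mul_apply]
    have := Equiv.sum_comp σ (fun k => (1 : Matrix (Fin n) (Fin n) R) i k *
      (1 : Matrix (Fin n) (Fin n) R) k j)
    refine this.trans ?_
    rw [← Matrix.mul_apply, one_mul]
  · ext i j
    simp [Matrix.mul_apply, Matrix.one_apply]

lemma sim_diag {D : Type*} [DivisionRing D] (n : ℕ) (f : ℕ → ℕ → D) (d : ℕ → D)
    (hd : ∀ i, d i ≠ 0) : Sim (mk n f) (mk n fun i j => d i * f i j * (d j)⁻¹) := by
  refine ⟨Matrix.diagonal fun i => d i, Matrix.diagonal fun i => (d i)⁻¹, ?_, ?_, ?_⟩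
  · rw [Matrix.diagonal_mul_diagonal]; simp [hd]
  · rw [Matrix.diagonal_mul_diagonal]; simp [hd]
  · ext i j
    simp [mk]

lemma hess_elim {D : Type*} [DivisionRing D] {n : ℕ} (B : Matrix (Fin n) (Fin n) D) (k : ℕ)
    (c q : Fin n) (hc : (c : ℕ) = k) (hq : (q : ℕ) = k + 1)
    (hB : ∀ i j : Fin n, (j : ℕ) < k → (j : ℕ) + 1 < i → B i j = 0) (h : B q c ≠ 0) :
    ∃ C, Sim B C ∧ (∀ i j : Fin n, (j : ℕ) < k + 1 → (j : ℕ) + 1 < i → C i j = 0) ∧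
      (∀ i j : Fin n, (i : ℕ) < k + 2 → (j : ℕ) < k + 1 → C i j = B i j) := by
  let x : Fin n → D := fun i => if k + 1 < (i : ℕ) then - B i c * (B q c)⁻¹ else 0
  have hx : x q = 0 := by simp [x, hq]
  refine ⟨_, sim_T B q x hx, ?_, ?_⟩
  · intro i j hj hij
    have hjq : j ≠ q := by rintro rfl; omega
    simp only [Matrix.of_apply, hjq, if_false, sub_zero]
    rcases (by omega : (j : ℕ) < k ∨ (j : ℕ) = k) with h1 | h1
    · rw [hB i j h1 hij, hB q j h1 (by omega)]; simp
    · have : j = c := Fin.ext (by omega)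
      subst this
      simp only [x]
      rw [if_pos (by omega), mul_assoc, inv_mul_cancel₀ h]; simp
  · intro i j hi hj
    have hjq : j ≠ q := by rintro rfl; omega
    have : x i = 0 := by simp only [x]; rw [if_neg (by omega)]
    simp [hjq, this]

lemma hess {D : Type*} [DivisionRing D] {m : ℕ} (A : Matrix (Fin (m+2)) (Fin (m+2)) D)
    (hA : A 1 0 ≠ 0) (k : ℕ) :
    ∃ B, Sim A B ∧ B 1 0 ≠ 0 ∧
      ∀ i j : Fin (m+2), (j : ℕ) < k → (j : ℕ) + 1 < i → B i j = 0 := by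
  induction k with
  | zero => exact ⟨A, Sim.refl A, hA, by intro i j h; omega⟩
  | succ k ih =>
    obtain ⟨B, hAB, h10, hB⟩ := ih
    by_cases hk : m + 2 ≤ k + 1
    · refine ⟨B, hAB, h10, ?_⟩
      intro i j hj hij
      exact hB i j (by omega) hij
    let c : Fin (m+2) := ⟨k, by omega⟩
    let q : Fin (m+2) := ⟨k+1, by omega⟩
    by_cases hz : ∀ i : Fin (m+2), k + 1 < (i : ℕ) → B i c = 0
    · refine ⟨B, hAB, h10, ?_⟩
      intro i j hj hij
      rcases (by omega : (j : ℕ) < k ∨ (j : ℕ) = k) with h1 | h1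
      · exact hB i j h1 hij
      · have : j = c := Fin.ext h1
        subst this
        exact hz i (by omega)
    push Not at hz
    obtain ⟨p, hp, hpc⟩ := hz
    have v1 : ((1 : Fin (m+2)) : ℕ) = 1 := by simp
    have v0 : ((0 : Fin (m+2)) : ℕ) = 0 := by simp
    by_cases hqc : B q c = 0
    · have hk0 : k ≠ 0 := by
        rintro rfl
        apply h10
        rw [← hqc]
        congr 1
      let σ := Equiv.swap q p
      have hσ : ∀ i : Fin (m+2), (i : ℕ) < k + 1 → σ i = i := by
        intro i hi
        apply Equiv.swap_apply_of_ne_of_ne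
        · rintro rfl; simp [q] at hi
        · rintro rfl; omega
      have hσ2 : ∀ i : Fin (m+2), k + 1 ≤ (i : ℕ) → k + 1 ≤ (σ i : ℕ) := by
        intro i hi
        by_contra hcon
        have := hσ (σ i) (by omega)
        have := σ.injective this
        rw [this] at hcon; omega
      obtain ⟨C, hC1, hC2, hC3⟩ := hess_elim (B.submatrix σ σ) k c q rfl rfl (by
          intro i j hj hij
          rw [Matrix.submatrix_apply, hσ j (by omega)]
          apply hB _ _ hj
          rcases lt_or_ge (i : ℕ) (k+1) with h | h
          · rw [hσ i h]; exact hij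
          · have := hσ2 i h; omega) (by
          rw [Matrix.submatrix_apply, hσ c (by simp [c])]
          simpa [σ] using hpc)
      refine ⟨C, (hAB.trans (sim_perm B σ)).trans hC1, ?_, hC2⟩
      rw [hC3 _ _ (by omega) (by omega), Matrix.submatrix_apply, hσ _ (by omega),
        hσ _ (by omega)]
      exact h10
    · obtain ⟨C, hC1, hC2, hC3⟩ := hess_elim B k c q rfl rfl hB hqc
      refine ⟨C, hAB.trans hC1, ?_, hC2⟩
      rw [hC3 _ _ (by omega) (by omega)]
      exact h10

lemma hess_fun {D : Type*} [DivisionRing D] {m : ℕ} (A : Matrix (Fin (m+2)) (Fin (m+2)) D)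
    (hA : A 1 0 ≠ 0) :
    ∃ f : ℕ → ℕ → D, Sim A (mk (m+2) f) ∧ f 1 0 ≠ 0 ∧ ∀ i j, j + 1 < i → f i j = 0 := by
  obtain ⟨B, h1, h2, h3⟩ := hess A hA (m+2)
  refine ⟨fun i j => if h : i < m + 2 ∧ j < m + 2 then B ⟨i, h.1⟩ ⟨j, h.2⟩ else 0, ?_, ?_, ?_⟩
  · convert h1
    ext i j
    simp [mk]
  · simpa using h2
  · intro i j hij
    dsimp only
    split_ifs with h
    · exact h3 _ _ h.2 hij
    · rfl

open Classical in
/-- Alternating partial sums. -/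
noncomputable def ps {D : Type*} [Ring D] (z : ℕ → Prop) : ℕ → D
  | 0 => 0
  | i+1 => if z i then ps z i else 1 - ps z i

lemma ps_mem {D : Type*} [Ring D] (z : ℕ → Prop) (i : ℕ) : (ps z i : D) = 0 ∨ (ps z i : D) = 1 := by
  induction i with
  | zero => left; rfl
  | succ i ih =>
    rw [ps]
    split_ifs
    · exact ih
    · rcases ih with h | h <;> simp [h]

lemma core {D : Type*} [DivisionRing D] {m : ℕ} (A : Matrix (Fin (m+2)) (Fin (m+2)) D)
    (hA : A 1 0 ≠ 0) (r : ℕ → D) (hr : ∀ i, r i ≠ 0) :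
    ∃ f : ℕ → ℕ → D, Sim A (mk (m+2) f) ∧ f 1 0 ≠ 0 ∧ (∀ i j, j + 1 < i → f i j = 0) ∧
      (∑ k ∈ range (m+1), r (k+1) * f (k+1) k = 0 ∨
        ∑ k ∈ range (m+1), r (k+1) * f (k+1) k = r 1 * f 1 0) ∧
      ∑ k ∈ range (m+1), r (k+1) * f (k+1) (k+1) = 0 := by
  classical
  obtain ⟨f, hs, h10, hf⟩ := hess_fun A hA
  let z : ℕ → Prop := fun i => f (i+1) i = 0
  let τ : ℕ → D := fun i => ps z (i+1) - ps z i
  have hτ0 : ∀ i, z i → τ i = 0 := by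
    intro i hi
    simp [τ, ps, hi]
  have hτ1 : ∀ i, ¬ z i → τ i ≠ 0 := by
    intro i hi
    rcases ps_mem (D := D) z i with h | h <;> simp [τ, ps, hi, h]
  have hτ : τ 0 = 1 := by
    have : ¬ z 0 := h10
    simp [τ, ps, this]
  have hτs : ∑ k ∈ range (m+1), τ k = ps z (m+1) := by
    rw [sum_range_sub]; simp [ps]
  let d : ℕ → D := fun i => Nat.rec 1
    (fun i di => if z i then 1 else (r (i+1))⁻¹ * τ i * di * (f (i+1) i)⁻¹) i
  have dsucc : ∀ i, d (i+1) = if z i then 1 else (r (i+1))⁻¹ * τ i * d i * (f (i+1) i)⁻¹ :=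
    fun i => rfl
  have hd : ∀ i, d i ≠ 0 := by
    intro i
    induction i with
    | zero => exact one_ne_zero
    | succ i ih =>
      rw [dsucc]
      split_ifs with h
      · exact one_ne_zero
      · exact mul_ne_zero (mul_ne_zero (mul_ne_zero (inv_ne_zero (hr _)) (hτ1 i h)) ih)
          (inv_ne_zero h)
  have hs2 := hs.trans (sim_diag (m+2) f d hd)
  set f2 : ℕ → ℕ → D := fun i j => d i * f i j * (d j)⁻¹ with hf2
  have sub2 : ∀ i, r (i+1) * f2 (i+1) i = τ i := by
    intro i
    by_cases h : z i
    · have h' : f (i+1) i = 0 := h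
      simp [f2, h', hτ0 i h]
    · have h' : f (i+1) i ≠ 0 := h
      simp only [f2]
      rw [dsucc, if_neg h]
      simp only [mul_assoc]
      rw [mul_inv_cancel_left₀ (hr _), inv_mul_cancel_left₀ h', mul_inv_cancel₀ (hd i), mul_one]
  have hess2 : ∀ i j, j + 1 < i → f2 i j = 0 := by
    intro i j h
    simp [f2, hf i j h]
  have h102 : f2 1 0 ≠ 0 := by
    intro h
    have := sub2 0
    rw [hτ] at this
    simp [h] at this
  clear_value f2
  let S := ∑ k ∈ range (m+1), r (k+1) * f2 (k+1) (k+1)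
  let s := (r 1 * f2 1 0)⁻¹ * S
  let b : ℕ → ℕ → D := fun i j => f2 i j + if i = 0 then s * f2 1 j else 0
  let f3 : ℕ → ℕ → D := fun i j => b i j - if j = 1 then b i 0 * s else 0
  have hs3 : Sim (mk (m+2) f2) (mk (m+2) f3) := by
    have := sim_T (mk (m+2) f2) 1 (Pi.single 0 s) (by simp)
    convert this using 1
    ext i j
    have e2 : j = 1 ↔ (j : ℕ) = 1 := by rw [Fin.ext_iff]; simp
    have e3 : ∀ i j : Fin (m+2), mk (m+2) f2 i j + (Pi.single 0 s : Fin (m+2) → D) i * mk (m+2) f2 1 j = b i j := by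
      intro i j
      have e1 : (Pi.single 0 s : Fin (m+2) → D) i = if (i : ℕ) = 0 then s else 0 := by
        rw [Pi.single_apply]; simp only [Fin.ext_iff, Fin.val_zero]
      rw [e1]
      simp [b, mk]
    simp only [Matrix.of_apply, e3, e2]
    have e4 : ∑ k : Fin (m+2), b i k * (Pi.single 0 s : Fin (m+2) → D) k = b i 0 * s := by
      rw [Finset.sum_eq_single 0] <;> simp +contextual
    rw [e4]; rfl
  have key : ∀ i j, i ≠ 0 → j ≠ 1 → f3 i j = f2 i j := by
    intro i j hi hj
    simp [f3, b, hi, hj]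
  have hsub3 : ∀ i, f3 (i+1) i = f2 (i+1) i := by
    intro i
    rcases eq_or_ne i 1 with rfl | h
    · simp [f3, b, hess2 2 0 (by omega)]
    · exact key _ _ (by omega) h
  refine ⟨f3, hs2.trans hs3, ?_, ?_, ?_, ?_⟩
  · rw [key 1 0 (by omega) (by omega)]; exact h102
  · intro i j hij
    rcases eq_or_ne j 1 with rfl | h
    · have hi0 : i ≠ 0 := by omega
      simp [f3, b, hi0, hess2 i 0 (by omega), hess2 i 1 (by omega)]
    · rw [key i j (by omega) h, hess2 i j hij]
  · simp only [hsub3, sub2]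
    rw [hτs, hτ]
    exact ps_mem z _
  · rw [sum_range_succ']
    have e : ∀ k, f3 (k+1+1) (k+1+1) = f2 (k+1+1) (k+1+1) :=
      fun k => key _ _ (by omega) (by omega)
    have hS : S = ∑ k ∈ range m, r (k+1+1) * f2 (k+1+1) (k+1+1) + r 1 * f2 1 1 := by
      simp only [S]; rw [sum_range_succ']
    simp only [e]
    have e11 : f3 1 1 = f2 1 1 - f2 1 0 * s := by simp [f3, b]
    have : r 1 * (f2 1 0 * s) = S := by
      simp only [s]
      rw [← mul_assoc, mul_inv_cancel_left₀ (mul_ne_zero (hr 1) h102)]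
    rw [zero_add, e11, mul_sub, this, hS]
    abel

lemma good_of {D : Type*} [DivisionRing D] {m : ℕ} (A : Matrix (Fin (m+2)) (Fin (m+2)) D)
    (hA : A 1 0 ≠ 0) (r : ℕ → D) (hr : ∀ i, r i ≠ 0)
    (hsum : ∑ k ∈ range (m+2), (r k)⁻¹ = 0) : Good A := by
  obtain ⟨f, hs, h10, hf, h1, h2⟩ := core A hA r hr
  apply hs.good
  let ρ := - (r 0 * f 0 0) * (f 1 0)⁻¹
  refine ⟨mk (m+2) fun i j => (if j = i then (r i)⁻¹ else 0) -
      if j = 1 then (if i = 0 then (r 0)⁻¹ * ρ * (r 1)⁻¹ else 0) else 0,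
    mk (m+2) fun i j => r i * f i j + if i = 0 then ρ * f 1 j else 0, ?_, ?_, ?_⟩
  · apply comm1
    · intro i j hij
      have hi0 : i ≠ 0 := by omega
      have hji : j ≠ i := by omega
      simp [hi0, hji]
    · have : ∀ k : ℕ, (if k = 1 then (if k = 0 then (r 0)⁻¹ * ρ * (r 1)⁻¹ else 0) else 0) = 0 := by
        intro k
        split_ifs <;> first | rfl | omega
      refine (sum_congr rfl fun k _ => ?_).trans hsum
      rw [this, if_pos rfl, sub_zero]
    · apply sum_eq_zero
      intro k hk
      simp
  · apply commL (m+1)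
    · intro i j hij
      have hi0 : i ≠ 0 := by omega
      simp [hf i j hij, hi0]
    · simp [ρ, h10]
    · simpa using h2
    · simpa using h1
  · ext ⟨i, hi⟩ ⟨j, hj⟩
    rw [mk_mul_apply]
    simp only [sub_mul, sum_sub_distrib, ite_mul, zero_mul, sum_ite_eq', mem_range, hi, if_true,
      (by omega : 1 < m + 2)]
    rcases eq_or_ne i 0 with rfl | h
    · simp only [if_true, mk, Matrix.of_apply, one_ne_zero, if_false, add_zero, mul_add]
      rw [inv_mul_cancel_left₀ (hr 0), mul_assoc _ _ (r 1 * _), inv_mul_cancel_left₀ (hr 1)]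
      simp only [mul_assoc]
      abel
    · simp [h, mk, hr]

lemma exists_perm {n : ℕ} (p q i j : Fin n) (hpq : p ≠ q) (hij : i ≠ j) :
    ∃ σ : Equiv.Perm (Fin n), σ p = i ∧ σ q = j := by
  let τ := Equiv.swap p i
  have h1 : τ p = i := Equiv.swap_apply_left p i
  have h2 : τ q ≠ i := by
    rw [← h1]; intro h; exact hpq (τ.injective h).symm
  refine ⟨τ.trans (Equiv.swap (τ q) j), ?_, ?_⟩
  · rw [Equiv.trans_apply, h1]
    exact Equiv.swap_apply_of_ne_of_ne h2.symm hij
  · rw [Equiv.trans_apply, Equiv.swap_apply_left]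

lemma sim_T_single {R : Type*} [Ring R] {n : ℕ} (A : Matrix (Fin n) (Fin n) R) (a p : Fin n)
    (hap : a ≠ p) (t : R) :
    ∃ C, Sim A C ∧ (∀ i j, j ≠ p → C i j = A i j + if i = a then t * A p j else 0) ∧
      C a p = A a p + t * A p p - (A a a + t * A p a) * t := by
  refine ⟨_, sim_T A p (Pi.single a t) (by simp [hap.symm]), ?_, ?_⟩
  · intro i j hj
    simp [hj, Pi.single_apply]
  · simp only [Matrix.of_apply, if_true, Pi.single_eq_same]
    rw [Finset.sum_eq_single a]
    · simp
    · intro b _ hb; simp [hb]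
    · simp

lemma scalar_or {D : Type*} [DivisionRing D] {n : ℕ} (A : Matrix (Fin n) (Fin n) D)
    (p q : Fin n) (hpq : p ≠ q) :
    (∃ a : D, (∀ x, a * x = x * a) ∧ A = Matrix.diagonal fun _ => a) ∨
    ∃ B, Sim A B ∧ B p q ≠ 0 := by
  have main : (∃ a : D, (∀ x, a * x = x * a) ∧ A = Matrix.diagonal fun _ => a) ∨
      ∃ B, Sim A B ∧ ∃ i j, i ≠ j ∧ B i j ≠ 0 := by
    by_cases h1 : ∃ i j, i ≠ j ∧ A i j ≠ 0
    · exact Or.inr ⟨A, Sim.refl A, h1⟩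
    push Not at h1
    have key : ∀ i j, i ≠ j → ∀ t : D, t * A j j ≠ A i i * t →
        ∃ B, Sim A B ∧ ∃ i j, i ≠ j ∧ B i j ≠ 0 := by
      intro i j hij t ht
      obtain ⟨C, hC, -, hC2⟩ := sim_T_single A i j hij t
      refine ⟨C, hC, i, j, hij, ?_⟩
      rw [hC2, h1 i j hij, h1 j i hij.symm, mul_zero, add_zero, zero_add]
      exact sub_ne_zero.2 ht
    by_cases h2 : ∀ i j, i ≠ j → ∀ t : D, t * A j j = A i i * t
    · left
      have hd : ∀ i j, A j j = A i i := by
        intro i j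
        by_cases hij : i = j
        · rw [hij]
        · simpa using h2 i j hij 1
      refine ⟨A p p, ?_, ?_⟩
      · intro x
        rw [← h2 p q hpq x, hd p q]
      · ext i j
        by_cases hij : i = j
        · subst hij; simp [hd p i]
        · simp [hij, h1 i j hij]
    · push Not at h2
      obtain ⟨i, j, hij, t, ht⟩ := h2
      exact Or.inr (key i j hij t ht)
  rcases main with h | ⟨B, hB, i, j, hij, hne⟩
  · exact Or.inl h
  · obtain ⟨σ, h1, h2⟩ := exists_perm p q i j hpq hij
    refine Or.inr ⟨_, hB.trans (sim_perm B σ), ?_⟩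
    rwa [Matrix.submatrix_apply, h1, h2]

/-- Signed cycle. -/
def cyc (m : ℕ) (i j : ℕ) : ℤ :=
  if i = j + 1 then (-1) ^ j else if i = 0 ∧ j = m + 1 then 1 else 0

lemma cyc_comm (m : ℕ) : IsComm (mk (m+2) (cyc m)) := by
  apply commL (m+1)
  · intro i j hij
    rw [cyc, if_neg (by omega), if_neg (by omega)]
  · simp [cyc]
  · apply sum_eq_zero
    intro k _
    simp [cyc]
  · have : ∀ k, cyc m (k+1) k = (-1)^k := by intro k; simp [cyc]
    simp only [this]
    rw [neg_one_geom_sum]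
    split_ifs <;> simp

lemma cyc_inv (m : ℕ) : mk (m+2) (cyc m) * (mk (m+2) (cyc m)).transpose = 1 := by
  ext ⟨i, hi⟩ ⟨j, hj⟩
  have : (mk (m+2) (cyc m)).transpose = mk (m+2) fun i j => cyc m j i := rfl
  rw [this, mk_mul_apply]
  simp only
  rcases i with _ | i
  · rw [Finset.sum_eq_single (m+1)]
    · rcases j with _ | j
      · simp [cyc]
      · have : j ≠ m + 1 := by omega
        simp [cyc, this, Matrix.one_apply]
    · intro b _ hb
      simp [cyc, hb]
    · intro h; simp at h
  · rw [Finset.sum_eq_single i]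
    · rcases j with _ | j
      · have : i ≠ m + 1 := by omega
        simp [cyc, this, Matrix.one_apply]
      · by_cases hij : i = j
        · subst hij
          simp [cyc, ← mul_pow]
        · have : j ≠ i := Ne.symm hij
          simp [cyc, this, hij, Matrix.one_apply]
    · intro b _ hb
      have : i ≠ b := Ne.symm hb
      simp [cyc, this]
    · intro h
      have := mt (Finset.mem_range.2) h
      omega

lemma good_scalar {D : Type*} [DivisionRing D] (m : ℕ) (a : D) (ha : ∀ x, a * x = x * a) :
    Good (Matrix.diagonal fun _ : Fin (m+2) => a) := by
  obtain ⟨X, Y, h⟩ := cyc_comm m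
  let φ : Matrix (Fin (m+2)) (Fin (m+2)) ℤ →+* Matrix (Fin (m+2)) (Fin (m+2)) D :=
    (Int.castRingHom D).mapMatrix
  let c : Matrix (Fin (m+2)) (Fin (m+2)) D := Matrix.diagonal fun _ => a
  have hc : ∀ M : Matrix (Fin (m+2)) (Fin (m+2)) D, c * M = M * c := by
    intro M
    ext i j
    simp [c, ha]
  refine ⟨φ (mk (m+2) (cyc m)), φ (mk (m+2) (cyc m)).transpose * c, ⟨φ X, φ Y, ?_⟩,
    ⟨φ Y.transpose, φ X.transpose * c, ?_⟩, ?_⟩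
  · rw [h, map_sub, map_mul, map_mul]
  · rw [h, Matrix.transpose_sub, Matrix.transpose_mul, Matrix.transpose_mul, map_sub, map_mul,
      map_mul, sub_mul, mul_assoc, mul_assoc, mul_assoc, hc]
  · rw [← mul_assoc, ← map_mul, cyc_inv, map_one, one_mul]

lemma sim_trace {K : Type*} [Field K] {n : ℕ} {A B : Matrix (Fin n) (Fin n) K} (h : Sim A B) :
    B.trace = A.trace := by
  obtain ⟨g, h, gh, hg, rfl⟩ := h
  rw [Matrix.trace_mul_comm, ← mul_assoc, hg, one_mul]

lemma mk_trace {K : Type*} [Field K] (n : ℕ) (f : ℕ → ℕ → K) :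
    (mk n f).trace = ∑ k ∈ range n, f k k := by
  rw [← Fin.sum_univ_eq_sum_range (fun k => f k k)]; rfl

lemma trace_zero_comm {K : Type*} [Field K] {m : ℕ} (A : Matrix (Fin (m+2)) (Fin (m+2)) K)
    (h : A.trace = 0) : IsComm A := by
  rcases scalar_or A 1 0 (by simp) with ⟨a, -, rfl⟩ | ⟨B, hB, hne⟩
  · have e : (Matrix.diagonal fun _ : Fin (m+2) => a) = mk (m+2) fun i j => if i = j then a else 0 := by
      ext i j
      simp [mk, Matrix.diagonal_apply, Fin.ext_iff]
    rw [e] at h ⊢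
    rw [mk_trace] at h
    apply comm1 _ _ _ h
    · simp
    · intro i j hij
      rw [if_neg (by omega)]
  · obtain ⟨f, hs, h10, hf, h1, h2⟩ := core B hne (fun _ => 1) (fun _ => one_ne_zero)
    simp only [one_mul] at h1 h2
    have hs' := hB.trans hs
    have ht := sim_trace hs'
    rw [h, mk_trace, sum_range_succ', h2, zero_add] at ht
    exact hs'.symm.isComm (commL (m+1) f hf ht h2 h1)

lemma good_two {K : Type*} [Field K] (h2 : ∀ x : K, x = 0 ∨ x = 1) {m : ℕ} (hm : Even m)
    (A : Matrix (Fin (m+1+2)) (Fin (m+1+2)) K) : Good A := by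
  have h11 : (1 : K) + 1 = 0 := by
    rcases h2 (1+1) with h | h
    · exact h
    · simp at h
  have n20 : (2 : Fin (m+1+2)) ≠ 0 := by
    intro h; have := congrArg Fin.val h; simp at this; rw [Nat.mod_eq_of_lt (by omega)] at this; omega
  have n21 : (2 : Fin (m+1+2)) ≠ 1 := by
    intro h; have := congrArg Fin.val h; simp at this; rw [Nat.mod_eq_of_lt (by omega)] at this; omega
  have n10 : (1 : Fin (m+1+2)) ≠ 0 := by simp
  rcases scalar_or A 2 0 n20 with ⟨a, ha, rfl⟩ | ⟨B, hB, hne⟩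
  · exact good_scalar _ a ha
  have hex : ∃ C, Sim A C ∧ C.trace + C 1 0 + C 0 1 + C 1 1 = 0 := by
    have hB20 : B 2 0 = 1 := (h2 _).resolve_left hne
    rcases h2 (B.trace + B 1 0 + B 0 1 + B 1 1) with h | h
    · exact ⟨B, hB, h⟩
    · rcases h2 (B 2 1) with h' | h'
      · obtain ⟨C, hC, hC1, -⟩ := sim_T_single B 1 2 n21.symm 1
        refine ⟨C, hB.trans hC, ?_⟩
        rw [sim_trace hC, hC1 1 0 n20.symm, hC1 0 1 n21.symm, hC1 1 1 n21.symm]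
        simp only [if_true, n10.symm, if_false, hB20, h']
        linear_combination h + h11
      · obtain ⟨C, hC, hC1, -⟩ := sim_T_single B 0 2 n20.symm 1
        refine ⟨C, hB.trans hC, ?_⟩
        rw [sim_trace hC, hC1 1 0 n20.symm, hC1 0 1 n21.symm, hC1 1 1 n21.symm]
        simp only [if_true, n10, if_false, h']
        linear_combination h + h11
  obtain ⟨C, hC, hCt⟩ := hex
  apply hC.good
  let e : Fin (m+1+2) → Fin (m+1+2) → Matrix (Fin (m+1+2)) (Fin (m+1+2)) K :=
    fun i j => Matrix.single i j 1
  have d2 : ∀ M : Matrix (Fin (m+1+2)) (Fin (m+1+2)) K, M + M = 0 := by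
    intro M
    ext i j
    rw [Matrix.add_apply, Matrix.zero_apply]
    linear_combination (M i j) * h11
  have hPR : (1 + e 0 0 + e 0 1 + e 1 0) * (1 + e 0 1 + e 1 0 + e 1 1) = 1 := by
    have : (1 + e 0 0 + e 0 1 + e 1 0) * (1 + e 0 1 + e 1 0 + e 1 1) =
        1 + ((e 0 1 + e 0 1) + (e 0 1 + e 0 1) + (e 1 0 + e 1 0) + (e 1 1 + e 1 1) +
          (e 0 0 + e 0 0)) := by
      simp only [add_mul, mul_add, one_mul, mul_one]
      simp [e, Matrix.single_mul_single_of_ne]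
      abel
    rw [this]
    simp [d2]
  refine ⟨1 + e 0 0 + e 0 1 + e 1 0, (1 + e 0 1 + e 1 0 + e 1 1) * C, ?_, ?_, ?_⟩
  · apply trace_zero_comm
    obtain ⟨k, rfl⟩ := hm
    simp [Matrix.trace_add, e, Matrix.trace_one]
    linear_combination (k + 2 : K) * h11
  · apply trace_zero_comm
    rw [add_mul, add_mul, add_mul, one_mul]
    simp [Matrix.trace_add, e, Matrix.trace_single_mul]
    linear_combination hCt
  · rw [← mul_assoc, hPR, one_mul]

lemma alt_sum {D : Type*} [DivisionRing D] (m : ℕ) (h : Even m ∨ ∃ a : D, a ≠ 0 ∧ a ≠ 1) :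
    ∃ q : ℕ → D, (∀ i, q i ≠ 0) ∧ ∑ k ∈ range (m+2), q k = 0 := by
  have hp : ∀ i, ((-1 : D))^i ≠ 0 := fun i => pow_ne_zero _ (by simp)
  by_cases hm : Even m
  · refine ⟨fun i => (-1)^i, hp, ?_⟩
    rw [neg_one_geom_sum, if_pos]
    exact hm.add (by decide)
  · obtain ⟨a, h0, h1⟩ := h.resolve_left hm
    refine ⟨fun i => if i = 0 then a - 1 else if i = 1 then -a else (-1)^i, ?_, ?_⟩
    · intro i
      dsimp only
      split_ifs
      · exact sub_ne_zero.2 h1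
      · exact neg_ne_zero.2 h0
      · exact hp i
    · rw [sum_range_succ', sum_range_succ']
      have : ∀ k, (-1 : D)^(k+1+1) = (-1)^k := by intro k; rw [pow_succ, pow_succ]; simp
      simp [this, neg_one_geom_sum, hm]
      abel

lemma good_all {D : Type*} [DivisionRing D] {m : ℕ} (A : Matrix (Fin (m+2)) (Fin (m+2)) D) :
    Good A := by
  by_cases h : Even m ∨ ∃ a : D, a ≠ 0 ∧ a ≠ 1
  · obtain ⟨q, hq, hs⟩ := alt_sum m h
    rcases scalar_or A 1 0 (by simp) with ⟨a, ha, rfl⟩ | ⟨B, hB, hne⟩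
    · exact good_scalar m a ha
    · exact hB.good (good_of B hne (fun i => (q i)⁻¹) (fun i => inv_ne_zero (hq i))
        (by simpa using hs))
  · push Not at h
    obtain ⟨hm, h2⟩ := h
    have h2' : ∀ x : D, x = 0 ∨ x = 1 := fun x => or_iff_not_imp_left.2 (h2 x)
    letI : Field D := { ‹DivisionRing D› with
      mul_comm := by
        intro x y
        rcases h2' x with rfl | rfl <;> simp }
    obtain ⟨k, rfl⟩ : ∃ k, m = k + 1 := ⟨m - 1, by
      have : m ≠ 0 := by rintro rfl; simp at hm
      omega⟩
    have hk : Even k := by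
      rw [Nat.even_add_one, not_not] at hm; exact hm
    exact good_two h2' hk A

end CommProd

/-- If `D` is a division ring every element of which is algebraic over
its center `F`, and `n ≥ 2`, then every matrix in `M_n(D)` is a product of two additive
commutators. -/
theorem stmt_11 (D : Type*) [DivisionRing D]
    (halg : ∀ a : D, ∃ p : Polynomial (Subring.center D),
      p ≠ 0 ∧ Polynomial.aeval a p = 0)
    (n : ℕ) (hn : 2 ≤ n) (A : Matrix (Fin n) (Fin n) D) :
    ∃ B C E G : Matrix (Fin n) (Fin n) D,
      A = (B * C - C * B) * (E * G - G * E) := by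
  obtain ⟨m, rfl⟩ : ∃ m, n = m + 2 := ⟨n - 2, by omega⟩
  obtain ⟨P, Q, ⟨B, C, rfl⟩, ⟨E, G, rfl⟩, h⟩ := CommProd.good_all A
  exact ⟨B, C, E, G, h⟩
end
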